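/- Let Ω be a bounded C² domain, F satisfy (F1)–(F4), and b, c be continuous on Ω̄. Then: (a) if λ < λ̲, g ≥ 0 is continuous on Ω̄ and g ≢ 0, there exists a negative viscosity solution of G(x,u,Du,D²u) + λ|u|^α u = g(x) in Ω with ⟨Du,n⟩ = 0 on ∂Ω; (b) there exists a negative, Lipschitz continuous function ψ on Ω̄ which is a viscosity solution of G(x,ψ,Dψ,D²ψ) + λ̲|ψ|^α ψ = 0 in Ω with ⟨Dψ, n(x)⟩ = 0 on ∂Ω (a principal eigenfunction corresponding to λ̲). -/

import Mathlib

/-!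
The argument has four ingredients, all of which work with a pointwise formulation (`Setup.SubAt`,
`Setup.SuperAt`) of the viscosity inequalities in terms of second order jets with nonzero gradient
and of the tests `C|x - z|^(2m)` with vanishing gradient. The locally constant tests of the
definition are equivalent to these power tests (`Setup.subAt_of_isSubSol`,
`Setup.isSubSol_of_subAt`): `m` is so large that the operator applied to `C|x - z|^(2m)` vanishes
at `z`.

*Regularization* (`Setup.exists_conv`). A bounded nonpositive subsolution `u` lies below the
sup-convolution `U(x) = sup_y (u(y) - k ψ(s(x,y)))`, where `s` is a weighted distance and
`ψ(s) = s - s^(5/4)` near `0`. The weight is chosen so that the gradient of `s(x,y)²` points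
outward at boundary points, which keeps the touching points compatible with the Neumann condition.
Where the supremum is attained at some `y₀ ≠ x₀`, the strict concavity of `ψ` in the direction
`x₀ - y₀` and the Hölder conditions on `F` force the operator at any superjet of `U` to be large
(`Setup.Weight.Touch.one_le_Op`); where it is attained at `x₀` itself, `U` is touched by `u` from
below. Hence `U` is again a subsolution, and it is Lipschitz with a constant depending only on the
size of the data.

*Perron's method* (`Setup.exists_max_sub`, `Setup.superAt_of_max`). By the regularization, the
subsolutions with values in `[-m, 0]` are dominated by equi-Lipschitz ones, so the largest of them
exists and is continuous; wherever it is negative it is a supersolution, because otherwise it could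
be raised by a bump. No comparison principle is needed.

*Strong maximum principle* (`Setup.strong_max`). A nonpositive subsolution that vanishes somewhere
vanishes in the whole domain, by Hopf's barrier in an interior ball. Subsolutions with right-hand
side `g ≥ 0`, `g ≢ 0` are therefore negative. If `λ < λ'` and `λ'` is admissible, a large multiple
of a negative subsolution for `λ'` is a subsolution for `λ` and `g`; Perron's method then yields
part (a) (`Setup.solve`).

*Passage to the limit* (`Setup.exists_eigen`). The set defining `λ̲` is bounded above, by comparison
with a radial barrier supported in a ball (`Setup.LS_bddAbove`). Solutions for `λₙ ↑ λ̲` with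
right-hand side `1`, divided by `max (‖W‖, 1)`, are equi-Lipschitz and have right-hand sides
`γₙ ∈ (0, 1]`. In the limit, `γ > 0` would make `λ̲ + γ` admissible; so `γ = 0`, the limit has norm
`1`, and it is negative by the strong maximum principle. This is the eigenfunction of part (b).
-/


open Filter Set Metric
open scoped RealInnerProductSpace Topology NNReal

noncomputable section

/-- Euclidean space `ℝ^N`. -/
abbrev EN (N : ℕ) := EuclideanSpace ℝ (Fin N)

/-- The space of `N × N` real matrices. -/
abbrev Mat (N : ℕ) := Matrix (Fin N) (Fin N) ℝ

/-- Operator (spectral) norm of a matrix, viewed as a linear map on Euclidean space. -/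
noncomputable def matNorm {N : ℕ} (X : Mat N) : ℝ :=
  ‖LinearMap.toContinuousLinearMap (Matrix.toEuclideanLin X)‖

/-- The Hessian matrix of `φ : ℝ^N → ℝ` at `x`. -/
noncomputable def hess {N : ℕ} (φ : EN N → ℝ) (x : EN N) : Mat N :=
  Matrix.of fun i j =>
    iteratedFDeriv ℝ 2 φ x ![EuclideanSpace.single i 1, EuclideanSpace.single j 1]

/-- `ρ` is a `C²` defining function for the domain `Ω` with exterior unit normal `nv`. -/
def IsC2DefiningFun {N : ℕ} (Ω : Set (EN N)) (nv : EN N → EN N) (ρ : EN N → ℝ) : Prop :=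
  ContDiff ℝ 2 ρ ∧ Ω = {x | ρ x < 0} ∧ frontier Ω = {x | ρ x = 0} ∧
    ∀ x ∈ frontier Ω, gradient ρ x ≠ 0 ∧ nv x = ‖gradient ρ x‖⁻¹ • gradient ρ x

/-- `Ω` is a bounded domain of class `C²` with exterior unit normal `nv` on `∂Ω`. -/
def IsC2Domain {N : ℕ} (Ω : Set (EN N)) (nv : EN N → EN N) : Prop :=
  IsOpen Ω ∧ IsConnected Ω ∧ Bornology.IsBounded Ω ∧ ∃ ρ : EN N → ℝ, IsC2DefiningFun Ω nv ρ

/-- `Ω` is a bounded domain of class `C¹` with exterior unit normal `nv` on `∂Ω`. -/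
def IsC1Domain {N : ℕ} (Ω : Set (EN N)) (nv : EN N → EN N) : Prop :=
  IsOpen Ω ∧ IsConnected Ω ∧ Bornology.IsBounded Ω ∧
    ∃ ρ : EN N → ℝ, ContDiff ℝ 1 ρ ∧ Ω = {x | ρ x < 0} ∧ frontier Ω = {x | ρ x = 0} ∧
      ∀ x ∈ frontier Ω, gradient ρ x ≠ 0 ∧ nv x = ‖gradient ρ x‖⁻¹ • gradient ρ x

/-- Interior sphere condition (Ω1). -/
def InteriorSphereCond {N : ℕ} (Ω : Set (EN N)) : Prop :=
  ∀ x ∈ frontier Ω, ∃ R > (0 : ℝ), ∃ y ∈ Ω, ‖x - y‖ = R ∧ Metric.ball y R ⊆ Ω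

/-- (F1): homogeneity of `F`. -/
def CondF1 {N : ℕ} (Ω : Set (EN N)) (α : ℝ) (F : EN N → EN N → Mat N → ℝ) : Prop :=
  ∀ x ∈ closure Ω, ∀ t : ℝ, t ≠ 0 → ∀ μ : ℝ, 0 ≤ μ → ∀ p : EN N, p ≠ 0 → ∀ X : Mat N,
    X.IsSymm → F x (t • p) (μ • X) = |t| ^ α * μ * F x p X

/-- (F2): uniform ellipticity of `F` with ellipticity constants `0 < a ≤ A`. -/
def CondF2 {N : ℕ} (Ω : Set (EN N)) (α a A : ℝ) (F : EN N → EN N → Mat N → ℝ) : Prop :=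
  0 < a ∧ a ≤ A ∧ ∀ x ∈ closure Ω, ∀ p : EN N, p ≠ 0 → ∀ M P : Mat N, M.IsSymm →
    P.PosSemidef →
      a * ‖p‖ ^ α * P.trace ≤ F x p (M + P) - F x p M ∧
      F x p (M + P) - F x p M ≤ A * ‖p‖ ^ α * P.trace

/-- (F3): Hölder continuity of `F` in the `x` variable. -/
def CondF3 {N : ℕ} (Ω : Set (EN N)) (α C₁ θ : ℝ) (F : EN N → EN N → Mat N → ℝ) : Prop :=
  0 < C₁ ∧ θ ∈ Set.Ioc (1/2 : ℝ) 1 ∧ ∀ x ∈ closure Ω, ∀ y ∈ closure Ω, ∀ p : EN N, p ≠ 0 →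
    ∀ X : Mat N, X.IsSymm → |F x p X - F y p X| ≤ C₁ * ‖x - y‖ ^ θ * ‖p‖ ^ α * matNorm X

/-- (F4): Hölder continuity of `F` in the gradient variable. -/
def CondF4 {N : ℕ} (Ω : Set (EN N)) (α C₂ ν : ℝ) (F : EN N → EN N → Mat N → ℝ) : Prop :=
  0 < C₂ ∧ ν ∈ Set.Ioc (1/2 : ℝ) 1 ∧ ∀ x ∈ closure Ω, ∀ p : EN N, p ≠ 0 → ∀ q : EN N,
    ‖q‖ ≤ ‖p‖ / 2 → ∀ X : Mat N, X.IsSymm →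
      |F x (p + q) X - F x p X| ≤ C₂ * ‖p‖ ^ (α - ν) * ‖q‖ ^ ν * matNorm X

/-- The Neumann boundary operator `B(x,r,p) = ⟨p, n(x)⟩`. -/
def BNeu {N : ℕ} (nv : EN N → EN N) : EN N → ℝ → EN N → ℝ := fun x _ p => ⟪p, nv x⟫

/-- Viscosity subsolution of
`F(x,Du,D²u) + b(x)·Du |Du|^α + c₀(x, u) = g(x)` in `Ω`, `B(x,u,Du) = 0` on `∂Ω`. -/
def IsSubSol {N : ℕ} (Ω : Set (EN N)) (F : EN N → EN N → Mat N → ℝ) (b : EN N → EN N)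
    (α : ℝ) (c₀ : EN N → ℝ → ℝ) (g : EN N → ℝ) (B : EN N → ℝ → EN N → ℝ)
    (u : EN N → ℝ) : Prop :=
  (∀ x₀ ∈ Ω, ∀ φ : EN N → ℝ, ContDiff ℝ 2 φ →
      IsLocalMaxOn (fun x => u x - φ x) (closure Ω) x₀ → gradient φ x₀ ≠ 0 →
      g x₀ ≤ F x₀ (gradient φ x₀) (hess φ x₀)
        + ⟪b x₀, gradient φ x₀⟫ * ‖gradient φ x₀‖ ^ α + c₀ x₀ (u x₀)) ∧
  (∀ x₀ ∈ Ω, ∀ k : ℝ, (∀ᶠ x in nhdsWithin x₀ (closure Ω), u x = k) → g x₀ ≤ c₀ x₀ k) ∧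
  (∀ x₀ ∈ frontier Ω, ∀ φ : EN N → ℝ, ContDiff ℝ 2 φ →
      IsLocalMaxOn (fun x => u x - φ x) (closure Ω) x₀ → gradient φ x₀ ≠ 0 →
      min (g x₀ - (F x₀ (gradient φ x₀) (hess φ x₀)
          + ⟪b x₀, gradient φ x₀⟫ * ‖gradient φ x₀‖ ^ α + c₀ x₀ (u x₀)))
        (B x₀ (u x₀) (gradient φ x₀)) ≤ 0) ∧
  (∀ x₀ ∈ frontier Ω, ∀ k : ℝ, (∀ᶠ x in nhdsWithin x₀ (closure Ω), u x = k) →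
      min (g x₀ - c₀ x₀ k) (B x₀ k 0) ≤ 0)

/-- Viscosity supersolution of
`F(x,Dv,D²v) + b(x)·Dv |Dv|^α + c₀(x, v) = g(x)` in `Ω`, `B(x,v,Dv) = 0` on `∂Ω`. -/
def IsSuperSol {N : ℕ} (Ω : Set (EN N)) (F : EN N → EN N → Mat N → ℝ) (b : EN N → EN N)
    (α : ℝ) (c₀ : EN N → ℝ → ℝ) (g : EN N → ℝ) (B : EN N → ℝ → EN N → ℝ)
    (v : EN N → ℝ) : Prop :=
  (∀ x₀ ∈ Ω, ∀ φ : EN N → ℝ, ContDiff ℝ 2 φ →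
      IsLocalMinOn (fun x => v x - φ x) (closure Ω) x₀ → gradient φ x₀ ≠ 0 →
      F x₀ (gradient φ x₀) (hess φ x₀)
        + ⟪b x₀, gradient φ x₀⟫ * ‖gradient φ x₀‖ ^ α + c₀ x₀ (v x₀) ≤ g x₀) ∧
  (∀ x₀ ∈ Ω, ∀ k : ℝ, (∀ᶠ x in nhdsWithin x₀ (closure Ω), v x = k) → c₀ x₀ k ≤ g x₀) ∧
  (∀ x₀ ∈ frontier Ω, ∀ φ : EN N → ℝ, ContDiff ℝ 2 φ →
      IsLocalMinOn (fun x => v x - φ x) (closure Ω) x₀ → gradient φ x₀ ≠ 0 →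
      0 ≤ max (g x₀ - (F x₀ (gradient φ x₀) (hess φ x₀)
          + ⟪b x₀, gradient φ x₀⟫ * ‖gradient φ x₀‖ ^ α + c₀ x₀ (v x₀)))
        (B x₀ (v x₀) (gradient φ x₀))) ∧
  (∀ x₀ ∈ frontier Ω, ∀ k : ℝ, (∀ᶠ x in nhdsWithin x₀ (closure Ω), v x = k) →
      0 ≤ max (g x₀ - c₀ x₀ k) (B x₀ k 0))

/-- The admissible set for the principal eigenvalue `λ̄`:
all `λ` such that there is a bounded positive supersolution of
`G(x,v,Dv,D²v) + λ v^{α+1} ≤ 0` in `Ω`, `⟨Dv, n⟩ ≥ 0` on `∂Ω`. -/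
def lamBarSet {N : ℕ} (Ω : Set (EN N)) (nv : EN N → EN N) (F : EN N → EN N → Mat N → ℝ)
    (b : EN N → EN N) (c : EN N → ℝ) (α : ℝ) : Set ℝ :=
  {lam | ∃ v : EN N → ℝ, LowerSemicontinuousOn v (closure Ω) ∧
    (∀ x ∈ closure Ω, 0 < v x) ∧ (∃ M, ∀ x ∈ closure Ω, v x ≤ M) ∧
    IsSuperSol Ω F b α (fun x r => (c x + lam) * |r| ^ α * r) (fun _ => 0) (BNeu nv) v}

/-- The admissible set for the principal eigenvalue `λ̲`:
all `λ` such that there is a bounded negative subsolution of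
`G(x,u,Du,D²u) + λ |u|^α u ≥ 0` in `Ω`, `⟨Du, n⟩ ≤ 0` on `∂Ω`. -/
def lamLowSet {N : ℕ} (Ω : Set (EN N)) (nv : EN N → EN N) (F : EN N → EN N → Mat N → ℝ)
    (b : EN N → EN N) (c : EN N → ℝ) (α : ℝ) : Set ℝ :=
  {lam | ∃ u : EN N → ℝ, UpperSemicontinuousOn u (closure Ω) ∧
    (∀ x ∈ closure Ω, u x < 0) ∧ (∃ M, ∀ x ∈ closure Ω, M ≤ u x) ∧
    IsSubSol Ω F b α (fun x r => (c x + lam) * |r| ^ α * r) (fun _ => 0) (BNeu nv) u}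

/-! ### Symmetric matrices as quadratic forms -/

/-- The continuous linear map on Euclidean space attached to a matrix. -/
def op {N : ℕ} (M : Mat N) : EN N →L[ℝ] EN N :=
  LinearMap.toContinuousLinearMap (Matrix.toEuclideanLin M)

/-- The quadratic form `⟨v, M v⟩`. -/
def qf {N : ℕ} (M : Mat N) (v : EN N) : ℝ := ⟪v, op M v⟫

/-- The rank-one matrix `v ⊗ v`. -/
def outer {N : ℕ} (v : EN N) : Mat N := Matrix.of fun i j => v i * v j

section MatrixBasics

variable {N : ℕ}

lemma matNorm_eq (M : Mat N) : matNorm M = ‖op M‖ := rfl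

lemma matNorm_nonneg (M : Mat N) : 0 ≤ matNorm M := norm_nonneg _

lemma op_apply_coord (M : Mat N) (v : EN N) (i : Fin N) : op M v i = ∑ j, M i j * v j := by
  simp [op, Matrix.toEuclideanLin, Matrix.mulVec, dotProduct]

lemma inner_coord (v w : EN N) : ⟪v, w⟫ = ∑ i, v i * w i := by
  simp [PiLp.inner_apply, mul_comm]

lemma op_add (M M' : Mat N) : op (M + M') = op M + op M' := by simp [op]
lemma op_sub (M M' : Mat N) : op (M - M') = op M - op M' := by simp [op]
lemma op_neg (M : Mat N) : op (-M) = -op M := by simp [op]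
lemma op_smul (c : ℝ) (M : Mat N) : op (c • M) = c • op M := by simp [op]
lemma op_zero : op (0 : Mat N) = 0 := by simp [op]
lemma op_one (v : EN N) : op (1 : Mat N) v = v := by simp [op]
lemma op_mul (M M' : Mat N) (v : EN N) : op (M * M') v = op M (op M' v) := by
  simp [op, Matrix.toEuclideanLin]
lemma op_outer (w v : EN N) : op (outer w) v = ⟪w, v⟫ • w := by
  ext i
  rw [op_apply_coord, inner_coord]
  simp only [outer, Matrix.of_apply, PiLp.smul_apply, smul_eq_mul, Finset.sum_mul]
  exact Finset.sum_congr rfl fun j _ => by ring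

lemma qf_add (M M' : Mat N) (v : EN N) : qf (M + M') v = qf M v + qf M' v := by
  simp [qf, op_add, inner_add_right]
lemma qf_sub (M M' : Mat N) (v : EN N) : qf (M - M') v = qf M v - qf M' v := by
  simp [qf, op_sub, inner_sub_right]
lemma qf_neg (M : Mat N) (v : EN N) : qf (-M) v = -qf M v := by simp [qf, op_neg]
lemma qf_smul (c : ℝ) (M : Mat N) (v : EN N) : qf (c • M) v = c * qf M v := by
  simp [qf, op_smul, inner_smul_right]
lemma qf_zero (v : EN N) : qf (0 : Mat N) v = 0 := by simp [qf, op_zero]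
lemma qf_zero_vec (M : Mat N) : qf M 0 = 0 := by simp [qf]
lemma qf_one (v : EN N) : qf (1 : Mat N) v = ‖v‖ ^ 2 := by simp [qf, op_one]
lemma qf_outer (w v : EN N) : qf (outer w) v = ⟪w, v⟫ ^ 2 := by
  rw [qf, op_outer, inner_smul_right, real_inner_comm]; ring

lemma symm_outer (w : EN N) : (outer w).IsSymm := by
  ext i j; simp [outer, mul_comm]

lemma trace_outer (w : EN N) : (outer w).trace = ‖w‖ ^ 2 := by
  rw [← real_inner_self_eq_norm_sq, inner_coord]; simp [outer, Matrix.trace]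

lemma op_symm {M : Mat N} (hM : M.IsSymm) (v w : EN N) : ⟪op M v, w⟫ = ⟪v, op M w⟫ := by
  simp only [inner_coord, op_apply_coord, Finset.sum_mul, Finset.mul_sum]
  rw [Finset.sum_comm]
  refine Finset.sum_congr rfl fun i _ => Finset.sum_congr rfl fun j _ => ?_
  rw [hM.apply]; ring

lemma norm_op_le (M : Mat N) (v : EN N) : ‖op M v‖ ≤ matNorm M * ‖v‖ := (op M).le_opNorm v

lemma abs_qf_le (M : Mat N) (v : EN N) : |qf M v| ≤ matNorm M * ‖v‖ ^ 2 := by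
  have h := abs_real_inner_le_norm v (op M v)
  have := norm_op_le M v
  unfold qf
  nlinarith [norm_nonneg v]

lemma qf_add_vec {M : Mat N} (hM : M.IsSymm) (v w : EN N) :
    qf M (v + w) = qf M v + 2 * ⟪op M v, w⟫ + qf M w := by
  unfold qf
  rw [map_add, inner_add_left, inner_add_right, inner_add_right, ← op_symm hM v w,
    real_inner_comm (op M v) w]; ring

lemma qf_smul_vec (M : Mat N) (t : ℝ) (v : EN N) : qf M (t • v) = t ^ 2 * qf M v := by
  simp [qf, inner_smul_left, inner_smul_right]; ring

lemma qf_neg_vec (M : Mat N) (v : EN N) : qf M (-v) = qf M v := by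
  simp [qf]

lemma posSemidef_of_qf {M : Mat N} (hM : M.IsSymm) (h : ∀ v, 0 ≤ qf M v) : M.PosSemidef := by
  rw [Matrix.posSemidef_iff_dotProduct_mulVec]
  refine ⟨by simpa [Matrix.IsHermitian] using hM.eq, fun x => ?_⟩
  have := h (WithLp.toLp 2 x)
  rw [qf, inner_coord] at this
  simpa [op_apply_coord, dotProduct, Matrix.mulVec] using this

lemma posSemidef_outer (w : EN N) : (outer w).PosSemidef :=
  posSemidef_of_qf (symm_outer w) fun v => by rw [qf_outer]; positivity

lemma posSemidef_smul_one {t : ℝ} (ht : 0 ≤ t) : (t • (1 : Mat N)).PosSemidef :=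
  posSemidef_of_qf (by simp [Matrix.IsSymm]) fun v => by rw [qf_smul, qf_one]; positivity

lemma symm_smul_one (t : ℝ) : (t • (1 : Mat N)).IsSymm := by simp [Matrix.IsSymm]

lemma posSemidef_mul_self {M : Mat N} (hM : M.IsSymm) : (M * M).PosSemidef :=
  posSemidef_of_qf (by simp [Matrix.IsSymm, hM.eq]) fun v => by
    rw [qf, op_mul, ← op_symm hM]; exact real_inner_self_nonneg

lemma symm_mul_self {M : Mat N} (hM : M.IsSymm) : (M * M).IsSymm := by
  simp [Matrix.IsSymm, hM.eq]

lemma matNorm_sq_le_trace {M : Mat N} (hM : M.IsSymm) : matNorm M ^ 2 ≤ (M * M).trace := by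
  have htr : (M * M).trace = ∑ i, ∑ j, M i j ^ 2 := by
    simp only [Matrix.trace, Matrix.diag, Matrix.mul_apply]
    refine Finset.sum_congr rfl fun i _ => Finset.sum_congr rfl fun j _ => ?_
    rw [hM.apply]; ring
  have h0 : 0 ≤ (M * M).trace := by rw [htr]; positivity
  have : matNorm M ≤ Real.sqrt (M * M).trace := by
    refine ContinuousLinearMap.opNorm_le_bound _ (Real.sqrt_nonneg _) fun v => ?_
    change ‖op M v‖ ≤ _
    refine le_of_sq_le_sq ?_ (by positivity)
    rw [mul_pow, Real.sq_sqrt h0, ← real_inner_self_eq_norm_sq, ← real_inner_self_eq_norm_sq,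
      inner_coord, inner_coord, htr, Finset.sum_mul]
    refine Finset.sum_le_sum fun i _ => ?_
    rw [op_apply_coord]
    have := Finset.sum_mul_sq_le_sq_mul_sq Finset.univ (fun j => M i j) (fun j => v j)
    calc _ = (∑ j, M i j * v j) ^ 2 := by ring
      _ ≤ _ := this
      _ = _ := by simp [sq]
  calc matNorm M ^ 2 ≤ Real.sqrt (M * M).trace ^ 2 :=
        pow_le_pow_left₀ (matNorm_nonneg M) this 2
    _ = _ := Real.sq_sqrt h0

lemma trace_smul_one (t : ℝ) : (t • (1 : Mat N)).trace = t * N := by simp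

lemma matNorm_neg (M : Mat N) : matNorm (-M) = matNorm M := by
  rw [matNorm_eq, matNorm_eq, op_neg, norm_neg]

lemma matNorm_add_le (M M' : Mat N) : matNorm (M + M') ≤ matNorm M + matNorm M' := by
  rw [matNorm_eq, matNorm_eq, matNorm_eq, op_add]; exact norm_add_le _ _

lemma matNorm_smul (c : ℝ) (M : Mat N) : matNorm (c • M) = |c| * matNorm M := by
  rw [matNorm_eq, matNorm_eq, op_smul, norm_smul, Real.norm_eq_abs]

lemma matNorm_one_le : matNorm (1 : Mat N) ≤ 1 :=
  ContinuousLinearMap.opNorm_le_bound _ zero_le_one fun v => by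
    change ‖op 1 v‖ ≤ _; rw [op_one, one_mul]

lemma matNorm_outer_le (w : EN N) : matNorm (outer w) ≤ ‖w‖ ^ 2 :=
  ContinuousLinearMap.opNorm_le_bound _ (by positivity) fun v => by
    change ‖op (outer w) v‖ ≤ _
    rw [op_outer, norm_smul, Real.norm_eq_abs]
    nlinarith [abs_real_inner_le_norm w v, norm_nonneg w, norm_nonneg v]

lemma matNorm_mul_le (M M' : Mat N) : matNorm (M * M') ≤ matNorm M * matNorm M' :=
  ContinuousLinearMap.opNorm_le_bound _
    (mul_nonneg (matNorm_nonneg _) (matNorm_nonneg _)) fun v => by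
    change ‖op (M * M') v‖ ≤ _
    rw [op_mul, mul_assoc]
    exact (norm_op_le _ _).trans
      (mul_le_mul_of_nonneg_left (norm_op_le _ _) (matNorm_nonneg _))

lemma continuous_qf (M : Mat N) : Continuous (qf M) :=
  continuous_id.inner (op M).continuous

end MatrixBasics

/-! ### The data of the problem -/

/-- The data of the Neumann problem with its structural hypotheses, together with an auxiliary
exponent `m`: the functions `C|x - x₀|^(2m)` serve as test functions with vanishing gradient, and
`hmα` makes the operator vanish at `x₀` when it is applied to them. -/
structure Setup (N : ℕ) where
  /-- the domain -/
  Ω : Set (EN N)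
  /-- the exterior unit normal -/
  nv : EN N → EN N
  /-- the second order part of the operator -/
  F : EN N → EN N → Mat N → ℝ
  /-- the drift -/
  b : EN N → EN N
  /-- the homogeneity exponent -/
  α : ℝ
  /-- the lower ellipticity constant -/
  a : ℝ
  /-- the upper ellipticity constant -/
  A : ℝ
  /-- the Hölder constant in `x` -/
  C₁ : ℝ
  /-- the Hölder exponent in `x` -/
  θ : ℝ
  /-- the Hölder constant in `p` -/
  C₂ : ℝ
  /-- the Hölder exponent in `p` -/
  ν : ℝ
  /-- the auxiliary exponent -/
  m : ℕ
  hΩ : IsC2Domain Ω nv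
  hα : -1 < α
  hF1 : CondF1 Ω α F
  hF2 : CondF2 Ω α a A F
  hF3 : CondF3 Ω α C₁ θ F
  hF4 : CondF4 Ω α C₂ ν F
  hb : ContinuousOn b (closure Ω)
  hm : 2 ≤ m
  hmα : 1 < (2 * (m : ℝ) - 1) * (α + 1)

namespace Setup

variable {N : ℕ} (S : Setup N)

/-- The closed domain. -/
def K : Set (EN N) := closure S.Ω

/-- The principal part `F(x,p,M) + b(x)·p|p|^α` of the operator. -/
def Op (x p : EN N) (M : Mat N) : ℝ := S.F x p M + ⟪S.b x, p⟫ * ‖p‖ ^ S.α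

lemma isOpen_Ω : IsOpen S.Ω := S.hΩ.1
lemma Ω_sub_K : S.Ω ⊆ S.K := subset_closure
lemma isClosed_K : IsClosed S.K := isClosed_closure
lemma isCompact_K : IsCompact S.K :=
  Metric.isCompact_of_isClosed_isBounded isClosed_closure S.hΩ.2.2.1.closure
lemma nonempty_Ω : S.Ω.Nonempty := S.hΩ.2.1.nonempty
lemma nonempty_K : S.K.Nonempty := S.nonempty_Ω.closure
lemma mem_cases {z : EN N} (hz : z ∈ S.K) : z ∈ S.Ω ∨ z ∈ frontier S.Ω := by
  by_cases h : z ∈ S.Ω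
  · exact Or.inl h
  · right; rw [S.isOpen_Ω.frontier_eq]; exact ⟨hz, h⟩
lemma not_mem_Ω_of_frontier {z : EN N} (hz : z ∈ frontier S.Ω) : z ∉ S.Ω := by
  rw [S.isOpen_Ω.frontier_eq] at hz; exact hz.2
lemma frontier_sub_K : frontier S.Ω ⊆ S.K := frontier_subset_closure
lemma K_mem_nhds {z : EN N} (hz : z ∈ S.Ω) : S.K ∈ 𝓝 z :=
  mem_of_superset (S.isOpen_Ω.mem_nhds hz) S.Ω_sub_K
lemma nhdsWithin_K {z : EN N} (hz : z ∈ S.Ω) : 𝓝[S.K] z = 𝓝 z :=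
  nhdsWithin_eq_nhds.2 (S.K_mem_nhds hz)

lemma ha : 0 < S.a := S.hF2.1
lemma hA : 0 < S.A := S.hF2.1.trans_le S.hF2.2.1
lemma hα1 : 0 < S.α + 1 := by linarith [S.hα]

lemma F_zero {x p : EN N} (hx : x ∈ S.K) (hp : p ≠ 0) : S.F x p 0 = 0 := by
  have := S.hF1 x hx 1 one_ne_zero 0 le_rfl p hp 0 (by simp [Matrix.IsSymm])
  simpa using this

lemma F_neg {x p : EN N} (hx : x ∈ S.K) (hp : p ≠ 0) {X : Mat N} (hX : X.IsSymm) :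
    S.F x (-p) X = S.F x p X := by
  have := S.hF1 x hx (-1) (by norm_num) 1 zero_le_one p hp X hX
  simpa using this

lemma F_mono {x p : EN N} (hx : x ∈ S.K) (hp : p ≠ 0) {X Y : Mat N} (hX : X.IsSymm)
    (hY : Y.IsSymm) (h : ∀ v, qf X v ≤ qf Y v) : S.F x p X ≤ S.F x p Y := by
  have hP : (Y - X).PosSemidef := posSemidef_of_qf (hY.sub hX) fun v => by
    rw [qf_sub]; linarith [h v]
  have := (S.hF2.2.2 x hx p hp X (Y - X) hX hP).1
  rw [add_sub_cancel] at this
  have h2 : 0 ≤ S.a * ‖p‖ ^ S.α * (Y - X).trace :=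
    mul_nonneg (mul_nonneg S.ha.le (Real.rpow_nonneg (norm_nonneg _) _)) hP.trace_nonneg
  linarith

lemma F_add_one {x p : EN N} (hx : x ∈ S.K) (hp : p ≠ 0) {X : Mat N} (hX : X.IsSymm) {μ : ℝ}
    (hμ : 0 ≤ μ) : S.F x p (X + μ • 1) ≤ S.F x p X + S.A * ‖p‖ ^ S.α * (μ * N) := by
  have := (S.hF2.2.2 x hx p hp X (μ • 1) hX (posSemidef_smul_one hμ)).2
  rw [trace_smul_one] at this
  linarith

lemma F_sub_le {x p : EN N} (hx : x ∈ S.K) (hp : p ≠ 0) {X Y : Mat N} (hX : X.IsSymm)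
    (hY : Y.IsSymm) :
    S.F x p X - S.F x p Y ≤ S.A * N * ‖p‖ ^ S.α * matNorm (X - Y) := by
  have h1 : S.F x p X ≤ S.F x p (Y + matNorm (X - Y) • 1) := by
    refine S.F_mono hx hp hX (hY.add (symm_smul_one _)) fun v => ?_
    have := le_of_abs_le (abs_qf_le (X - Y) v)
    rw [qf_sub] at this
    rw [qf_add, qf_smul, qf_one]; linarith
  have := S.F_add_one hx hp hY (matNorm_nonneg (X - Y))
  nlinarith

lemma abs_F_sub_le {x p : EN N} (hx : x ∈ S.K) (hp : p ≠ 0) {X Y : Mat N} (hX : X.IsSymm)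
    (hY : Y.IsSymm) :
    |S.F x p X - S.F x p Y| ≤ S.A * N * ‖p‖ ^ S.α * matNorm (X - Y) := by
  rw [abs_le]
  refine ⟨?_, S.F_sub_le hx hp hX hY⟩
  have := S.F_sub_le hx hp hY hX
  rw [← neg_sub X Y, matNorm_neg] at this
  linarith

lemma abs_F_le {x p : EN N} (hx : x ∈ S.K) (hp : p ≠ 0) {X : Mat N} (hX : X.IsSymm) :
    |S.F x p X| ≤ S.A * N * ‖p‖ ^ S.α * matNorm X := by
  have := S.abs_F_sub_le hx hp hX (Y := 0) (by simp [Matrix.IsSymm])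
  rwa [S.F_zero hx hp, sub_zero, sub_zero] at this

lemma exists_bound_b : ∃ B : ℝ, 0 ≤ B ∧ ∀ x ∈ S.K, ‖S.b x‖ ≤ B := by
  obtain ⟨B, hB⟩ := S.isCompact_K.exists_bound_of_continuousOn S.hb
  exact ⟨max B 0, le_max_right _ _, fun x hx => (hB x hx).trans (le_max_left _ _)⟩

/-- A bound for the drift on the closed domain. -/
def Bb : ℝ := S.exists_bound_b.choose
lemma Bb_nonneg : 0 ≤ S.Bb := S.exists_bound_b.choose_spec.1
lemma norm_b_le {x : EN N} (hx : x ∈ S.K) : ‖S.b x‖ ≤ S.Bb := S.exists_bound_b.choose_spec.2 x hx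

lemma abs_drift_le {x p : EN N} (hx : x ∈ S.K) (hp : p ≠ 0) :
    |⟪S.b x, p⟫ * ‖p‖ ^ S.α| ≤ S.Bb * ‖p‖ ^ (S.α + 1) := by
  have h0 : 0 < ‖p‖ := norm_pos_iff.2 hp
  rw [Real.rpow_add_one h0.ne', abs_mul, abs_of_nonneg (Real.rpow_nonneg h0.le S.α)]
  have h1 := abs_real_inner_le_norm (S.b x) p
  have h2 := S.norm_b_le hx
  have h3 : |⟪S.b x, p⟫| ≤ S.Bb * ‖p‖ := h1.trans (by gcongr)
  have := mul_le_mul_of_nonneg_right h3 (Real.rpow_nonneg h0.le S.α)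
  linarith

lemma abs_Op_le {x p : EN N} (hx : x ∈ S.K) (hp : p ≠ 0) {X : Mat N} (hX : X.IsSymm) :
    |S.Op x p X| ≤ S.A * N * ‖p‖ ^ S.α * matNorm X + S.Bb * ‖p‖ ^ (S.α + 1) :=
  (abs_add_le _ _).trans (add_le_add (S.abs_F_le hx hp hX) (S.abs_drift_le hx hp))

lemma Op_homog {x p : EN N} (hx : x ∈ S.K) (hp : p ≠ 0) {X : Mat N} (hX : X.IsSymm) {t : ℝ}
    (ht : 0 < t) : S.Op x (t • p) (t • X) = t ^ (S.α + 1) * S.Op x p X := by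
  unfold Op
  rw [S.hF1 x hx t ht.ne' t ht.le p hp X hX, inner_smul_right, norm_smul, Real.norm_eq_abs,
    abs_of_pos ht, Real.mul_rpow ht.le (norm_nonneg _), Real.rpow_add_one ht.ne']
  ring

/-- Upper bound for the operator at a radial quadratic jet that is concave in the radial
direction: the ellipticity turns the negative radial second derivative into a negative term. -/
lemma Op_radial_le {z v : EN N} (hz : z ∈ S.K) {f₁ f₂ : ℝ} (hv : (2 * f₁) • v ≠ 0)
    (hf : f₂ ≤ 0) :
    S.Op z ((2 * f₁) • v) ((2 * f₁) • 1 + (4 * f₂) • outer v) ≤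
      ‖(2 * f₁) • v‖ ^ S.α * (2 * S.A * N * |f₁| + 4 * S.a * f₂ * ‖v‖ ^ 2
        + S.Bb * ‖(2 * f₁) • v‖) := by
  set p := (2 * f₁) • v with hpdef
  have hsymm : ((2 * f₁) • (1 : Mat N) + (4 * f₂) • outer v).IsSymm :=
    (symm_smul_one _).add ((symm_outer v).smul _)
  have hP : ((-4 * f₂) • outer v).PosSemidef := (posSemidef_outer v).smul (by linarith)
  have h1 := (S.hF2.2.2 z hz p hv _ _ hsymm hP).1
  have e : (2 * f₁) • (1 : Mat N) + (4 * f₂) • outer v + (-4 * f₂) • outer v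
      = (2 * f₁) • 1 := by module
  rw [e, Matrix.trace_smul, trace_outer, smul_eq_mul] at h1
  have h2 := le_of_abs_le (S.abs_F_le hz hv (symm_smul_one (2 * f₁)))
  have h3 := le_of_abs_le (S.abs_drift_le hz hv)
  have h4 : matNorm ((2 * f₁) • (1 : Mat N)) ≤ 2 * |f₁| := by
    rw [matNorm_smul, abs_mul, abs_two]
    exact mul_le_of_le_one_right (by positivity) matNorm_one_le
  have h0 : 0 < ‖p‖ := norm_pos_iff.2 hv
  rw [Real.rpow_add_one h0.ne'] at h3
  have h5 : 0 ≤ ‖p‖ ^ S.α := Real.rpow_nonneg h0.le _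
  have h6 : S.A * N * ‖p‖ ^ S.α * matNorm ((2 * f₁) • (1 : Mat N)) ≤
      S.A * N * ‖p‖ ^ S.α * (2 * |f₁|) :=
    mul_le_mul_of_nonneg_left h4 (by have := S.hA; positivity)
  unfold Op
  nlinarith

/-- Continuity of the operator in all variables away from `p = 0`. -/
lemma tendsto_Op {ι : Type*} {l : Filter ι} {x : ι → EN N} {p : ι → EN N} {M : ι → Mat N}
    {x₀ p₀ : EN N} {M₀ : Mat N} (hx : ∀ᶠ i in l, x i ∈ S.K) (hx₀ : x₀ ∈ S.K) (hp₀ : p₀ ≠ 0)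
    (hM : ∀ i, (M i).IsSymm) (hM₀ : M₀.IsSymm) (tx : Tendsto x l (𝓝 x₀))
    (tp : Tendsto p l (𝓝 p₀)) (tM : Tendsto (fun i => matNorm (M i - M₀)) l (𝓝 0)) :
    Tendsto (fun i => S.Op (x i) (p i) (M i)) l (𝓝 (S.Op x₀ p₀ M₀)) := by
  have h0 : 0 < ‖p₀‖ := norm_pos_iff.2 hp₀
  have tpα : Tendsto (fun i => ‖p i‖ ^ S.α) l (𝓝 (‖p₀‖ ^ S.α)) :=
    tp.norm.rpow_const (Or.inl h0.ne')
  have tb : Tendsto (fun i => S.b (x i)) l (𝓝 (S.b x₀)) :=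
    (S.hb x₀ hx₀).tendsto.comp (tendsto_nhdsWithin_iff.2 ⟨tx, hx⟩)
  refine Tendsto.add ?_ ((tb.inner tp).mul tpα)
  rw [tendsto_iff_dist_tendsto_zero]
  have hpne : ∀ᶠ i in l, p i ≠ 0 := tp.eventually_ne hp₀
  have hq : ∀ᶠ i in l, ‖p i - p₀‖ ≤ ‖p₀‖ / 2 := by
    have := (tendsto_iff_norm_sub_tendsto_zero.1 tp)
    exact this.eventually_le_const (by positivity)
  have t1 : Tendsto (fun i => S.A * N * ‖p i‖ ^ S.α * matNorm (M i - M₀)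
      + S.C₁ * ‖x i - x₀‖ ^ S.θ * ‖p i‖ ^ S.α * matNorm M₀
      + S.C₂ * ‖p₀‖ ^ (S.α - S.ν) * ‖p i - p₀‖ ^ S.ν * matNorm M₀) l (𝓝 0) := by
    have hθ : 0 < S.θ := by linarith [S.hF3.2.1.1]
    have hν : 0 < S.ν := by linarith [S.hF4.2.1.1]
    have a1 : Tendsto (fun i => ‖x i - x₀‖ ^ S.θ) l (𝓝 0) := by
      have := (tendsto_iff_norm_sub_tendsto_zero.1 tx).rpow_const (Or.inr hθ.le)
      rwa [Real.zero_rpow hθ.ne'] at this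
    have a2 : Tendsto (fun i => ‖p i - p₀‖ ^ S.ν) l (𝓝 0) := by
      have := (tendsto_iff_norm_sub_tendsto_zero.1 tp).rpow_const (Or.inr hν.le)
      rwa [Real.zero_rpow hν.ne'] at this
    have := (((tpα.const_mul (S.A * N)).mul tM).add
      (((a1.const_mul S.C₁).mul tpα).mul_const (matNorm M₀))).add
      ((a2.const_mul (S.C₂ * ‖p₀‖ ^ (S.α - S.ν))).mul_const (matNorm M₀))
    simpa using this
  refine squeeze_zero' (Eventually.of_forall fun i => dist_nonneg) ?_ t1
  filter_upwards [hx, hpne, hq] with i hxi hpi hqi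
  rw [Real.dist_eq]
  have b1 := S.abs_F_sub_le hxi hpi (hM i) hM₀
  have b2 := S.hF3.2.2 (x i) hxi x₀ hx₀ (p i) hpi M₀ hM₀
  have b3 := S.hF4.2.2 x₀ hx₀ p₀ hp₀ (p i - p₀) hqi M₀ hM₀
  rw [add_sub_cancel] at b3
  calc |S.F (x i) (p i) (M i) - S.F x₀ p₀ M₀|
      = |(S.F (x i) (p i) (M i) - S.F (x i) (p i) M₀) + (S.F (x i) (p i) M₀ - S.F x₀ (p i) M₀)
        + (S.F x₀ (p i) M₀ - S.F x₀ p₀ M₀)| := by ring_nf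
    _ ≤ _ := (abs_add_three _ _ _).trans (add_le_add (add_le_add b1 b2) b3)

/-- The dual problem, satisfied by `-u`: the second order part is `-F(x,p,-X)`. -/
def dual : Setup N where
  Ω := S.Ω
  nv := S.nv
  F := fun x p X => -S.F x p (-X)
  b := S.b
  α := S.α
  a := S.a
  A := S.A
  C₁ := S.C₁
  θ := S.θ
  C₂ := S.C₂
  ν := S.ν
  m := S.m
  hΩ := S.hΩ
  hα := S.hα
  hF1 := fun x hx t ht μ hμ p hp X hX => by
    have := S.hF1 x hx t ht μ hμ p hp (-X) hX.neg
    beta_reduce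
    rw [← smul_neg, this]; ring
  hF2 := ⟨S.hF2.1, S.hF2.2.1, fun x hx p hp M P hM hP => by
    have hPs : P.IsSymm := by
      change P.transpose = P; simpa [Matrix.IsHermitian] using hP.isHermitian
    have := S.hF2.2.2 x hx p hp (-(M + P)) P (hM.add hPs).neg hP
    have e : -(M + P) + P = -M := by abel
    rw [e] at this
    constructor <;> linarith [this.1, this.2]⟩
  hF3 := ⟨S.hF3.1, S.hF3.2.1, fun x hx y hy p hp X hX => by
    have := S.hF3.2.2 x hx y hy p hp (-X) hX.neg
    rw [matNorm_neg] at this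
    rwa [neg_sub_neg, abs_sub_comm]⟩
  hF4 := ⟨S.hF4.1, S.hF4.2.1, fun x hx p hp q hq X hX => by
    have := S.hF4.2.2 x hx p hp q hq (-X) hX.neg
    rw [matNorm_neg] at this
    rwa [neg_sub_neg, abs_sub_comm]⟩
  hb := S.hb
  hm := S.hm
  hmα := S.hmα

lemma dual_Op {x p : EN N} (hx : x ∈ S.K) (hp : p ≠ 0) {X : Mat N} (hX : X.IsSymm) :
    S.dual.Op x (-p) (-X) = -S.Op x p X := by
  unfold Op dual
  simp only [neg_neg, inner_neg_right, norm_neg, S.F_neg hx hp hX]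
  ring

end Setup

/-! ### Second order jets and Taylor expansions -/

/-- `(p, M)` is a second order superjet of `u` at `z`, relative to `K`. -/
def SupJet {N : ℕ} (K : Set (EN N)) (u : EN N → ℝ) (z p : EN N) (M : Mat N) : Prop :=
  ∀ ε > 0, ∀ᶠ x in 𝓝[K] z,
    u x ≤ u z + ⟪p, x - z⟫ + qf M (x - z) / 2 + ε * ‖x - z‖ ^ 2

lemma abs_sub_le_of_deriv_small {E : Type*} [NormedAddCommGroup E] [NormedSpace ℝ E]
    {g : E → ℝ} {g' : E → E →L[ℝ] ℝ} {z : E} {ε : ℝ}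
    (hg : ∀ᶠ x in 𝓝 z, HasFDerivAt g (g' x) x) (hb : ∀ᶠ x in 𝓝 z, ‖g' x‖ ≤ ε * ‖x - z‖) :
    ∀ᶠ x in 𝓝 z, |g x - g z| ≤ ε * ‖x - z‖ ^ 2 := by
  obtain ⟨r, hr, hB⟩ := Metric.eventually_nhds_iff_ball.1 (hg.and hb)
  filter_upwards [Metric.ball_mem_nhds z hr] with x hx
  have hsub : closedBall z ‖x - z‖ ⊆ ball z r := by
    apply closedBall_subset_ball; rwa [← dist_eq_norm]
  have hε : ∀ y ∈ closedBall z ‖x - z‖, ‖g' y‖ ≤ ε * ‖x - z‖ := by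
    intro y hy
    rcases eq_or_ne y z with rfl | hne
    · have := (hB _ (mem_ball_self hr)).2
      simp only [sub_self, norm_zero, mul_zero] at this
      refine this.trans ?_
      by_contra hcon
      push Not at hcon
      have h0 : 0 < ‖x - y‖ := by
        by_contra h; push Not at h
        have : ‖x - y‖ = 0 := le_antisymm h (norm_nonneg _)
        rw [this] at hcon; simp at hcon
      exact absurd ((norm_nonneg _).trans (hB x hx).2) (not_le.2 hcon)
    · have h1 := (hB y (hsub hy)).2
      have h2 : 0 < ‖y - z‖ := norm_pos_iff.2 (sub_ne_zero.2 hne)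
      have h3 : 0 ≤ ε := by
        by_contra h; push Not at h
        nlinarith [norm_nonneg (g' y)]
      have h4 : ‖y - z‖ ≤ ‖x - z‖ := by simpa [dist_eq_norm] using hy
      nlinarith
  have := (convex_closedBall z ‖x - z‖).norm_image_sub_le_of_norm_hasFDerivWithin_le
    (f := g) (f' := g') (C := ε * ‖x - z‖) (fun y hy => ((hB y (hsub hy)).1).hasFDerivWithinAt)
    hε (mem_closedBall_self (norm_nonneg _)) (y := x) (by simp [dist_eq_norm])
  rw [Real.norm_eq_abs] at this
  calc _ ≤ _ := this
    _ = _ := by ring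

/-- One-dimensional second order Taylor expansion. -/
lemma taylor_one {f f' : ℝ → ℝ} {s f₂ : ℝ} (h1 : ∀ᶠ x in 𝓝 s, HasDerivAt f (f' x) x)
    (h2 : HasDerivAt f' f₂ s) {ε : ℝ} (hε : 0 < ε) :
    ∀ᶠ x in 𝓝 s, |f x - (f s + f' s * (x - s) + f₂ / 2 * (x - s) ^ 2)| ≤ ε * (x - s) ^ 2 := by
  have hd : ∀ᶠ x in 𝓝 s, HasFDerivAt
      (fun x => f x - (f s + f' s * (x - s) + f₂ / 2 * (x - s) ^ 2))
      (ContinuousLinearMap.toSpanSingleton ℝ (f' x - (f' s + f₂ * (x - s)))) x := by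
    filter_upwards [h1] with x hx
    have e1 : HasDerivAt (fun x : ℝ => x - s) 1 x := (hasDerivAt_id x).sub_const s
    have := hx.sub (((e1.const_mul (f' s)).const_add (f s)).add ((e1.pow 2).const_mul (f₂ / 2)))
    refine this.hasFDerivAt.congr_fderiv ?_
    ext
    simp
    ring
  have hb : ∀ᶠ x in 𝓝 s, ‖ContinuousLinearMap.toSpanSingleton ℝ (f' x - (f' s + f₂ * (x - s)))‖
      ≤ ε * ‖x - s‖ := by
    have := (hasDerivAt_iff_isLittleO.1 h2).def hε
    filter_upwards [this] with x hx
    rw [ContinuousLinearMap.norm_toSpanSingleton]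
    have e : f' x - (f' s + f₂ * (x - s)) = f' x - f' s - (x - s) • f₂ := by
      simp only [smul_eq_mul]; ring
    rw [e]; exact hx
  filter_upwards [abs_sub_le_of_deriv_small hd hb] with x hx
  simpa using hx

section Jets

variable {N : ℕ}

/-- Second order expansion of a radial function `f(|x - t|²)`. -/
lemma radial_taylor {f f' : ℝ → ℝ} {f₂ : ℝ} {t z : EN N}
    (h1 : ∀ᶠ x in 𝓝 (‖z - t‖ ^ 2), HasDerivAt f (f' x) x)
    (h2 : HasDerivAt f' f₂ (‖z - t‖ ^ 2)) {ε : ℝ} (hε : 0 < ε) :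
    ∀ᶠ x in 𝓝 z, |f (‖x - t‖ ^ 2) - (f (‖z - t‖ ^ 2)
      + ⟪(2 * f' (‖z - t‖ ^ 2)) • (z - t), x - z⟫
      + qf ((2 * f' (‖z - t‖ ^ 2)) • 1 + (4 * f₂) • outer (z - t)) (x - z) / 2)|
      ≤ ε * ‖x - z‖ ^ 2 := by
  set v := z - t with hv
  set s := ‖v‖ ^ 2 with hs
  have hcont : Tendsto (fun x => ‖x - t‖ ^ 2) (𝓝 z) (𝓝 s) := by
    have : Continuous fun x : EN N => ‖x - t‖ ^ 2 := by fun_prop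
    exact this.tendsto z
  -- the constants are chosen so that both error terms are at most half of `ε`
  set ε₁ := ε / (2 * (2 * ‖v‖ + 1) ^ 2) with hε₁
  have hε₁0 : 0 < ε₁ := by positivity
  set δ := min 1 (ε / ((|f₂| + 1) * (4 * ‖v‖ + 1))) with hδ
  have hδ0 : 0 < δ := by positivity
  filter_upwards [hcont.eventually (taylor_one h1 h2 hε₁0), Metric.ball_mem_nhds z hδ0] with x hx hxδ
  set d := x - z with hd
  have hdn : ‖d‖ < δ := by rwa [hd, ← dist_eq_norm]
  have hd1 : ‖d‖ < 1 := hdn.trans_le (min_le_left _ _)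
  have hd2 : ‖d‖ < ε / ((|f₂| + 1) * (4 * ‖v‖ + 1)) := hdn.trans_le (min_le_right _ _)
  have hxt : ‖x - t‖ ^ 2 = s + 2 * ⟪v, d⟫ + ‖d‖ ^ 2 := by
    rw [show x - t = v + d by rw [hv, hd]; abel, norm_add_sq_real]
  set h := ‖x - t‖ ^ 2 - s with hh
  have hh' : h = 2 * ⟪v, d⟫ + ‖d‖ ^ 2 := by rw [hh, hxt]; ring
  have hin := abs_real_inner_le_norm v d
  have n1 := norm_nonneg d
  have n2 := norm_nonneg v
  have habs : |h| ≤ (2 * ‖v‖ + 1) * ‖d‖ := by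
    rw [hh']
    calc _ ≤ |2 * ⟪v, d⟫| + |‖d‖ ^ 2| := abs_add_le _ _
      _ = 2 * |⟪v, d⟫| + ‖d‖ ^ 2 := by rw [abs_mul, abs_two, abs_of_nonneg (sq_nonneg ‖d‖)]
      _ ≤ _ := by nlinarith
  have hsq : h ^ 2 ≤ (2 * ‖v‖ + 1) ^ 2 * ‖d‖ ^ 2 := by
    rw [← sq_abs, ← mul_pow]; exact pow_le_pow_left₀ (abs_nonneg _) habs 2
  have hdiff : |h ^ 2 - 4 * ⟪v, d⟫ ^ 2| ≤ (4 * ‖v‖ + 1) * ‖d‖ ^ 3 := by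
    have : h ^ 2 - 4 * ⟪v, d⟫ ^ 2 = 4 * ⟪v, d⟫ * ‖d‖ ^ 2 + ‖d‖ ^ 4 := by rw [hh']; ring
    rw [this]
    calc _ ≤ |4 * ⟪v, d⟫ * ‖d‖ ^ 2| + |‖d‖ ^ 4| := abs_add_le _ _
      _ = 4 * |⟪v, d⟫| * ‖d‖ ^ 2 + ‖d‖ ^ 4 := by
        rw [abs_mul, abs_mul, abs_of_nonneg (sq_nonneg ‖d‖), abs_of_nonneg (by positivity : 0 ≤ ‖d‖ ^ 4)]
        norm_num
      _ ≤ 4 * (‖v‖ * ‖d‖) * ‖d‖ ^ 2 + ‖d‖ ^ 3 := by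
        gcongr ?_ + ?_
        · gcongr
        · exact pow_le_pow_of_le_one n1 hd1.le (by norm_num)
      _ = _ := by ring
  have e1 : ε₁ * h ^ 2 ≤ ε / 2 * ‖d‖ ^ 2 := by
    calc _ ≤ ε₁ * ((2 * ‖v‖ + 1) ^ 2 * ‖d‖ ^ 2) := by gcongr
      _ = _ := by rw [hε₁]; field_simp
  have e2 : |f₂ / 2 * (h ^ 2 - 4 * ⟪v, d⟫ ^ 2)| ≤ ε / 2 * ‖d‖ ^ 2 := by
    rw [abs_mul, abs_div, abs_two]
    have h5 : (|f₂| + 1) * (4 * ‖v‖ + 1) * ‖d‖ ≤ ε := by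
      rw [lt_div_iff₀ (by positivity)] at hd2; linarith
    calc |f₂| / 2 * |h ^ 2 - 4 * ⟪v, d⟫ ^ 2| ≤ (|f₂| + 1) / 2 * ((4 * ‖v‖ + 1) * ‖d‖ ^ 3) := by
          gcongr; linarith
      _ = ((|f₂| + 1) * (4 * ‖v‖ + 1) * ‖d‖) / 2 * ‖d‖ ^ 2 := by ring
      _ ≤ _ := by gcongr
  have e3 : f (‖x - t‖ ^ 2) - (f s + ⟪(2 * f' s) • v, d⟫
      + qf ((2 * f' s) • 1 + (4 * f₂) • outer v) d / 2)
      = (f (‖x - t‖ ^ 2) - (f s + f' s * h + f₂ / 2 * h ^ 2))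
        + f₂ / 2 * (h ^ 2 - 4 * ⟪v, d⟫ ^ 2) := by
    rw [qf_add, qf_smul, qf_smul, qf_one, qf_outer, real_inner_smul_left]
    linear_combination (f' s) * hh'
  rw [e3]
  calc _ ≤ _ := abs_add_le _ _
    _ ≤ ε / 2 * ‖d‖ ^ 2 + ε / 2 * ‖d‖ ^ 2 := add_le_add (hx.trans e1) e2
    _ = _ := by ring

lemma inner_gradient {φ : EN N → ℝ} {z : EN N} (v : EN N) :
    ⟪gradient φ z, v⟫ = fderiv ℝ φ z v := by
  simp [gradient]

lemma hess_apply (φ : EN N → ℝ) (z : EN N) (i j : Fin N) :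
    hess φ z i j = fderiv ℝ (fderiv ℝ φ) z (EuclideanSpace.single i 1)
      (EuclideanSpace.single j 1) := by
  simp [hess, iteratedFDeriv_two_apply]

lemma vec_eq_sum (v : EN N) : v = ∑ i, v i • (EuclideanSpace.single i (1 : ℝ) : EN N) := by
  have := (EuclideanSpace.basisFun (Fin N) ℝ).sum_repr v
  simpa using this.symm

lemma qf_hess (φ : EN N → ℝ) (z v : EN N) :
    qf (hess φ z) v = fderiv ℝ (fderiv ℝ φ) z v v := by
  conv_rhs => rw [vec_eq_sum v]
  rw [qf, inner_coord]
  simp only [map_sum, map_smul, sum_apply, smul_apply,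
    smul_eq_mul, op_apply_coord, hess_apply, Finset.mul_sum]
  rw [Finset.sum_comm]
  exact Finset.sum_congr rfl fun i _ => Finset.sum_congr rfl fun j _ => by ring

lemma symm_hess {φ : EN N → ℝ} (hφ : ContDiff ℝ 2 φ) (z : EN N) : (hess φ z).IsSymm := by
  ext i j
  rw [Matrix.transpose_apply, hess_apply, hess_apply]
  exact (hφ.contDiffAt (x := z)).isSymmSndFDerivAt (by simp) _ _

/-- Second order Taylor expansion of a `C²` function, in terms of `gradient` and `hess`. -/
lemma taylor_hess {φ : EN N → ℝ} (hφ : ContDiff ℝ 2 φ) (z : EN N) {ε : ℝ} (hε : 0 < ε) :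
    ∀ᶠ x in 𝓝 z, |φ x - (φ z + ⟪gradient φ z, x - z⟫ + qf (hess φ z) (x - z) / 2)|
      ≤ ε * ‖x - z‖ ^ 2 := by
  set D := fderiv ℝ (fderiv ℝ φ) z with hD
  have hsym : ∀ v w, D v w = D w v := fun v w =>
    (hφ.contDiffAt (x := z)).isSymmSndFDerivAt (by simp) v w
  have hd1 : ∀ x, HasFDerivAt φ (fderiv ℝ φ x) x := fun x =>
    (hφ.differentiable (by norm_num) x).hasFDerivAt
  have hd2 : HasFDerivAt (fderiv ℝ φ) D z :=
    ((hφ.fderiv_right (m := 1) (by norm_num)).differentiable (by norm_num) z).hasFDerivAt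
  have hd : ∀ x, HasFDerivAt (fun x => φ x - (φ z + fderiv ℝ φ z (x - z) + D (x - z) (x - z) / 2))
      (fderiv ℝ φ x - (fderiv ℝ φ z + D (x - z))) x := by
    intro x
    have e1 : HasFDerivAt (fun x : EN N => x - z) (ContinuousLinearMap.id ℝ (EN N)) x :=
      (hasFDerivAt_id x).sub_const z
    have e2 : HasFDerivAt (fun x => fderiv ℝ φ z (x - z)) (fderiv ℝ φ z) x :=
      ((fderiv ℝ φ z).hasFDerivAt.comp x e1).congr_fderiv (ContinuousLinearMap.comp_id _)
    have e3 : HasFDerivAt (fun x => D (x - z)) D x :=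
      (D.hasFDerivAt.comp x e1).congr_fderiv (ContinuousLinearMap.comp_id _)
    have e4 := (e3.clm_apply e1)
    have e5 := (hd1 x).sub ((e2.const_add (φ z)).add (e4.mul_const (2⁻¹ : ℝ)))
    refine e5.congr_fderiv ?_ |>.congr_of_eventuallyEq ?_
    · ext v
      have := hsym v (x - z)
      simp at this ⊢
      linarith
    · filter_upwards with y
      simp [div_eq_mul_inv]
  have hb : ∀ᶠ x in 𝓝 z, ‖fderiv ℝ φ x - (fderiv ℝ φ z + D (x - z))‖ ≤ ε * ‖x - z‖ := by
    filter_upwards [(hasFDerivAt_iff_isLittleO.1 hd2).def hε] with x hx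
    rw [← sub_sub]; exact hx
  filter_upwards [abs_sub_le_of_deriv_small (Eventually.of_forall hd) hb] with x hx
  rw [inner_gradient, qf_hess]
  simpa using hx

/-- The quadratic polynomial with gradient `p` and Hessian `M` at `z`. -/
def quad (z p : EN N) (M : Mat N) (x : EN N) : ℝ := ⟪p, x - z⟫ + qf M (x - z) / 2

lemma contDiff_quad (z p : EN N) (M : Mat N) : ContDiff ℝ 2 (quad z p M) := by
  unfold quad qf
  have : ContDiff ℝ 2 (fun x : EN N => op M (x - z)) :=
    (op M).contDiff.comp (contDiff_id.sub contDiff_const)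
  have h2 : ContDiff ℝ 2 (fun x : EN N => x - z) := contDiff_id.sub contDiff_const
  exact (contDiff_const.inner ℝ h2).add ((h2.inner ℝ this).div_const 2)

lemma hasFDerivAt_quad (z p : EN N) {M : Mat N} (hM : M.IsSymm) (x : EN N) :
    HasFDerivAt (quad z p M) (innerSL ℝ p + innerSL ℝ (op M (x - z))) x := by
  have e1 : HasFDerivAt (fun x : EN N => x - z) (ContinuousLinearMap.id ℝ (EN N)) x :=
    (hasFDerivAt_id x).sub_const z
  have e2 : HasFDerivAt (fun x => op M (x - z)) (op M) x :=
    ((op M).hasFDerivAt.comp x e1).congr_fderiv (ContinuousLinearMap.comp_id _)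
  have e3 : HasFDerivAt (fun x => innerSL ℝ p (x - z)) (innerSL ℝ p) x :=
    ((innerSL ℝ p).hasFDerivAt.comp x e1).congr_fderiv (ContinuousLinearMap.comp_id _)
  have e4 := e3.add ((e1.inner ℝ e2).mul_const (2⁻¹ : ℝ))
  refine e4.congr_fderiv ?_ |>.congr_of_eventuallyEq ?_
  · ext v
    have h1 := op_symm hM (x - z) v
    have h2 := real_inner_comm v (op M (x - z))
    simp only [add_apply, innerSL_apply_apply, smul_apply,
      ContinuousLinearMap.comp_apply, ContinuousLinearMap.prod_apply,
      ContinuousLinearMap.id_apply, fderivInnerCLM_apply, smul_eq_mul]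
    linarith
  · filter_upwards with y
    simp [quad, qf, div_eq_mul_inv]

lemma gradient_quad (z p : EN N) {M : Mat N} (hM : M.IsSymm) : gradient (quad z p M) z = p := by
  refine ext_inner_right ℝ fun v => ?_
  rw [inner_gradient, (hasFDerivAt_quad z p hM z).fderiv]
  simp

lemma hess_quad (z p : EN N) {M : Mat N} (hM : M.IsSymm) : hess (quad z p M) z = M := by
  ext i j
  rw [hess_apply]
  have : fderiv ℝ (quad z p M) = fun x => innerSL ℝ p + innerSL ℝ (op M (x - z)) :=
    funext fun x => (hasFDerivAt_quad z p hM x).fderiv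
  rw [this]
  have e1 : HasFDerivAt (fun x : EN N => x - z) (ContinuousLinearMap.id ℝ (EN N)) z :=
    (hasFDerivAt_id z).sub_const z
  have e2 := (((innerSL ℝ).hasFDerivAt.comp z ((op M).hasFDerivAt.comp z e1))).const_add
    (innerSL ℝ p)
  have e3 := HasFDerivAt.fderiv (f := fun x => innerSL ℝ p + innerSL ℝ (op M (x - z))) e2
  rw [e3]
  change ⟪op M (EuclideanSpace.single i 1), EuclideanSpace.single j 1⟫ = M i j
  rw [inner_coord]
  simp [op_apply_coord, hM.apply i j, PiLp.single_apply]

lemma quad_self (z p : EN N) (M : Mat N) : quad z p M z = 0 := by simp [quad, qf_zero_vec]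

end Jets

/-! ### Pointwise formulation of sub- and supersolutions -/

namespace Setup

variable {N : ℕ} (S : Setup N)

/-- The subsolution property at `z` for `F(x,Du,D²u) + b·Du|Du|^α + e(x,u) ≥ 0` with the Neumann
condition, in terms of superjets with nonzero gradient and of the tests `C|x - z|^(2m)`. -/
structure SubAt (e : EN N → ℝ → ℝ) (u : EN N → ℝ) (z : EN N) : Prop where
  jet : ∀ p M, p ≠ 0 → M.IsSymm → SupJet S.K u z p M →
    (z ∈ frontier S.Ω → 0 < ⟪p, S.nv z⟫) → 0 ≤ S.Op z p M + e z (u z)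
  pow : z ∈ S.Ω → ∀ C : ℝ,
    (∀ᶠ x in 𝓝[S.K] z, u x ≤ u z + C * ‖x - z‖ ^ (2 * S.m)) → 0 ≤ e z (u z)

/-- The supersolution property at `z`, by duality. -/
def SuperAt (e : EN N → ℝ → ℝ) (u : EN N → ℝ) (z : EN N) : Prop :=
  S.dual.SubAt (fun x r => -e x (-r)) (fun x => -u x) z

variable {S}

lemma SupJet.mono' {K : Set (EN N)} {u U : EN N → ℝ} {z p : EN N} {M : Mat N}
    (h : SupJet K U z p M) (hz : U z = u z) (hU : ∀ᶠ x in 𝓝[K] z, u x ≤ U x) :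
    SupJet K u z p M := fun ε hε => by
  filter_upwards [h ε hε, hU] with x h1 h2
  rw [← hz]; exact h2.trans h1

/-- Touching from above preserves the subsolution property at the contact point. -/
lemma SubAt.mono {e : EN N → ℝ → ℝ} {u U : EN N → ℝ} {z : EN N} (h : S.SubAt e u z)
    (hz : U z = u z) (hU : ∀ᶠ x in 𝓝[S.K] z, u x ≤ U x) : S.SubAt e U z where
  jet p M hp hM hj hb := by
    rw [hz]; exact h.jet p M hp hM (SupJet.mono' hj hz hU) hb
  pow hzΩ C hC := by
    rw [hz]
    refine h.pow hzΩ C ?_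
    filter_upwards [hC, hU] with x h1 h2
    rw [← hz]; exact h2.trans h1

lemma SubAt.mono_e {e e' : EN N → ℝ → ℝ} {u : EN N → ℝ} {z : EN N} (h : S.SubAt e u z)
    (he : e z (u z) ≤ e' z (u z)) : S.SubAt e' u z where
  jet p M hp hM hj hb := (h.jet p M hp hM hj hb).trans (by linarith)
  pow hzΩ C hC := (h.pow hzΩ C hC).trans he

/-- Homogeneity: the subsolution property of `t u` in terms of that of `u`. -/
lemma SubAt.scale {e e' : EN N → ℝ → ℝ} {u : EN N → ℝ} {z : EN N} (hzK : z ∈ S.K)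
    (h : S.SubAt e u z) {t : ℝ} (ht : 0 < t)
    (he : t ^ (S.α + 1) * e z (u z) ≤ e' z (t * u z)) : S.SubAt e' (fun x => t * u x) z where
  jet p M hp hM hj hb := by
    have hti : 0 < t⁻¹ := inv_pos.2 ht
    have hp' : t⁻¹ • p ≠ 0 := smul_ne_zero hti.ne' hp
    have h1 : SupJet S.K u z (t⁻¹ • p) (t⁻¹ • M) := fun ε hε => by
      filter_upwards [hj (t * ε) (by positivity)] with x hx
      rw [qf_smul, real_inner_smul_left]
      have := mul_le_mul_of_nonneg_left hx hti.le
      calc u x = t⁻¹ * (t * u x) := by field_simp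
        _ ≤ _ := this
        _ = _ := by field_simp
    have h2 := h.jet _ _ hp' (hM.smul _) h1 fun hz => by
      rw [real_inner_smul_left]; exact mul_pos hti (hb hz)
    have h3 := S.Op_homog hzK hp' (hM.smul t⁻¹) ht
    rw [smul_smul, smul_smul, mul_inv_cancel₀ ht.ne', one_smul, one_smul] at h3
    rw [h3]
    have := mul_nonneg (Real.rpow_nonneg ht.le (S.α + 1)) h2
    change 0 ≤ _ + e' z (t * u z)
    linarith
  pow hzΩ C hC := by
    refine le_trans (mul_nonneg (Real.rpow_nonneg ht.le (S.α + 1)) (h.pow hzΩ (t⁻¹ * C) ?_)) he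
    filter_upwards [hC] with x hx
    have := mul_le_mul_of_nonneg_left hx (inv_pos.2 ht).le
    calc u x = t⁻¹ * (t * u x) := by field_simp
        _ ≤ _ := this
        _ = _ := by field_simp

lemma SuperAt.scale {e e' : EN N → ℝ → ℝ} {u : EN N → ℝ} {z : EN N} (hzK : z ∈ S.K)
    (h : S.SuperAt e u z) {t : ℝ} (ht : 0 < t)
    (he : e' z (t * u z) ≤ t ^ (S.α + 1) * e z (u z)) : S.SuperAt e' (fun x => t * u x) z := by
  have := SubAt.scale (S := S.dual) (e' := fun x r => -e' x (-r)) hzK h ht ?_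
  · refine this.mono (by simp) (Eventually.of_forall fun x => by simp)
  · change t ^ (S.α + 1) * (-e z (- -u z)) ≤ -e' z (-(t * -u z))
    simp only [neg_neg, mul_neg]; linarith

variable (S)

/-! ### The tests `C|x - t|^(2m)` -/

/-- `f'(s)` for `f(s) = C s^m`. -/
def pd₁ (C s : ℝ) : ℝ := C * (S.m * s ^ (S.m - 1))
/-- `f''(s)` for `f(s) = C s^m`. -/
def pd₂ (C s : ℝ) : ℝ := C * (S.m * ((S.m - 1 : ℕ) * s ^ (S.m - 2)))

lemma pow_taylor (C : ℝ) (t z : EN N) {ε : ℝ} (hε : 0 < ε) :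
    ∀ᶠ x in 𝓝 z, |C * ‖x - t‖ ^ (2 * S.m) - (C * ‖z - t‖ ^ (2 * S.m)
      + ⟪(2 * S.pd₁ C (‖z - t‖ ^ 2)) • (z - t), x - z⟫
      + qf ((2 * S.pd₁ C (‖z - t‖ ^ 2)) • 1 + (4 * S.pd₂ C (‖z - t‖ ^ 2)) • outer (z - t))
        (x - z) / 2)| ≤ ε * ‖x - z‖ ^ 2 := by
  have := radial_taylor (f := fun s => C * s ^ S.m) (f' := S.pd₁ C)
    (f₂ := S.pd₂ C (‖z - t‖ ^ 2)) (t := t) (z := z)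
    (Eventually.of_forall fun s => (hasDerivAt_pow S.m s).const_mul C)
    (by
      have := ((hasDerivAt_pow (S.m - 1) (‖z - t‖ ^ 2)).const_mul (S.m : ℝ)).const_mul C
      rwa [show S.m - 1 - 1 = S.m - 2 by omega] at this) hε
  simpa only [pow_mul] using this

lemma pd₁_ne {C : ℝ} (hC : C ≠ 0) {v : EN N} (hv : v ≠ 0) :
    (2 * S.pd₁ C (‖v‖ ^ 2)) • v ≠ 0 := by
  have hm := S.hm
  have : (S.m : ℝ) ≠ 0 := by positivity
  have h0 : ‖v‖ ≠ 0 := norm_ne_zero_iff.2 hv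
  unfold pd₁
  exact smul_ne_zero (by positivity) hv

lemma symm_radial (a b : ℝ) (v : EN N) : (a • (1 : Mat N) + b • outer v).IsSymm :=
  (symm_smul_one _).add ((symm_outer v).smul _)

/-- The operator applied to `C|x - t|^(2m)` is small near `t`. -/
lemma Op_pow_small {C : ℝ} (hC : C ≠ 0) {ε : ℝ} (hε : 0 < ε) :
    ∃ δ > 0, ∀ z ∈ S.K, ∀ v : EN N, v ≠ 0 → ‖v‖ < δ →
      |S.Op z ((2 * S.pd₁ C (‖v‖ ^ 2)) • v)
        ((2 * S.pd₁ C (‖v‖ ^ 2)) • 1 + (4 * S.pd₂ C (‖v‖ ^ 2)) • outer v)| ≤ ε := by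
  have hm := S.hm
  have hm0 : (0 : ℝ) < S.m := by positivity
  set β := (2 * (S.m : ℝ) - 1) * (S.α + 1) - 1 with hβ
  have hβ0 : 0 < β := by have := S.hmα; linarith
  have hA := S.hA
  have hB := S.Bb_nonneg
  set Q := (2 * |C| * S.m) ^ (S.α + 1) * (S.A * N * (2 * S.m) + S.Bb) with hQ
  have hQ0 : 0 ≤ Q := by positivity
  have hlim : Tendsto (fun r : ℝ => Q * r ^ β) (𝓝 0) (𝓝 0) := by
    have : Tendsto (fun r : ℝ => r ^ β) (𝓝 0) (𝓝 (0 ^ β)) :=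
      (Real.continuousAt_rpow_const 0 β (Or.inr hβ0.le)).tendsto
    rw [Real.zero_rpow hβ0.ne'] at this
    simpa using this.const_mul Q
  obtain ⟨δ, hδ, hδ'⟩ := Metric.eventually_nhds_iff.1 (hlim.eventually_lt_const hε)
  refine ⟨min δ 1, by positivity, fun z hz v hv hvδ => ?_⟩
  have hr0 : 0 < ‖v‖ := norm_pos_iff.2 hv
  have hr1 : ‖v‖ < 1 := hvδ.trans_le (min_le_right _ _)
  have hsmall : Q * ‖v‖ ^ β < ε := hδ' (by
    rw [Real.dist_eq, sub_zero, abs_of_pos hr0]; exact hvδ.trans_le (min_le_left _ _))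
  have hp := S.pd₁_ne hC hv
  set p := (2 * S.pd₁ C (‖v‖ ^ 2)) • v with hpd
  have habs : |S.pd₁ C (‖v‖ ^ 2)| = |C| * S.m * ‖v‖ ^ (2 * S.m - 2) := by
    unfold pd₁
    rw [abs_mul, abs_mul, Nat.abs_cast, abs_of_nonneg (by positivity : 0 ≤ (‖v‖ ^ 2) ^ (S.m - 1)),
      ← pow_mul, show 2 * (S.m - 1) = 2 * S.m - 2 by omega]
    ring
  have hpn : ‖p‖ = 2 * |C| * S.m * ‖v‖ ^ (2 * S.m - 1) := by
    rw [hpd, norm_smul, Real.norm_eq_abs, abs_mul, abs_two, habs,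
      show 2 * S.m - 1 = (2 * S.m - 2) + 1 by omega, pow_succ]
    ring
  have hp2 : S.pd₂ C (‖v‖ ^ 2) * ‖v‖ ^ 2 = (S.m - 1) * S.pd₁ C (‖v‖ ^ 2) := by
    unfold pd₂ pd₁
    rw [show S.m - 1 = (S.m - 2) + 1 by omega, pow_succ]
    push_cast [show 2 ≤ S.m from hm]
    ring
  have hM : matNorm ((2 * S.pd₁ C (‖v‖ ^ 2)) • (1 : Mat N) + (4 * S.pd₂ C (‖v‖ ^ 2)) • outer v)
      ≤ 4 * S.m * |S.pd₁ C (‖v‖ ^ 2)| := by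
    refine (matNorm_add_le _ _).trans ?_
    rw [matNorm_smul, matNorm_smul, abs_mul, abs_mul, abs_two, abs_of_pos (by norm_num : (0:ℝ) < 4)]
    have h1 : |S.pd₂ C (‖v‖ ^ 2)| * ‖v‖ ^ 2 = (S.m - 1) * |S.pd₁ C (‖v‖ ^ 2)| := by
      have h2 : (0 : ℝ) ≤ S.m - 1 := by
        have : (2 : ℝ) ≤ S.m := by exact_mod_cast hm
        linarith
      rw [← abs_of_nonneg (sq_nonneg ‖v‖), ← abs_mul, abs_of_nonneg (sq_nonneg ‖v‖), hp2, abs_mul,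
        abs_of_nonneg h2]
    have h3 : 2 * |S.pd₁ C (‖v‖ ^ 2)| * matNorm (1 : Mat N) ≤ 2 * |S.pd₁ C (‖v‖ ^ 2)| :=
      mul_le_of_le_one_right (by positivity) matNorm_one_le
    have h4 : 4 * |S.pd₂ C (‖v‖ ^ 2)| * matNorm (outer v) ≤ 4 * |S.pd₂ C (‖v‖ ^ 2)| * ‖v‖ ^ 2 :=
      mul_le_mul_of_nonneg_left (matNorm_outer_le v) (by positivity)
    nlinarith [abs_nonneg (S.pd₁ C (‖v‖ ^ 2))]
  have hpf : |S.pd₁ C (‖v‖ ^ 2)| = ‖p‖ / (2 * ‖v‖) := by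
    rw [hpd, norm_smul, Real.norm_eq_abs, abs_mul, abs_two]; field_simp
  have hp0 : 0 < ‖p‖ := norm_pos_iff.2 hp
  have hkey := S.abs_Op_le hz hp (symm_radial (2 * S.pd₁ C (‖v‖ ^ 2)) (4 * S.pd₂ C (‖v‖ ^ 2)) v)
  refine hkey.trans (le_trans ?_ hsmall.le)
  have hpow : ‖p‖ ^ (S.α + 1) = (2 * |C| * S.m) ^ (S.α + 1) * ‖v‖ ^ β * ‖v‖ := by
    rw [hpn, Real.mul_rpow (by positivity) (by positivity), ← Real.rpow_natCast, ← Real.rpow_mul hr0.le,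
      mul_assoc (_ ^ (S.α + 1)), ← Real.rpow_add_one hr0.ne']
    congr 2
    rw [hβ, Nat.cast_sub (by omega)]
    push_cast
    ring
  have hAN : 0 ≤ S.A * N * ‖p‖ ^ S.α := by positivity
  calc _ ≤ S.A * N * ‖p‖ ^ S.α * (4 * S.m * (‖p‖ / (2 * ‖v‖))) + S.Bb * ‖p‖ ^ (S.α + 1) := by
        rw [← hpf]; gcongr
    _ = ‖p‖ ^ (S.α + 1) / ‖v‖ * (S.A * N * (2 * S.m) + S.Bb * ‖v‖) := by
        rw [Real.rpow_add_one hp0.ne']; field_simp; ring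
    _ = (2 * |C| * S.m) ^ (S.α + 1) * ‖v‖ ^ β * (S.A * N * (2 * S.m) + S.Bb * ‖v‖) := by
        rw [hpow]; field_simp
    _ ≤ (2 * |C| * S.m) ^ (S.α + 1) * ‖v‖ ^ β * (S.A * N * (2 * S.m) + S.Bb) := by
        gcongr
        exact mul_le_of_le_one_right hB hr1.le
    _ = _ := by rw [hQ]; ring

end Setup

/-! ### Viscosity solutions and the pointwise formulation -/

/-- A function whose increments are of order `|x - t|^n`, `n ≥ 2`, on a ball is constant there. -/
lemma eq_of_increments_small {N : ℕ} {u : EN N → ℝ} {x₀ : EN N} {δ C : ℝ} {n : ℕ} (hn : 2 ≤ n)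
    (h : ∀ t ∈ ball x₀ δ, ∀ x ∈ ball x₀ δ, |u x - u t| ≤ C * ‖x - t‖ ^ n) :
    ∀ x ∈ ball x₀ δ, u x = u x₀ := by
  intro x hx
  have hδ : 0 < δ := pos_of_mem_ball hx
  have hd : ∀ t ∈ ball x₀ δ, HasFDerivAt u (0 : EN N →L[ℝ] ℝ) t := by
    intro t ht
    rw [hasFDerivAt_iff_isLittleO]
    have hO : (fun x => u x - u t - (0 : EN N →L[ℝ] ℝ) (x - t)) =O[𝓝 t]
        fun x => ‖x - t‖ ^ n := by
      refine Asymptotics.IsBigO.of_bound C ?_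
      filter_upwards [isOpen_ball.mem_nhds ht] with x hx
      have := h t ht x hx
      simpa using this
    refine hO.trans_isLittleO ?_
    have h1 : (fun y : ℝ => y ^ n) =o[𝓝 0] fun y => y := by
      simpa using Asymptotics.isLittleO_pow_pow (𝕜 := ℝ) (m := 1) (n := n) (by omega)
    have h2 : Tendsto (fun x => ‖x - t‖) (𝓝 t) (𝓝 0) := by
      have : Continuous fun x : EN N => ‖x - t‖ := by fun_prop
      simpa using this.tendsto t
    exact Asymptotics.IsLittleO.of_norm_right (h1.comp_tendsto h2)
  have := (convex_ball x₀ δ).norm_image_sub_le_of_norm_hasFDerivWithin_le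
    (f := u) (f' := fun _ => 0) (C := 0) (fun y hy => (hd y hy).hasFDerivWithinAt)
    (fun y _ => by simp) (mem_ball_self hδ) hx
  have h3 : ‖u x - u x₀‖ ≤ 0 := by simpa using this
  exact sub_eq_zero.1 (norm_le_zero_iff.1 h3)

namespace Setup

variable {N : ℕ} {S : Setup N}

/-- If `u` touches `C|x - t|^(2m)` from below at `z`, then `u` has the corresponding superjet. -/
lemma supJet_of_pow {u : EN N → ℝ} {t z : EN N} {C : ℝ}
    (h : ∀ᶠ x in 𝓝[S.K] z, u x - C * ‖x - t‖ ^ (2 * S.m) ≤ u z - C * ‖z - t‖ ^ (2 * S.m)) :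
    SupJet S.K u z ((2 * S.pd₁ C (‖z - t‖ ^ 2)) • (z - t))
      ((2 * S.pd₁ C (‖z - t‖ ^ 2)) • 1 + (4 * S.pd₂ C (‖z - t‖ ^ 2)) • outer (z - t)) := by
  intro ε hε
  filter_upwards [h, mem_nhdsWithin_of_mem_nhds (S.pow_taylor C t z hε)] with x h1 h2
  have h3 := (abs_le.1 h2).2
  linarith

lemma exists_isMax {u : EN N → ℝ} {D : Set (EN N)} (hD : IsCompact D) (hne : D.Nonempty)
    (hu : UpperSemicontinuousOn u D) : ∃ z ∈ D, ∀ x ∈ D, u x ≤ u z := by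
  obtain ⟨z, hz, h⟩ := hu.exists_isMaxOn hne hD
  exact ⟨z, hz, fun x hx => h hx⟩

/-- The nonzero gradient jets together with the locally constant tests give the power tests. -/
lemma pow_of_jets {e : EN N → ℝ → ℝ} (he : ContinuousOn (fun q : EN N × ℝ => e q.1 q.2)
      (S.K ×ˢ univ)) {u : EN N → ℝ} (hu : UpperSemicontinuousOn u S.K)
    (hj : ∀ z ∈ S.Ω, ∀ p M, p ≠ 0 → M.IsSymm → SupJet S.K u z p M → 0 ≤ S.Op z p M + e z (u z))
    {x₀ : EN N} (hx₀ : x₀ ∈ S.Ω)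
    (hc : (∀ᶠ x in 𝓝[S.K] x₀, u x = u x₀) → 0 ≤ e x₀ (u x₀)) (C : ℝ)
    (hC : ∀ᶠ x in 𝓝[S.K] x₀, u x ≤ u x₀ + C * ‖x - x₀‖ ^ (2 * S.m)) : 0 ≤ e x₀ (u x₀) := by
  have hm := S.hm
  by_contra hneg
  push Not at hneg
  set ε := -e x₀ (u x₀) / 2 with hε
  have hε0 : 0 < ε := by linarith
  -- `e < -ε` near `(x₀, u x₀)`
  obtain ⟨η, hη, hηe⟩ : ∃ η > 0, ∀ z ∈ S.K, ∀ r : ℝ, ‖z - x₀‖ < η → |r - u x₀| < η →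
      e z r < -ε := by
    have h1 := (he (x₀, u x₀) ⟨S.Ω_sub_K hx₀, trivial⟩).eventually_lt_const
      (show e x₀ (u x₀) < -ε by linarith)
    obtain ⟨η, hη, h2⟩ := Metric.mem_nhdsWithin_iff.1 h1
    refine ⟨η, hη, fun z hz r hzr hr => ?_⟩
    refine h2 (a := (z, r)) ⟨?_, hz, trivial⟩
    rw [mem_ball, Prod.dist_eq, max_lt_iff, dist_eq_norm, Real.dist_eq]
    exact ⟨hzr, hr⟩
  set C₀ := max C 1 with hC₀
  have hC₀1 : 1 ≤ C₀ := le_max_right _ _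
  rw [S.nhdsWithin_K hx₀] at hC
  obtain ⟨R, hR, hRsub⟩ : ∃ R > 0, ∀ x ∈ closedBall x₀ R,
      x ∈ S.Ω ∧ u x ≤ u x₀ + C₀ * ‖x - x₀‖ ^ (2 * S.m) := by
    have h1 := (S.isOpen_Ω.eventually_mem hx₀).and hC
    obtain ⟨R, hR, h2⟩ := Metric.nhds_basis_closedBall.eventually_iff.1 h1
    refine ⟨R, hR, fun x hx => ⟨(h2 hx).1, (h2 hx).2.trans ?_⟩⟩
    gcongr
    exact le_max_left _ _
  -- the enlarged constant leaves room for moving the centre of the test function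
  set C' := 2 * 4 ^ S.m * C₀ with hC'
  have h4 : (1 : ℝ) ≤ 4 ^ S.m := one_le_pow₀ (by norm_num)
  have hC'1 : 1 ≤ C' := by nlinarith
  have hC'0 : 0 < C' := by linarith
  obtain ⟨δ₁, hδ₁, hsmall⟩ := S.Op_pow_small hC'0.ne' hε0
  have hball : closedBall x₀ R ⊆ S.K := fun x hx => S.Ω_sub_K (hRsub x hx).1
  have hpw : ∃ δ₂ > 0, ∀ δ : ℝ, 0 ≤ δ → δ < δ₂ → C' * (3 * δ) ^ (2 * S.m) < η := by
    have : Tendsto (fun δ : ℝ => C' * (3 * δ) ^ (2 * S.m)) (𝓝 0) (𝓝 (C' * (3 * 0) ^ (2 * S.m))) :=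
      Continuous.tendsto (by fun_prop) 0
    rw [mul_zero, zero_pow (by omega), mul_zero] at this
    obtain ⟨δ₂, h1, h2⟩ := Metric.eventually_nhds_iff.1 (this.eventually_lt_const hη)
    exact ⟨δ₂, h1, fun δ h3 h4 => h2 (by rwa [Real.dist_eq, sub_zero, abs_of_nonneg h3])⟩
  obtain ⟨δ₂, hδ₂, hδ₂'⟩ := hpw
  set δ := min (R / 4) (min (δ₁ / 2) (min δ₂ (η / 4))) with hδ
  have hδ0 : 0 < δ := by positivity
  have hδR : δ ≤ R / 4 := min_le_left _ _
  have hδ1 : δ ≤ δ₁ / 2 := (min_le_right _ _).trans (min_le_left _ _)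
  have hδ2 : δ ≤ δ₂ := (min_le_right _ _).trans ((min_le_right _ _).trans (min_le_left _ _))
  have hδη : δ ≤ η / 4 := (min_le_right _ _).trans ((min_le_right _ _).trans (min_le_right _ _))
  have key : ∀ t ∈ ball x₀ δ, ∀ x ∈ closedBall x₀ R,
      u x - C' * ‖x - t‖ ^ (2 * S.m) ≤ u t := by
    intro t ht
    have htn : ‖t - x₀‖ < δ := by rwa [← dist_eq_norm]
    have husc : UpperSemicontinuousOn (fun x => u x - C' * ‖x - t‖ ^ (2 * S.m))
        (closedBall x₀ R) := by
      have h1 : ContinuousOn (fun x => -(C' * ‖x - t‖ ^ (2 * S.m))) (closedBall x₀ R) := by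
        fun_prop
      exact (hu.mono hball).add h1.upperSemicontinuousOn
    obtain ⟨z, hz, hzmax⟩ := exists_isMax (isCompact_closedBall x₀ R)
      ⟨x₀, mem_closedBall_self hR.le⟩ husc
    suffices hzt : z = t by
      intro x hx
      have := hzmax x hx
      rw [hzt] at this
      simpa [show S.m ≠ 0 by omega] using this
    by_contra hzt
    set d := ‖t - x₀‖ with hd
    have hd0 : 0 ≤ d := norm_nonneg _
    have h1 := hzmax x₀ (mem_closedBall_self hR.le)
    have h2 := (hRsub z hz).2
    rw [norm_sub_rev x₀ t, ← hd] at h1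
    have h3 : ‖z - x₀‖ ^ (2 * S.m) ≤ 4 ^ S.m * (‖z - t‖ ^ (2 * S.m) + d ^ (2 * S.m)) := by
      have h5 : ‖z - x₀‖ ≤ 2 * max ‖z - t‖ d := by
        calc ‖z - x₀‖ = ‖(z - t) + (t - x₀)‖ := by congr 1; abel
          _ ≤ ‖z - t‖ + d := norm_add_le _ _
          _ ≤ _ := by linarith [le_max_left ‖z - t‖ d, le_max_right ‖z - t‖ d]
      calc ‖z - x₀‖ ^ (2 * S.m) ≤ (2 * max ‖z - t‖ d) ^ (2 * S.m) :=
            pow_le_pow_left₀ (norm_nonneg _) h5 _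
        _ = 4 ^ S.m * (max ‖z - t‖ d) ^ (2 * S.m) := by rw [mul_pow, pow_mul]; norm_num
        _ ≤ _ := by
          gcongr
          rcases max_cases ‖z - t‖ d with h | h <;> rw [h.1]
          · linarith [pow_nonneg hd0 (2 * S.m)]
          · linarith [pow_nonneg (norm_nonneg (z - t)) (2 * S.m)]
    have h6 : C₀ * ‖z - x₀‖ ^ (2 * S.m) ≤ C' / 2 * (‖z - t‖ ^ (2 * S.m) + d ^ (2 * S.m)) := by
      calc _ ≤ C₀ * (4 ^ S.m * (‖z - t‖ ^ (2 * S.m) + d ^ (2 * S.m))) := by gcongr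
        _ = _ := by rw [hC']; ring
    have h7 : ‖z - t‖ ^ (2 * S.m) ≤ 3 * d ^ (2 * S.m) := by
      have : C' * ‖z - t‖ ^ (2 * S.m) ≤ C' * (3 * d ^ (2 * S.m)) := by linarith
      exact le_of_mul_le_mul_left this hC'0
    have h8 : ‖z - t‖ ≤ 2 * d := by
      refine le_of_pow_le_pow_left₀ (n := 2 * S.m) (by omega) (by positivity) (h7.trans ?_)
      rw [mul_pow]
      have : (3 : ℝ) ≤ 2 ^ (2 * S.m) := by
        calc (3 : ℝ) ≤ 2 ^ 2 := by norm_num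
          _ ≤ _ := pow_le_pow_right₀ (by norm_num) (by omega)
      gcongr
    have h9 : ‖z - x₀‖ ≤ 3 * d := by
      calc ‖z - x₀‖ = ‖(z - t) + (t - x₀)‖ := by congr 1; abel
          _ ≤ ‖z - t‖ + d := norm_add_le _ _
          _ ≤ _ := by linarith
    have hzball : z ∈ ball x₀ R := by rw [mem_ball, dist_eq_norm]; linarith
    have hzΩ := (hRsub z hz).1
    have hloc : ∀ᶠ x in 𝓝[S.K] z,
        u x - C' * ‖x - t‖ ^ (2 * S.m) ≤ u z - C' * ‖z - t‖ ^ (2 * S.m) := by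
      filter_upwards [mem_nhdsWithin_of_mem_nhds (isOpen_ball.mem_nhds hzball)] with x hx
      exact hzmax x (ball_subset_closedBall hx)
    have hv : z - t ≠ 0 := sub_ne_zero.2 hzt
    have h10 := hj z hzΩ _ _ (S.pd₁_ne hC'0.ne' hv) (symm_radial _ _ _) (supJet_of_pow hloc)
    have h11 := hsmall z (S.Ω_sub_K hzΩ) (z - t) hv (by linarith)
    have h12 : |u z - u x₀| < η := by
      have h13 := hδ₂' d hd0 (by linarith)
      have h14 : d ^ (2 * S.m) ≤ (3 * d) ^ (2 * S.m) := by gcongr; linarith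
      have h15 : ‖z - x₀‖ ^ (2 * S.m) ≤ (3 * d) ^ (2 * S.m) := by gcongr
      have h16 : C₀ ≤ C' := by nlinarith
      have h17 : 0 ≤ C' * ‖z - t‖ ^ (2 * S.m) := by positivity
      have h18 : C₀ * ‖z - x₀‖ ^ (2 * S.m) ≤ C' * (3 * d) ^ (2 * S.m) := by gcongr
      have h19 : C' * d ^ (2 * S.m) ≤ C' * (3 * d) ^ (2 * S.m) := by gcongr
      rw [abs_lt]; constructor <;> linarith
    have h20 := hηe z (S.Ω_sub_K hzΩ) (u z) (by linarith) h12
    linarith [(abs_le.1 h11).2]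
  have hconst := eq_of_increments_small (u := u) (x₀ := x₀) (δ := δ) (C := C') (n := 2 * S.m)
    (by omega) fun t ht x hx => by
      have hsub : ball x₀ δ ⊆ closedBall x₀ R :=
        (ball_subset_ball (by linarith)).trans ball_subset_closedBall
      have h1 := key t ht x (hsub hx)
      have h2 := key x hx t (hsub ht)
      rw [norm_sub_rev t x] at h2
      rw [abs_le]; constructor <;> linarith
  have := hc (mem_nhdsWithin_of_mem_nhds (by
    filter_upwards [ball_mem_nhds x₀ hδ0] with x hx using hconst x hx))
  linarith

lemma subAt_of_isSubSol {c₀ : EN N → ℝ → ℝ} {g : EN N → ℝ} {e : EN N → ℝ → ℝ}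
    (hec : ∀ x r, e x r = c₀ x r - g x) (he : ContinuousOn (fun q : EN N × ℝ => e q.1 q.2)
      (S.K ×ˢ univ)) {u : EN N → ℝ} (hu : UpperSemicontinuousOn u S.K)
    (h : IsSubSol S.Ω S.F S.b S.α c₀ g (BNeu S.nv) u) : ∀ z ∈ S.K, S.SubAt e u z := by
  have hjet : ∀ z ∈ S.K, ∀ p M, p ≠ 0 → M.IsSymm → SupJet S.K u z p M →
      (z ∈ frontier S.Ω → 0 < ⟪p, S.nv z⟫) → 0 ≤ S.Op z p M + e z (u z) := by
    intro z hz p M hp hM hj hb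
    have hε : ∀ ε : ℝ, 0 < ε → 0 ≤ S.Op z p (M + (2 * ε) • 1) + e z (u z) := by
      intro ε hε
      have hMs : (M + (2 * ε) • (1 : Mat N)).IsSymm := hM.add (symm_smul_one _)
      have hmax : IsLocalMaxOn (fun x => u x - quad z p (M + (2 * ε) • 1) x) (closure S.Ω) z := by
        filter_upwards [hj ε hε] with x hx
        rw [quad_self, quad, qf_add, qf_smul, qf_one]
        linarith
      have hg := gradient_quad z p hMs
      have hh := hess_quad z p hMs
      rcases S.mem_cases hz with hzΩ | hzf
      · have := h.1 z hzΩ _ (contDiff_quad z p _) hmax (by rwa [hg])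
        rw [hg, hh] at this
        rw [hec]; unfold Op; linarith
      · have := h.2.2.1 z hzf _ (contDiff_quad z p _) hmax (by rwa [hg])
        rw [hg, hh, min_le_iff] at this
        rcases this with this | this
        · rw [hec]; unfold Op; linarith
        · exact absurd this (not_le.2 (hb hzf))
    have hlim : Tendsto (fun ε : ℝ => S.Op z p M + S.A * ‖p‖ ^ S.α * (2 * ε * N) + e z (u z))
        (𝓝[>] 0) (𝓝 (S.Op z p M + S.A * ‖p‖ ^ S.α * (2 * 0 * N) + e z (u z))) :=
      (Continuous.tendsto (by fun_prop) 0).mono_left nhdsWithin_le_nhds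
    have := ge_of_tendsto hlim (b := 0) (by
      filter_upwards [self_mem_nhdsWithin] with ε hε'
      have h1 := hε ε hε'
      have hε0 : (0 : ℝ) < ε := hε'
      have h2 := S.F_add_one hz hp hM (μ := 2 * ε) (by positivity)
      unfold Op at h1 ⊢
      linarith)
    simpa using this
  intro z hz
  refine ⟨hjet z hz, fun hzΩ C hC => ?_⟩
  refine pow_of_jets he hu (fun z hz p M hp hM hj => hjet z (S.Ω_sub_K hz) p M hp hM hj
    fun hf => absurd hz (S.not_mem_Ω_of_frontier hf)) hzΩ (fun hk => ?_) C hC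
  rw [hec]
  linarith [h.2.1 z hzΩ _ hk]

lemma isSubSol_of_subAt {c₀ : EN N → ℝ → ℝ} {g : EN N → ℝ} {e : EN N → ℝ → ℝ}
    (hec : ∀ x r, e x r = c₀ x r - g x) {u : EN N → ℝ} (h : ∀ z ∈ S.K, S.SubAt e u z) :
    IsSubSol S.Ω S.F S.b S.α c₀ g (BNeu S.nv) u := by
  have hjet : ∀ z, ∀ φ : EN N → ℝ, ContDiff ℝ 2 φ →
      IsLocalMaxOn (fun x => u x - φ x) (closure S.Ω) z →
      SupJet S.K u z (gradient φ z) (hess φ z) := by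
    intro z φ hφ hmax ε hε
    filter_upwards [hmax, mem_nhdsWithin_of_mem_nhds (taylor_hess hφ z hε)] with x h1 h2
    have := (abs_le.1 h2).2
    linarith
  refine ⟨fun z hz φ hφ hmax hne => ?_, fun z hz k hk => ?_, fun z hz φ hφ hmax hne => ?_,
    fun z hz k hk => ?_⟩
  · have := (h z (S.Ω_sub_K hz)).jet _ _ hne (symm_hess hφ z) (hjet z φ hφ hmax)
      fun hf => absurd hz (S.not_mem_Ω_of_frontier hf)
    rw [hec] at this; unfold Op at this; linarith
  · have hzk : u z = k := hk.self_of_nhdsWithin (S.Ω_sub_K hz)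
    have := (h z (S.Ω_sub_K hz)).pow hz 0 (by
      filter_upwards [hk] with x hx
      rw [hx, hzk]; simp)
    rw [hec, hzk] at this; linarith
  · by_contra hcon
    rw [not_le, lt_min_iff] at hcon
    have := (h z (S.frontier_sub_K hz)).jet _ _ hne (symm_hess hφ z) (hjet z φ hφ hmax)
      fun _ => hcon.2
    rw [hec] at this; unfold Op at this; linarith [hcon.1]
  · refine (min_le_right _ _).trans ?_
    simp [BNeu]

lemma isSuperSol_of_superAt {c₀ : EN N → ℝ → ℝ} {g : EN N → ℝ} {e : EN N → ℝ → ℝ}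
    (hec : ∀ x r, e x r = c₀ x r - g x) {u : EN N → ℝ} (h : ∀ z ∈ S.K, S.SuperAt e u z) :
    IsSuperSol S.Ω S.F S.b S.α c₀ g (BNeu S.nv) u := by
  have hjet : ∀ z ∈ S.K, ∀ φ : EN N → ℝ, ContDiff ℝ 2 φ →
      IsLocalMinOn (fun x => u x - φ x) (closure S.Ω) z → gradient φ z ≠ 0 →
      (z ∈ frontier S.Ω → ⟪gradient φ z, S.nv z⟫ < 0) →
      S.Op z (gradient φ z) (hess φ z) + e z (u z) ≤ 0 := by
    intro z hz φ hφ hmin hne hb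
    have hj : SupJet S.dual.K (fun x => -u x) z (-gradient φ z) (-hess φ z) := fun ε hε => by
      filter_upwards [hmin, mem_nhdsWithin_of_mem_nhds (taylor_hess hφ z hε)] with x h1 h2
      have := (abs_le.1 h2).1
      rw [inner_neg_left, qf_neg]
      linarith
    have := (h z hz).jet _ _ (neg_ne_zero.2 hne) (symm_hess hφ z).neg hj fun hf => by
      rw [inner_neg_left]; exact neg_pos.2 (hb hf)
    rw [S.dual_Op hz hne (symm_hess hφ z), neg_neg] at this
    linarith
  refine ⟨fun z hz φ hφ hmax hne => ?_, fun z hz k hk => ?_, fun z hz φ hφ hmax hne => ?_,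
    fun z hz k hk => ?_⟩
  · have := hjet z (S.Ω_sub_K hz) φ hφ hmax hne
      fun hf => absurd hz (S.not_mem_Ω_of_frontier hf)
    rw [hec] at this; unfold Op at this; linarith
  · have hzk : u z = k := hk.self_of_nhdsWithin (S.Ω_sub_K hz)
    have := (h z (S.Ω_sub_K hz)).pow hz 0 (by
      filter_upwards [hk] with x hx
      rw [hx, hzk]; simp)
    rw [neg_neg, hec, hzk] at this; linarith
  · by_contra hcon
    rw [not_le, max_lt_iff] at hcon
    have := hjet z (S.frontier_sub_K hz) φ hφ hmax hne fun _ => hcon.2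
    rw [hec] at this; unfold Op at this; linarith [hcon.1]
  · refine le_trans ?_ (le_max_right _ _)
    simp [BNeu]

end Setup

/-! ### Geometry of the domain -/

namespace Setup

variable {N : ℕ} (S : Setup N)

/-- A `C²` defining function of the domain. -/
def ρ : EN N → ℝ := S.hΩ.2.2.2.choose

/-- The gradient of the defining function. -/
def gρ (x : EN N) : EN N := gradient S.ρ x

lemma contDiff_ρ : ContDiff ℝ 2 S.ρ := S.hΩ.2.2.2.choose_spec.1
lemma mem_Ω_iff {x : EN N} : x ∈ S.Ω ↔ S.ρ x < 0 := by
  have := S.hΩ.2.2.2.choose_spec.2.1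
  constructor
  · intro h; rw [this] at h; exact h
  · intro h; rw [this]; exact h
lemma mem_frontier_iff {x : EN N} : x ∈ frontier S.Ω ↔ S.ρ x = 0 := by
  have := S.hΩ.2.2.2.choose_spec.2.2.1
  rw [this]; rfl
lemma mem_K_iff {x : EN N} : x ∈ S.K ↔ S.ρ x ≤ 0 := by
  constructor
  · intro h
    rcases S.mem_cases h with h | h
    · exact (S.mem_Ω_iff.1 h).le
    · exact (S.mem_frontier_iff.1 h).le
  · intro h
    rcases h.lt_or_eq with h | h
    · exact S.Ω_sub_K (S.mem_Ω_iff.2 h)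
    · exact S.frontier_sub_K (S.mem_frontier_iff.2 h)
lemma gρ_ne {x : EN N} (hx : x ∈ frontier S.Ω) : S.gρ x ≠ 0 :=
  (S.hΩ.2.2.2.choose_spec.2.2.2 x hx).1
lemma nv_eq {x : EN N} (hx : x ∈ frontier S.Ω) : S.nv x = ‖S.gρ x‖⁻¹ • S.gρ x :=
  (S.hΩ.2.2.2.choose_spec.2.2.2 x hx).2
lemma inner_nv_pos {x : EN N} (hx : x ∈ frontier S.Ω) (p : EN N) :
    0 < ⟪p, S.nv x⟫ ↔ 0 < ⟪p, S.gρ x⟫ := by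
  have h0 : 0 < ‖S.gρ x‖⁻¹ := inv_pos.2 (norm_pos_iff.2 (S.gρ_ne hx))
  rw [S.nv_eq hx, real_inner_smul_right]
  exact mul_pos_iff_of_pos_left h0

lemma continuous_gradient {φ : EN N → ℝ} (hφ : ContDiff ℝ 2 φ) : Continuous (gradient φ) := by
  unfold gradient
  exact (InnerProductSpace.toDual ℝ (EN N)).symm.continuous.comp
    (hφ.continuous_fderiv (by norm_num))

lemma continuous_gρ : Continuous S.gρ := continuous_gradient S.contDiff_ρ

/-- Uniform first and second order bounds for a `C²` function on the closed domain. -/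
lemma exists_C2_bound {φ : EN N → ℝ} (hφ : ContDiff ℝ 2 φ) : ∃ C : ℝ, 0 < C ∧
    (∀ x ∈ S.K, ‖gradient φ x‖ ≤ C) ∧
    (∀ x ∈ S.K, ∀ y ∈ S.K, ‖gradient φ x - gradient φ y‖ ≤ C * ‖x - y‖) ∧
    (∀ x ∈ S.K, ∀ y ∈ S.K, |φ y - (φ x + ⟪gradient φ x, y - x⟫)| ≤ C * ‖y - x‖ ^ 2) ∧
    (∀ x ∈ S.K, ∀ y ∈ S.K, |φ y - φ x| ≤ C * ‖y - x‖) := by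
  obtain ⟨R, hR⟩ := S.isCompact_K.isBounded.subset_closedBall 0
  have hBc : IsCompact (closedBall (0 : EN N) R) := isCompact_closedBall 0 R
  have hd1 : ∀ x, HasFDerivAt φ (fderiv ℝ φ x) x := fun x =>
    (hφ.differentiable (by norm_num) x).hasFDerivAt
  have hc1 : ContDiff ℝ 1 (fderiv ℝ φ) := hφ.fderiv_right (m := 1) (by norm_num)
  have hd2 : ∀ x, HasFDerivAt (fderiv ℝ φ) (fderiv ℝ (fderiv ℝ φ) x) x := fun x =>
    (hc1.differentiable (by norm_num) x).hasFDerivAt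
  obtain ⟨C1, hC1⟩ := hBc.exists_bound_of_continuousOn hc1.continuous.continuousOn
  obtain ⟨C2, hC2⟩ := hBc.exists_bound_of_continuousOn
    (hc1.continuous_fderiv (by norm_num)).continuousOn
  set C := max (max C1 C2) 1 with hC
  have h1C : C1 ≤ C := (le_max_left _ _).trans (le_max_left _ _)
  have h2C : C2 ≤ C := (le_max_right _ _).trans (le_max_left _ _)
  have hgn : ∀ x, ‖gradient φ x‖ = ‖fderiv ℝ φ x‖ := fun x => by
    unfold gradient; exact LinearIsometryEquiv.norm_map _ _
  have hgd : ∀ x y, ‖gradient φ x - gradient φ y‖ = ‖fderiv ℝ φ x - fderiv ℝ φ y‖ := fun x y => by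
    unfold gradient; rw [← map_sub]; exact LinearIsometryEquiv.norm_map _ _
  have hlip : ∀ x ∈ closedBall (0 : EN N) R, ∀ y ∈ closedBall (0 : EN N) R,
      ‖fderiv ℝ φ y - fderiv ℝ φ x‖ ≤ C * ‖y - x‖ := fun x hx y hy =>
    (convex_closedBall (0 : EN N) R).norm_image_sub_le_of_norm_hasFDerivWithin_le
      (fun z _ => (hd2 z).hasFDerivWithinAt) (fun z hz => (hC2 z hz).trans h2C) hx hy
  refine ⟨C, by positivity, fun x hx => ?_, fun x hx y hy => ?_, fun x hx y hy => ?_,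
    fun x hx y hy => ?_⟩
  · rw [hgn]; exact (hC1 x (hR hx)).trans h1C
  · rw [hgd]; exact hlip y (hR hy) x (hR hx)
  · rw [inner_gradient]
    set D := closedBall (0 : EN N) R ∩ closedBall x ‖y - x‖ with hD
    have hDc : Convex ℝ D := (convex_closedBall _ _).inter (convex_closedBall _ _)
    have hxD : x ∈ D := ⟨hR hx, mem_closedBall_self (norm_nonneg _)⟩
    have hyD : y ∈ D := ⟨hR hy, by simp [dist_eq_norm]⟩
    have := hDc.norm_image_sub_le_of_norm_hasFDerivWithin_le' (f := φ) (f' := fderiv ℝ φ)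
      (φ := fderiv ℝ φ x) (C := C * ‖y - x‖) (fun z _ => (hd1 z).hasFDerivWithinAt)
      (fun z hz => (hlip x (hR hx) z hz.1).trans (by
        have : ‖z - x‖ ≤ ‖y - x‖ := by simpa [dist_eq_norm] using hz.2
        gcongr)) hxD hyD
    rw [Real.norm_eq_abs, sub_sub] at this
    calc _ ≤ _ := this
      _ = _ := by ring
  · have := (convex_closedBall (0 : EN N) R).norm_image_sub_le_of_norm_hasFDerivWithin_le
      (f := φ) (f' := fderiv ℝ φ) (C := C)
      (fun z _ => (hd1 z).hasFDerivWithinAt) (fun z hz => (hC1 z hz).trans h1C) (hR hx) (hR hy)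
    simpa using this

/-- Inward directions at a boundary point stay in the closed domain for a short time. -/
lemma inward {z : EN N} (hz : z ∈ frontier S.Ω) :
    ∀ᶠ h : ℝ in 𝓝[>] 0, z + h • (-S.nv z) ∈ S.K := by
  set w := -S.nv z with hw
  have h0 : 0 < ‖S.gρ z‖ := norm_pos_iff.2 (S.gρ_ne hz)
  have hneg : ⟪S.gρ z, w⟫ < 0 := by
    rw [hw, S.nv_eq hz, inner_neg_right, real_inner_smul_right, real_inner_self_eq_norm_sq]
    have : 0 < ‖S.gρ z‖⁻¹ * ‖S.gρ z‖ ^ 2 := by positivity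
    linarith
  have hd : HasDerivAt (fun h : ℝ => S.ρ (z + h • w)) ⟪S.gρ z, w⟫ 0 := by
    have h1 : HasFDerivAt S.ρ (fderiv ℝ S.ρ z) (z + (0 : ℝ) • w) := by
      rw [zero_smul, add_zero]
      exact (S.contDiff_ρ.differentiable (by norm_num) z).hasFDerivAt
    have h2 : HasDerivAt (fun h : ℝ => z + h • w) w 0 := by
      simpa using ((hasDerivAt_id (0 : ℝ)).smul_const w).const_add z
    have := h1.comp_hasDerivAt (0 : ℝ) h2
    rwa [gρ, inner_gradient]
  have h3 := hd.tendsto_slope_zero_right.eventually_lt_const hneg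
  filter_upwards [h3, self_mem_nhdsWithin] with h h4 h5
  have h5' : (0 : ℝ) < h := h5
  simp only [zero_add, zero_smul, add_zero, smul_eq_mul, S.mem_frontier_iff.1 hz, sub_zero] at h4
  rw [S.mem_K_iff]
  by_contra hcon
  push Not at hcon
  have : 0 < h⁻¹ * S.ρ (z + h • w) := by positivity
  linarith

/-! ### Comparison of jets -/

/-- `(p, M)` is a second order subjet of `u` at `z`, relative to `K`. -/
def SubJet (K : Set (EN N)) (u : EN N → ℝ) (z p : EN N) (M : Mat N) : Prop :=
  ∀ ε > 0, ∀ᶠ x in 𝓝[K] z,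
    u z + ⟪p, x - z⟫ + qf M (x - z) / 2 - ε * ‖x - z‖ ^ 2 ≤ u x

lemma jets_first {K : Set (EN N)} {u : EN N → ℝ} {z p p₁ w : EN N} {M M₁ : Mat N}
    (h : SupJet K u z p M) (h₁ : SubJet K u z p₁ M₁)
    (hw : ∀ᶠ t : ℝ in 𝓝[>] 0, z + t • w ∈ K) : ⟪p₁, w⟫ ≤ ⟪p, w⟫ := by
  have ht : Tendsto (fun t : ℝ => z + t • w) (𝓝[>] 0) (𝓝[K] z) := by
    rw [tendsto_nhdsWithin_iff]
    refine ⟨?_, hw⟩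
    have : Continuous fun t : ℝ => z + t • w := by fun_prop
    simpa using (this.tendsto 0).mono_left nhdsWithin_le_nhds
  have hev : ∀ᶠ t : ℝ in 𝓝[>] 0,
      ⟪p₁, w⟫ ≤ ⟪p, w⟫ + t * (qf M w / 2 - qf M₁ w / 2 + 2 * ‖w‖ ^ 2) := by
    filter_upwards [ht.eventually (h 1 one_pos), ht.eventually (h₁ 1 one_pos),
      self_mem_nhdsWithin] with t h1 h2 h3
    have h3' : (0 : ℝ) < t := h3
    rw [add_sub_cancel_left, qf_smul_vec, real_inner_smul_right, norm_smul, Real.norm_eq_abs,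
      abs_of_pos h3'] at h1 h2
    have h4 : t * ⟪p₁, w⟫ ≤ t * (⟪p, w⟫ + t * (qf M w / 2 - qf M₁ w / 2 + 2 * ‖w‖ ^ 2)) := by
      nlinarith
    exact le_of_mul_le_mul_left h4 h3'
  have hlim : Tendsto (fun t : ℝ => ⟪p, w⟫ + t * (qf M w / 2 - qf M₁ w / 2 + 2 * ‖w‖ ^ 2))
      (𝓝[>] 0) (𝓝 (⟪p, w⟫ + 0 * (qf M w / 2 - qf M₁ w / 2 + 2 * ‖w‖ ^ 2))) :=
    (Continuous.tendsto (by fun_prop) 0).mono_left nhdsWithin_le_nhds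
  simpa using ge_of_tendsto hlim hev

variable {S}

lemma jets_boundary {u : EN N → ℝ} {z p p₁ : EN N} {M M₁ : Mat N} (hz : z ∈ frontier S.Ω)
    (h : SupJet S.K u z p M) (h₁ : SubJet S.K u z p₁ M₁) : ⟪p, S.nv z⟫ ≤ ⟪p₁, S.nv z⟫ := by
  have := jets_first h h₁ (S.inward hz)
  rw [inner_neg_right, inner_neg_right] at this
  linarith

lemma line_mem {z : EN N} (hz : z ∈ S.Ω) (w : EN N) : ∀ᶠ t : ℝ in 𝓝 0, z + t • w ∈ S.K := by
  have : Continuous fun t : ℝ => z + t • w := by fun_prop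
  have h2 := this.tendsto 0
  simp only [zero_smul, add_zero] at h2
  exact h2.eventually (S.K_mem_nhds hz)

lemma jets_interior {u : EN N → ℝ} {z p p₁ : EN N} {M M₁ : Mat N} (hz : z ∈ S.Ω)
    (h : SupJet S.K u z p M) (h₁ : SubJet S.K u z p₁ M₁) :
    p = p₁ ∧ ∀ v, qf M₁ v ≤ qf M v := by
  have hline := fun w => (line_mem hz w).filter_mono (nhdsWithin_le_nhds (s := Ioi 0))
  have hp : p = p₁ := by
    refine ext_inner_right ℝ fun w => le_antisymm ?_ (jets_first h h₁ (hline w))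
    have := jets_first h h₁ (hline (-w))
    rw [inner_neg_right, inner_neg_right] at this
    linarith
  refine ⟨hp, fun w => ?_⟩
  subst hp
  have ht : Tendsto (fun t : ℝ => z + t • w) (𝓝[>] 0) (𝓝[S.K] z) := by
    rw [tendsto_nhdsWithin_iff]
    refine ⟨?_, hline w⟩
    have : Continuous fun t : ℝ => z + t • w := by fun_prop
    simpa using (this.tendsto 0).mono_left nhdsWithin_le_nhds
  refine le_of_forall_pos_le_add fun δ hδ => ?_
  have hε : 0 < δ / (4 * (‖w‖ ^ 2 + 1)) := by positivity
  obtain ⟨t, h1, h2, h3⟩ := ((ht.eventually (h _ hε)).and ((ht.eventually (h₁ _ hε)).and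
    self_mem_nhdsWithin)).exists
  have h3' : (0 : ℝ) < t := h3
  rw [add_sub_cancel_left, qf_smul_vec, norm_smul, Real.norm_eq_abs,
      abs_of_pos h3'] at h1 h2
  have h5 : δ / (4 * (‖w‖ ^ 2 + 1)) * (t * ‖w‖) ^ 2 ≤ t ^ 2 * (δ / 4) := by
    rw [div_mul_eq_mul_div, div_le_iff₀ (by positivity)]
    nlinarith [mul_pos (pow_pos h3' 2) hδ]
  have h4 : t ^ 2 * qf M₁ w ≤ t ^ 2 * (qf M w + δ) := by nlinarith
  exact le_of_mul_le_mul_left h4 (by positivity)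

lemma supJet_of_C2 {u φ : EN N → ℝ} {z : EN N} (hφ : ContDiff ℝ 2 φ)
    (h : ∀ᶠ x in 𝓝[S.K] z, u x ≤ u z + (φ x - φ z)) :
    SupJet S.K u z (gradient φ z) (hess φ z) := fun ε hε => by
  filter_upwards [h, mem_nhdsWithin_of_mem_nhds (taylor_hess hφ z hε)] with x h1 h2
  have := (abs_le.1 h2).2
  linarith

lemma quad_recentre (x₀ p : EN N) {M : Mat N} (hM : M.IsSymm) (z x : EN N) :
    quad x₀ p M x = quad x₀ p M z + ⟪p + op M (z - x₀), x - z⟫ + qf M (x - z) / 2 := by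
  unfold quad
  rw [show x - x₀ = (z - x₀) + (x - z) by abel, qf_add_vec hM, inner_add_right, inner_add_left]
  ring

lemma continuous_quad (z p : EN N) (M : Mat N) : Continuous (quad z p M) :=
  (contDiff_quad z p M).continuous

/-! ### Stability -/

lemma Op_nonneg_of_eps {z p : EN N} {M : Mat N} {r : ℝ} (hz : z ∈ S.K) (hp : p ≠ 0)
    (hM : M.IsSymm) (h : ∀ ε : ℝ, 0 < ε → 0 ≤ S.Op z p (M + ε • 1) + r) :
    0 ≤ S.Op z p M + r := by
  have hlim : Tendsto (fun ε : ℝ => S.Op z p M + S.A * ‖p‖ ^ S.α * (ε * N) + r)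
      (𝓝[>] 0) (𝓝 (S.Op z p M + S.A * ‖p‖ ^ S.α * (0 * N) + r)) :=
    (Continuous.tendsto (by fun_prop) 0).mono_left nhdsWithin_le_nhds
  have := ge_of_tendsto hlim (b := 0) (by
    filter_upwards [self_mem_nhdsWithin] with ε hε'
    have hε0 : (0 : ℝ) < ε := hε'
    have h1 := h ε hε0
    have h2 := S.F_add_one hz hp hM hε0.le
    unfold Op at h1 ⊢
    linarith)
  simpa using this

lemma stab_max {ι : Type*} {l : Filter ι} {u : EN N → ℝ} {x₀ : EN N}
    (hx₀ : x₀ ∈ S.K) (hu : ContinuousWithinAt u S.K x₀) {s : ι → EN N → ℝ}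
    (hs : ∀ i, UpperSemicontinuousOn (s i) S.K) {ε : ι → ℝ} (hε : Tendsto ε l (𝓝 0))
    (hle : ∀ i, ∀ x ∈ S.K, s i x ≤ u x + ε i) (hconv : Tendsto (fun i => s i x₀) l (𝓝 (u x₀)))
    {φ : EN N → ℝ} (hφ : Continuous φ) (hφ0 : φ x₀ = 0) {R η : ℝ} (hR : 0 < R) (hη : 0 < η)
    {k : ℕ} (hk : k ≠ 0)
    (hφu : ∀ x ∈ S.K ∩ closedBall x₀ R, u x ≤ u x₀ + φ x - η * ‖x - x₀‖ ^ k) :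
    ∃ z : ι → EN N, (∀ i, z i ∈ S.K) ∧ Tendsto z l (𝓝 x₀) ∧
      Tendsto (fun i => s i (z i)) l (𝓝 (u x₀)) ∧
      ∀ᶠ i in l, ∀ᶠ x in 𝓝[S.K] (z i), s i x ≤ s i (z i) + (φ x - φ (z i)) := by
  have hcomp : IsCompact (S.K ∩ closedBall x₀ R) := S.isCompact_K.inter_right isClosed_closedBall
  have hmem : x₀ ∈ S.K ∩ closedBall x₀ R := ⟨hx₀, mem_closedBall_self hR.le⟩
  have hex : ∀ i, ∃ z ∈ S.K ∩ closedBall x₀ R, ∀ x ∈ S.K ∩ closedBall x₀ R,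
      s i x - φ x ≤ s i z - φ z := by
    intro i
    have h1 : ContinuousOn (fun x => -φ x) (S.K ∩ closedBall x₀ R) := hφ.neg.continuousOn
    exact exists_isMax hcomp ⟨x₀, hmem⟩
      (((hs i).mono inter_subset_left).add h1.upperSemicontinuousOn)
  choose z hz hmax using hex
  have hzlim : Tendsto z l (𝓝 x₀) := by
    have h1 : Tendsto (fun i => (u x₀ - s i x₀ + ε i) / η) l (𝓝 0) := by
      simpa using (((tendsto_const_nhds (x := u x₀)).sub hconv).add hε).div_const η
    have h2 : Tendsto (fun i => ‖z i - x₀‖ ^ k) l (𝓝 0) := by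
      refine squeeze_zero (fun i => by positivity) (fun i => ?_) h1
      rw [le_div_iff₀ hη]
      have a1 := hmax i x₀ hmem
      have a2 := hle i (z i) (hz i).1
      have a3 := hφu (z i) (hz i)
      linarith
    rw [tendsto_iff_norm_sub_tendsto_zero]
    rw [Metric.tendsto_nhds] at h2 ⊢
    intro δ hδ
    filter_upwards [h2 (δ ^ k) (by positivity)] with i hi
    rw [Real.dist_eq, sub_zero, abs_of_nonneg (by positivity)] at hi ⊢
    exact lt_of_pow_lt_pow_left₀ k hδ.le hi
  have hφz : Tendsto (fun i => φ (z i)) l (𝓝 0) := by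
    have := (hφ.tendsto x₀).comp hzlim
    rwa [hφ0] at this
  have huz : Tendsto (fun i => u (z i)) l (𝓝 (u x₀)) :=
    hu.tendsto.comp (tendsto_nhdsWithin_iff.2 ⟨hzlim, Eventually.of_forall fun i => (hz i).1⟩)
  refine ⟨z, fun i => (hz i).1, hzlim, ?_, ?_⟩
  · refine tendsto_of_tendsto_of_tendsto_of_le_of_le (g := fun i => s i x₀ + φ (z i))
      (h := fun i => u (z i) + ε i) (by simpa using hconv.add hφz) (by simpa using huz.add hε)
      (fun i => ?_) (fun i => hle i _ (hz i).1)
    have a1 := hmax i x₀ hmem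
    rw [hφ0] at a1
    simp only
    linarith
  · filter_upwards [hzlim.eventually (ball_mem_nhds x₀ hR)] with i hi
    filter_upwards [self_mem_nhdsWithin, mem_nhdsWithin_of_mem_nhds (isOpen_ball.mem_nhds hi)]
      with x h1 h2
    have := hmax i x ⟨h1, ball_subset_closedBall h2⟩
    linarith

/-- Stability of the subsolution property under one-sided uniform limits. -/
lemma subAt_of_tendsto {ι : Type*} {l : Filter ι} [l.NeBot] {e : EN N → ℝ → ℝ} {u : EN N → ℝ}
    {x₀ : EN N} (hx₀ : x₀ ∈ S.K) (hu : ContinuousWithinAt u S.K x₀) {s : ι → EN N → ℝ}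
    {e' : ι → EN N → ℝ → ℝ} (hs : ∀ i, UpperSemicontinuousOn (s i) S.K)
    (hsub : ∀ i, ∀ z ∈ S.K, S.SubAt (e' i) (s i) z) {ε : ι → ℝ} (hε : Tendsto ε l (𝓝 0))
    (hle : ∀ i, ∀ x ∈ S.K, s i x ≤ u x + ε i) (hconv : Tendsto (fun i => s i x₀) l (𝓝 (u x₀)))
    (he : ∀ (z : ι → EN N) (r : ι → ℝ), (∀ i, z i ∈ S.K) → Tendsto z l (𝓝 x₀) →
      Tendsto r l (𝓝 (u x₀)) → Tendsto (fun i => e' i (z i) (r i)) l (𝓝 (e x₀ (u x₀)))) :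
    S.SubAt e u x₀ where
  jet p M hp hM hj hb := by
    refine Op_nonneg_of_eps hx₀ hp hM fun η hη => ?_
    have hMs : (M + η • (1 : Mat N)).IsSymm := hM.add (symm_smul_one _)
    set M' := M + η • (1 : Mat N) with hM'
    obtain ⟨R, hR, hRu⟩ : ∃ R > 0, ∀ x ∈ S.K ∩ closedBall x₀ R,
        u x ≤ u x₀ + quad x₀ p M' x - (η / 4) * ‖x - x₀‖ ^ 2 := by
      obtain ⟨R, hR, h⟩ := (nhdsWithin_hasBasis nhds_basis_closedBall S.K).eventually_iff.1
        (hj (η / 4) (by positivity))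
      refine ⟨R, hR, fun x hx => ?_⟩
      have := h ⟨hx.2, hx.1⟩
      rw [quad, hM', qf_add, qf_smul, qf_one]
      linarith
    obtain ⟨z, hzK, hz, hsz, hmax⟩ := stab_max hx₀ hu hs hε hle hconv (continuous_quad x₀ p M')
      (quad_self _ _ _) hR (by positivity : 0 < η / 4) two_ne_zero hRu
    have hpl : Tendsto (fun i => p + op M' (z i - x₀)) l (𝓝 p) := by
      have : Continuous fun y : EN N => p + op M' (y - x₀) := by fun_prop
      have h := (this.tendsto x₀).comp hz
      simp only [sub_self, map_zero, add_zero] at h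
      exact h
    have hbd : ∀ᶠ i in l, z i ∈ frontier S.Ω → 0 < ⟪p + op M' (z i - x₀), S.nv (z i)⟫ := by
      rcases S.mem_cases hx₀ with hΩ | hf
      · filter_upwards [hz.eventually (S.isOpen_Ω.eventually_mem hΩ)] with i hi hfi
        exact absurd hi (S.not_mem_Ω_of_frontier hfi)
      · have h1 := (S.inner_nv_pos hf p).1 (hb hf)
        have h2 := Filter.Tendsto.inner (𝕜 := ℝ) hpl ((S.continuous_gρ.tendsto x₀).comp hz)
        filter_upwards [h2.eventually_const_lt h1] with i hi hfi
        exact (S.inner_nv_pos hfi _).2 hi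
    have hOp : Tendsto (fun i => S.Op (z i) (p + op M' (z i - x₀)) M') l (𝓝 (S.Op x₀ p M')) :=
      S.tendsto_Op (Eventually.of_forall hzK) hx₀ hp (fun _ => hMs) hMs hz hpl (by
        have : matNorm (M' - M') = 0 := by rw [sub_self, matNorm_eq, op_zero, norm_zero]
        rw [this]; exact tendsto_const_nhds)
    refine ge_of_tendsto (hOp.add (he z _ hzK hz hsz)) ?_
    filter_upwards [hmax, hbd, hpl.eventually_ne hp] with i h1 h2 h3
    refine (hsub i (z i) (hzK i)).jet _ _ h3 hMs (fun δ hδ => ?_) h2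
    filter_upwards [h1] with x hx
    rw [quad_recentre x₀ p hMs (z i) x] at hx
    have : 0 ≤ δ * ‖x - z i‖ ^ 2 := by positivity
    linarith
  pow hΩ C hC := by
    have hm := S.hm
    set C₁ := max C 0 + 1 with hC₁
    have hC₁0 : 0 < C₁ := by positivity
    obtain ⟨R, hR, hRu⟩ : ∃ R > 0, ∀ x ∈ S.K ∩ closedBall x₀ R,
        u x ≤ u x₀ + C₁ * ‖x - x₀‖ ^ (2 * S.m) - 1 * ‖x - x₀‖ ^ (2 * S.m) := by
      obtain ⟨R, hR, h⟩ := (nhdsWithin_hasBasis nhds_basis_closedBall S.K).eventually_iff.1 hC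
      refine ⟨R, hR, fun x hx => ?_⟩
      have := h ⟨hx.2, hx.1⟩
      have h2 : C * ‖x - x₀‖ ^ (2 * S.m) ≤ max C 0 * ‖x - x₀‖ ^ (2 * S.m) := by
        gcongr; exact le_max_left _ _
      rw [hC₁, add_mul]
      linarith
    obtain ⟨z, hzK, hz, hsz, hmax⟩ := stab_max (φ := fun x => C₁ * ‖x - x₀‖ ^ (2 * S.m)) hx₀ hu hs
      hε hle hconv (by fun_prop) (by simp [show S.m ≠ 0 by omega]) hR one_pos
      (show 2 * S.m ≠ 0 by omega) hRu
    refine le_of_forall_pos_le_add fun δ hδ => ?_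
    obtain ⟨r, hr, hsmall⟩ := S.Op_pow_small hC₁0.ne' hδ
    have hlim := (he z _ hzK hz hsz).add_const δ
    refine ge_of_tendsto hlim ?_
    filter_upwards [hmax, hz.eventually (ball_mem_nhds x₀ hr),
      hz.eventually (S.isOpen_Ω.eventually_mem hΩ)] with i h1 h2 h3
    rcases eq_or_ne (z i) x₀ with h4 | h4
    · have := (hsub i (z i) (hzK i)).pow h3 C₁ (by
        filter_upwards [h1] with x hx
        rw [h4] at hx ⊢
        simpa [show S.m ≠ 0 by omega] using hx)
      linarith
    · have hv : z i - x₀ ≠ 0 := sub_ne_zero.2 h4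
      have h5 := (hsub i (z i) (hzK i)).jet _ _ (S.pd₁_ne hC₁0.ne' hv) (symm_radial _ _ _)
        (supJet_of_pow (t := x₀) (C := C₁) (by
          filter_upwards [h1] with x hx
          linarith)) fun hf => absurd h3 (S.not_mem_Ω_of_frontier hf)
      have h6 := hsmall (z i) (hzK i) (z i - x₀) hv (by rwa [← dist_eq_norm])
      linarith [(abs_le.1 h6).2]

end Setup

/-! ### A weight adapted to the Neumann condition -/

namespace Setup

variable {N : ℕ} (S : Setup N)

/-- A positive `C²` weight `γ` on the closed domain whose growth in the normal direction is so fast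
that `∇ₓ (|x-y|²(γ(x)+γ(y)))` points strictly outward at every boundary point `x` and for every
`y ≠ x` in the closed domain. -/
structure Weight where
  /-- the weight -/
  γ : EN N → ℝ
  /-- its gradient -/
  D : EN N → EN N
  /-- a lower bound -/
  γ₀ : ℝ
  /-- a bound for first and second order derivatives -/
  B : ℝ
  pos : 0 < γ₀
  one_le : 1 ≤ B
  cont : Continuous γ
  lo : ∀ x ∈ S.K, γ₀ ≤ γ x
  hi : ∀ x ∈ S.K, γ x ≤ 1
  norm_D : ∀ x ∈ S.K, ‖D x‖ ≤ B
  rem : ∀ x ∈ S.K, ∀ y ∈ S.K, |γ y - (γ x + ⟪D x, y - x⟫)| ≤ B * ‖y - x‖ ^ 2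
  lip : ∀ x ∈ S.K, ∀ y ∈ S.K, |γ y - γ x| ≤ B * ‖y - x‖
  bdry : ∀ x ∈ frontier S.Ω, ∀ y ∈ S.K, y ≠ x →
    0 < ⟪(2 * (γ x + γ y)) • (x - y) + ‖x - y‖ ^ 2 • D x, S.nv x⟫

lemma exists_gρ_lower : ∃ c > 0, ∀ x ∈ frontier S.Ω, c ≤ ‖S.gρ x‖ := by
  have hc : IsCompact (frontier S.Ω) := S.isCompact_K.of_isClosed_subset isClosed_frontier
    S.frontier_sub_K
  rcases (frontier S.Ω).eq_empty_or_nonempty with h | h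
  · exact ⟨1, one_pos, by simp [h]⟩
  · obtain ⟨z, hz, hmin⟩ := hc.exists_isMinOn h S.continuous_gρ.norm.continuousOn
    exact ⟨‖S.gρ z‖, norm_pos_iff.2 (S.gρ_ne hz), fun x hx => hmin hx⟩

lemma exists_weight : Nonempty S.Weight := by
  obtain ⟨c, hc, hcl⟩ := S.exists_gρ_lower
  obtain ⟨C, hC, -, -, hrem, -⟩ := S.exists_C2_bound S.contDiff_ρ
  set Λ := (4 * C + 1) / c ^ 2 with hΛ
  have hΛ0 : 0 < Λ := by positivity
  set γ : EN N → ℝ := fun x => Real.exp (Λ * S.ρ x) with hγ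
  have hγC : ContDiff ℝ 2 γ := Real.contDiff_exp.comp (contDiff_const.mul S.contDiff_ρ)
  obtain ⟨B, hB, hB1, -, hB3, hB4⟩ := S.exists_C2_bound hγC
  obtain ⟨z, hz, hmin⟩ := S.isCompact_K.exists_isMinOn S.nonempty_K hγC.continuous.continuousOn
  have hhi : ∀ x ∈ S.K, γ x ≤ 1 := fun x hx =>
    Real.exp_le_one_iff.2 (mul_nonpos_of_nonneg_of_nonpos hΛ0.le (S.mem_K_iff.1 hx))
  refine ⟨⟨γ, gradient γ, γ z, B + 1, Real.exp_pos _, by linarith, hγC.continuous,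
    fun x hx => hmin hx, hhi, fun x hx => by linarith [hB1 x hx], fun x hx y hy => ?_,
    fun x hx y hy => ?_, ?_⟩⟩
  · exact (hB3 x hx y hy).trans (by gcongr; linarith)
  · exact (hB4 x hx y hy).trans (by gcongr; linarith)
  · intro x hx y hy hne
    rw [S.inner_nv_pos hx]
    have hρ0 := S.mem_frontier_iff.1 hx
    have hγx : γ x = 1 := by simp [hγ, hρ0]
    have hr : 0 < ‖x - y‖ := norm_pos_iff.2 (sub_ne_zero.2 hne.symm)
    have hgrad : gradient γ x = Λ • S.gρ x := by
      refine ext_inner_right ℝ fun v => ?_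
      rw [inner_gradient, real_inner_smul_left, gρ, inner_gradient]
      have h1 : HasFDerivAt S.ρ (fderiv ℝ S.ρ x) x :=
        (S.contDiff_ρ.differentiable (by norm_num) x).hasFDerivAt
      have h2 : HasFDerivAt γ _ x := (h1.const_mul Λ).exp
      rw [h2.fderiv, hρ0]
      simp
    have h3 := (abs_le.1 (hrem x (S.frontier_sub_K hx) y hy)).1
    have h4 := S.mem_K_iff.1 hy
    have h5 : -(C * ‖x - y‖ ^ 2) ≤ ⟪x - y, S.gρ x⟫ := by
      have : ⟪gradient S.ρ x, y - x⟫ = -⟪x - y, S.gρ x⟫ := by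
        rw [← neg_sub x y, inner_neg_right, real_inner_comm]; rfl
      rw [this, hρ0, norm_sub_rev] at h3
      linarith
    have h6 := hhi y hy
    have h6' : 0 < γ y := Real.exp_pos _
    have h7 : c ^ 2 ≤ ‖S.gρ x‖ ^ 2 := by
      have := hcl x hx
      gcongr
    have h8 : 4 * C + 1 ≤ Λ * ‖S.gρ x‖ ^ 2 := by
      calc 4 * C + 1 = Λ * c ^ 2 := by rw [hΛ]; field_simp
        _ ≤ _ := by gcongr
    rw [inner_add_left, real_inner_smul_left, real_inner_smul_left, hgrad, real_inner_smul_left,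
      real_inner_self_eq_norm_sq, hγx]
    have h9 : 0 < ‖x - y‖ ^ 2 := by positivity
    have h10 : ‖x - y‖ ^ 2 * (4 * C + 1) ≤ ‖x - y‖ ^ 2 * (Λ * ‖S.gρ x‖ ^ 2) := by gcongr
    have h11 : -(4 * (C * ‖x - y‖ ^ 2)) ≤ 2 * (1 + γ y) * ⟪x - y, S.gρ x⟫ := by
      have : 2 * (1 + γ y) * (-(C * ‖x - y‖ ^ 2)) ≤ 2 * (1 + γ y) * ⟪x - y, S.gρ x⟫ := by gcongr
      have h12 : 0 ≤ C * ‖x - y‖ ^ 2 := by positivity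
      nlinarith
    nlinarith

/-! ### The penalization -/

variable {S} (W : S.Weight)

/-- The squared weighted distance. -/
def Weight.q (x y : EN N) : ℝ := ‖x - y‖ ^ 2 * (W.γ x + W.γ y)

lemma Weight.D_le {x z : EN N} (hx : x ∈ S.K) (hz : z ∈ S.K) :
    W.γ z - W.γ x ≤ ⟪W.D x, z - x⟫ + W.B * ‖z - x‖ ^ 2 := by
  linarith [(abs_le.1 (W.rem x hx z hz)).2]

/-- Second order upper bound of the squared weighted distance along a joint perturbation; the
coefficient in front of `|ξ|² + |η|²` degenerates with `|x₀ - y₀|²`. -/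
lemma Weight.q_le {x₀ y₀ x y : EN N} (hx₀ : x₀ ∈ S.K) (hy₀ : y₀ ∈ S.K) (hx : x ∈ S.K)
    (hy : y ∈ S.K) :
    W.q x y ≤ W.q x₀ y₀ + (2 * (W.γ x₀ + W.γ y₀) * ⟪x₀ - y₀, (x - x₀) - (y - y₀)⟫
      + ‖x₀ - y₀‖ ^ 2 * (⟪W.D x₀, x - x₀⟫ + ⟪W.D y₀, y - y₀⟫))
      + (3 * ‖(x - x₀) - (y - y₀)‖ ^ 2
        + ‖x₀ - y₀‖ ^ 2 * (3 * W.B ^ 2) * (‖x - x₀‖ ^ 2 + ‖y - y₀‖ ^ 2)) := by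
  have hB := W.one_le
  set ω := (x - x₀) - (y - y₀) with hω
  set v := x₀ - y₀ with hv
  set δ := (W.γ x - W.γ x₀) + (W.γ y - W.γ y₀) with hδ
  have hxy : x - y = v + ω := by rw [hω, hv]; abel
  have e1 : ‖x - y‖ ^ 2 = ‖v‖ ^ 2 + 2 * ⟪v, ω⟫ + ‖ω‖ ^ 2 := by
    rw [hxy, norm_add_sq_real]
  have d1 : δ ≤ ⟪W.D x₀, x - x₀⟫ + ⟪W.D y₀, y - y₀⟫ + W.B * (‖x - x₀‖ ^ 2 + ‖y - y₀‖ ^ 2) := by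
    have := W.D_le hx₀ hx; have := W.D_le hy₀ hy
    rw [hδ]; linarith
  have d2 : |δ| ≤ W.B * (‖x - x₀‖ + ‖y - y₀‖) := by
    rw [hδ]
    refine (abs_add_le _ _).trans ?_
    linarith [W.lip x₀ hx₀ x hx, W.lip y₀ hy₀ y hy]
  have d3 : δ ^ 2 ≤ 2 * W.B ^ 2 * (‖x - x₀‖ ^ 2 + ‖y - y₀‖ ^ 2) := by
    calc δ ^ 2 = |δ| ^ 2 := (sq_abs _).symm
      _ ≤ (W.B * (‖x - x₀‖ + ‖y - y₀‖)) ^ 2 := by gcongr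
      _ ≤ _ := by nlinarith [sq_nonneg (‖x - x₀‖ - ‖y - y₀‖), sq_nonneg W.B,
          mul_nonneg (sq_nonneg W.B) (sq_nonneg (‖x - x₀‖ - ‖y - y₀‖))]
  have d4 : 2 * ⟪v, ω⟫ * δ ≤ ‖ω‖ ^ 2 + ‖v‖ ^ 2 * δ ^ 2 := by
    have h1 := abs_real_inner_le_norm v ω
    have h2 : ⟪v, ω⟫ * δ ≤ ‖v‖ * ‖ω‖ * |δ| :=
      (le_abs_self _).trans (by rw [abs_mul]; gcongr)
    nlinarith [sq_nonneg (‖ω‖ - ‖v‖ * |δ|), sq_abs δ]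
  have d5 : ‖ω‖ ^ 2 * (W.γ x + W.γ y) ≤ ‖ω‖ ^ 2 * 2 := by
    gcongr; linarith [W.hi x hx, W.hi y hy]
  have d6 : ‖v‖ ^ 2 * δ ≤ ‖v‖ ^ 2 * (⟪W.D x₀, x - x₀⟫ + ⟪W.D y₀, y - y₀⟫
      + W.B * (‖x - x₀‖ ^ 2 + ‖y - y₀‖ ^ 2)) := by gcongr
  have d7 : ‖v‖ ^ 2 * δ ^ 2 ≤ ‖v‖ ^ 2 * (2 * W.B ^ 2 * (‖x - x₀‖ ^ 2 + ‖y - y₀‖ ^ 2)) := by gcongr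
  have d8 : ‖v‖ ^ 2 * (W.B * (‖x - x₀‖ ^ 2 + ‖y - y₀‖ ^ 2)) ≤
      ‖v‖ ^ 2 * (W.B ^ 2 * (‖x - x₀‖ ^ 2 + ‖y - y₀‖ ^ 2)) := by
    gcongr; nlinarith
  have hsum : W.γ x + W.γ y = (W.γ x₀ + W.γ y₀) + δ := by rw [hδ]; ring
  unfold Weight.q
  rw [e1, ← hv]
  have : (‖v‖ ^ 2 + 2 * ⟪v, ω⟫ + ‖ω‖ ^ 2) * (W.γ x + W.γ y) =
      ‖v‖ ^ 2 * (W.γ x₀ + W.γ y₀) + ‖v‖ ^ 2 * δ + 2 * (W.γ x₀ + W.γ y₀) * ⟪v, ω⟫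
        + 2 * ⟪v, ω⟫ * δ + ‖ω‖ ^ 2 * (W.γ x + W.γ y) := by rw [hsum]; ring
  rw [this]
  linarith

end Setup

/-- The fourth root, written with square roots. -/
def rt4 (s : ℝ) : ℝ := √(√s)

lemma rt4_nonneg (s : ℝ) : 0 ≤ rt4 s := Real.sqrt_nonneg _
lemma rt4_pow {s : ℝ} (hs : 0 ≤ s) : rt4 s ^ 4 = s := by
  rw [rt4, show (4 : ℕ) = 2 * 2 by norm_num, pow_mul, Real.sq_sqrt (Real.sqrt_nonneg _),
    Real.sq_sqrt hs]
lemma rt4_pos {s : ℝ} (hs : 0 < s) : 0 < rt4 s := Real.sqrt_pos.2 (Real.sqrt_pos.2 hs)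
lemma rt4_zero : rt4 0 = 0 := by simp [rt4]
lemma continuous_rt4 : Continuous rt4 := by unfold rt4; fun_prop

/-- The concave modulus `s - s^(5/4)`, frozen for `s ≥ w₁⁴`. -/
def prof (w₁ s : ℝ) : ℝ := min (rt4 s) w₁ ^ 4 - min (rt4 s) w₁ ^ 5

lemma continuous_prof (w₁ : ℝ) : Continuous (prof w₁) := by
  have := continuous_rt4
  unfold prof; fun_prop

lemma prof_zero {w₁ : ℝ} (h : 0 ≤ w₁) : prof w₁ 0 = 0 := by simp [prof, rt4_zero, h]

lemma prof_nonneg {w₁ s : ℝ} (h0 : 0 ≤ w₁) (h1 : w₁ ≤ 1) : 0 ≤ prof w₁ s := by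
  unfold prof
  set w := min (rt4 s) w₁
  have hw : 0 ≤ w := le_min (rt4_nonneg s) h0
  have hw1 : w ≤ 1 := (min_le_right _ _).trans h1
  nlinarith [mul_nonneg (pow_nonneg hw 4) (sub_nonneg.2 hw1)]

/-- tangent line inequality in terms of `w = s^(1/4)` -/
lemma poly_tangent {w w₀ : ℝ} (hw : 0 ≤ w) (hw₀ : 0 ≤ w₀) :
    w ^ 4 - w ^ 5 ≤ w₀ ^ 4 - w₀ ^ 5 + (1 - 5 / 4 * w₀) * (w ^ 4 - w₀ ^ 4) := by
  have : 0 ≤ (w - w₀) ^ 2 * (4 * w ^ 3 + 3 * w ^ 2 * w₀ + 2 * w * w₀ ^ 2 + w₀ ^ 3) := by positivity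
  nlinarith

lemma min_pow_le {w₁ s : ℝ} (h0 : 0 ≤ w₁) (hs : 0 ≤ s) : min (rt4 s) w₁ ^ 4 ≤ s := by
  calc min (rt4 s) w₁ ^ 4 ≤ rt4 s ^ 4 := by
        gcongr
        · exact le_min (rt4_nonneg s) h0
        · exact min_le_left _ _
    _ = s := rt4_pow hs

lemma prof_tangent {w₁ s s₀ : ℝ} (hs : 0 ≤ s) (h0 : 0 ≤ w₁) (hw : rt4 s₀ ≤ w₁)
    (hs₀ : 0 ≤ s₀) (h1 : w₁ ≤ 2 / 5) :
    prof w₁ s ≤ prof w₁ s₀ + (1 - 5 / 4 * rt4 s₀) * (s - s₀) := by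
  have h := poly_tangent (le_min (rt4_nonneg s) h0) (rt4_nonneg s₀)
  have h2 := min_pow_le h0 hs
  unfold prof
  rw [min_eq_left hw]
  rw [rt4_pow hs₀] at h ⊢
  have h3 : (1 - 5 / 4 * rt4 s₀) * (min (rt4 s) w₁ ^ 4 - s₀) ≤ (1 - 5 / 4 * rt4 s₀) * (s - s₀) := by
    gcongr
    linarith
  linarith

/-- strict concavity of `prof` to the right of `s₀` -/
lemma prof_tangent_strict {w₁ s s₀ : ℝ} (hw : rt4 s₀ ≤ w₁) (hws : rt4 s ≤ w₁)
    (hs₀ : 0 < s₀) (hss : s₀ ≤ s) (h2s : rt4 s ≤ 2 * rt4 s₀) :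
    prof w₁ s ≤ prof w₁ s₀ + (1 - 5 / 4 * rt4 s₀) * (s - s₀)
      - (s - s₀) ^ 2 / (90 * rt4 s₀ ^ 3) := by
  unfold prof
  rw [min_eq_left hw, min_eq_left hws]
  have e0 := rt4_pow hs₀.le
  have e1 := rt4_pow (hs₀.le.trans hss)
  have p0 := rt4_pos hs₀
  set w := rt4 s
  set w₀ := rt4 s₀
  have hww : w₀ ≤ w := by
    unfold w w₀ rt4; gcongr
  rw [← e0, ← e1]
  have key : w ^ 4 - w₀ ^ 4 ≤ (w - w₀) * (15 * w₀ ^ 3) := by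
    have : w ^ 4 - w₀ ^ 4 = (w - w₀) * ((w + w₀) * (w ^ 2 + w₀ ^ 2)) := by ring
    have hw0 : 0 ≤ w := p0.le.trans hww
    have h3 : (w + w₀) * (w ^ 2 + w₀ ^ 2) ≤ 15 * w₀ ^ 3 := by
      calc (w + w₀) * (w ^ 2 + w₀ ^ 2) ≤ (2 * w₀ + w₀) * ((2 * w₀) ^ 2 + w₀ ^ 2) := by gcongr
        _ = 15 * w₀ ^ 3 := by ring
    rw [this]
    exact mul_le_mul_of_nonneg_left h3 (by linarith)
  have h0 : 0 ≤ w ^ 4 - w₀ ^ 4 := sub_nonneg.2 (by gcongr)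
  have k2 : (w ^ 4 - w₀ ^ 4) ^ 2 / (90 * w₀ ^ 3) ≤ (w - w₀) ^ 2 * (5 / 2 * w₀ ^ 3) := by
    rw [div_le_iff₀ (by positivity)]
    calc (w ^ 4 - w₀ ^ 4) ^ 2 ≤ ((w - w₀) * (15 * w₀ ^ 3)) ^ 2 := by gcongr
      _ = _ := by ring
  have k3 : (w - w₀) ^ 2 * (10 * w₀ ^ 3) ≤
      (w - w₀) ^ 2 * (4 * w ^ 3 + 3 * w ^ 2 * w₀ + 2 * w * w₀ ^ 2 + w₀ ^ 3) := by
    gcongr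
    have a1 : w₀ ^ 3 ≤ w ^ 3 := by gcongr
    have a2 : w₀ ^ 2 * w₀ ≤ w ^ 2 * w₀ := by gcongr
    have a3 : w₀ * w₀ ^ 2 ≤ w * w₀ ^ 2 := by gcongr
    nlinarith
  nlinarith

lemma prof_lip {w₁ s s' : ℝ} (h0 : 0 ≤ w₁) (h1 : w₁ ≤ 2 / 5) (hs : 0 ≤ s) (hs' : 0 ≤ s') :
    |prof w₁ s - prof w₁ s'| ≤ |s - s'| := by
  wlog h : s ≤ s' generalizing s s'
  · rw [abs_sub_comm, abs_sub_comm s]; exact this hs' hs (le_of_not_ge h)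
  have hr : rt4 s ≤ rt4 s' := by unfold rt4; gcongr
  have key : min (rt4 s') w₁ ^ 4 - min (rt4 s) w₁ ^ 4 ≤ s' - s := by
    have e0 := rt4_pow hs
    have e1 := rt4_pow hs'
    rcases le_total (rt4 s) w₁ with h2 | h2
    · rw [min_eq_left h2, e0]
      linarith [min_pow_le h0 hs']
    · rw [min_eq_right h2, min_eq_right (h2.trans hr)]; linarith
  have hww : min (rt4 s) w₁ ≤ min (rt4 s') w₁ := min_le_min_right _ hr
  have hw0 : 0 ≤ min (rt4 s) w₁ := le_min (rt4_nonneg s) h0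
  have hw1 : min (rt4 s') w₁ ≤ 2 / 5 := (min_le_right _ _).trans h1
  unfold prof
  rw [abs_sub_comm, abs_sub_comm s, abs_of_nonneg (sub_nonneg.2 h), abs_le]
  set w := min (rt4 s) w₁
  set w' := min (rt4 s') w₁
  have m5 : w ^ 5 ≤ w' ^ 5 := by gcongr
  have ht := poly_tangent hw0 (hw0.trans hww)
  have m4 : w ^ 4 ≤ w' ^ 4 := by gcongr
  have : 0 ≤ (1 - 5 / 4 * w') * (w' ^ 4 - w ^ 4) := mul_nonneg (by linarith) (by linarith)
  constructor <;> nlinarith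

/-! ### Comparison of the operator at two points -/

namespace Setup

variable {N : ℕ} {S : Setup N}

lemma rpow_ratio {α s t : ℝ} (ht : 0 < t) (h1 : t / 2 ≤ s) (h2 : s ≤ 2 * t) :
    s ^ α ≤ 2 ^ |α| * t ^ α := by
  have hs : 0 < s := by linarith
  have e : s ^ α = (s / t) ^ α * t ^ α := by
    rw [← Real.mul_rpow (by positivity) ht.le, div_mul_cancel₀ _ ht.ne']
  rw [e]
  have hq1 : 1 / 2 ≤ s / t := by rw [le_div_iff₀ ht]; linarith
  have hq2 : s / t ≤ 2 := by rw [div_le_iff₀ ht]; linarith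
  have : (s / t) ^ α ≤ 2 ^ |α| := by
    rcases le_total 0 α with h | h
    · rw [abs_of_nonneg h]; exact Real.rpow_le_rpow (by positivity) hq2 h
    · rw [abs_of_nonpos h, Real.rpow_neg (by norm_num), ← Real.inv_rpow (by norm_num)]
      exact Real.rpow_le_rpow_of_nonpos (by norm_num) (by norm_num at hq1 ⊢; exact hq1) h
  gcongr

lemma symm_conv {X : Mat N} (hX : X.IsSymm) (τ : ℝ) : (X - τ • (X * X)).IsSymm :=
  hX.sub ((symm_mul_self hX).smul τ)

/-- The comparison of the operator at the two ends of the penalization. The matrix `X` is at `x₀`,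
while the equation is known at `y₀` with the matrix `X - τX² + μ`. -/
lemma core {x₀ y₀ p p' : EN N} (hx₀ : x₀ ∈ S.K) (hy₀ : y₀ ∈ S.K) {X : Mat N} (hX : X.IsSymm)
    {τ μ ε k : ℝ} (hτ : 0 ≤ τ) (hτn : τ * matNorm X ≤ 1) (hμ : 0 ≤ μ)
    (hp1 : 1 ≤ ‖p‖) (hp3 : ‖p‖ ≤ 3 * k) (hpp : ‖p' - p‖ ≤ ‖p‖ / 2)
    (hθ : ‖x₀ - y₀‖ ^ S.θ ≤ ε) (hν : (‖p' - p‖ / ‖p‖) ^ S.ν ≤ ε)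
    (hsub : 0 ≤ S.Op y₀ p' (X - τ • (X * X) + μ • 1) + 1)
    (hnum : 2 ^ |S.α| * S.A * N * μ + (6 * 2 ^ |S.α| * S.Bb + 3 * S.Bb + 6) * k ≤
      S.a * τ * matNorm X ^ 2 - 2 * (S.C₁ + S.C₂) * ε * matNorm X) :
    1 ≤ S.Op x₀ p X := by
  have hp0 : 0 < ‖p‖ := by linarith
  have hpne : p ≠ 0 := norm_pos_iff.1 hp0
  have hn0 := matNorm_nonneg X
  have hp'l : ‖p‖ / 2 ≤ ‖p'‖ := by
    have := norm_sub_norm_le p (p - p')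
    rw [sub_sub_cancel, norm_sub_rev] at this
    linarith
  have hp'u : ‖p'‖ ≤ 2 * ‖p‖ := by
    have := norm_add_le p (p' - p)
    rw [add_sub_cancel] at this
    linarith
  have hp'0 : 0 < ‖p'‖ := by linarith
  have hp'ne : p' ≠ 0 := norm_pos_iff.1 hp'0
  set n := matNorm X with hn
  set Pα := ‖p‖ ^ S.α with hPα
  have hP0 : 0 < Pα := Real.rpow_pos_of_pos hp0 _
  set Z := X - τ • (X * X) with hZ
  have hZs : Z.IsSymm := symm_conv hX τ
  have hZn : matNorm Z ≤ 2 * n := by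
    have h1 : matNorm (X + -(τ • (X * X))) ≤ _ := matNorm_add_le _ _
    rw [← sub_eq_add_neg, matNorm_neg, matNorm_smul, abs_of_nonneg hτ] at h1
    have h2 := matNorm_mul_le X X
    have h3 : τ * matNorm (X * X) ≤ τ * (n * n) := by gcongr
    have h4 : τ * n * n ≤ 1 * n := by gcongr
    linarith
  have s1 : S.F x₀ p Z + S.a * Pα * (τ * n ^ 2) ≤ S.F x₀ p X := by
    have h1 := (S.hF2.2.2 x₀ hx₀ p hpne Z (τ • (X * X)) hZs
      ((posSemidef_mul_self hX).smul hτ)).1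
    rw [hZ, sub_add_cancel, ← hZ, Matrix.trace_smul, smul_eq_mul] at h1
    have h2 := matNorm_sq_le_trace hX
    have h3 : S.a * Pα * (τ * n ^ 2) ≤ S.a * Pα * (τ * (X * X).trace) := by
      have := S.ha; gcongr
    linarith
  have hC₁ := S.hF3.1
  have hC₂ := S.hF4.1
  have hε : 0 ≤ ε := le_trans (Real.rpow_nonneg (norm_nonneg _) _) hθ
  have s2 : S.F y₀ p Z - S.C₁ * ε * Pα * (2 * n) ≤ S.F x₀ p Z := by
    have h1 := (abs_le.1 (S.hF3.2.2 x₀ hx₀ y₀ hy₀ p hpne Z hZs)).1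
    have h2 : S.C₁ * ‖x₀ - y₀‖ ^ S.θ * ‖p‖ ^ S.α * matNorm Z ≤ S.C₁ * ε * Pα * (2 * n) := by
      have := matNorm_nonneg Z
      gcongr
    linarith
  have s3 : S.F y₀ p' Z - S.C₂ * ε * Pα * (2 * n) ≤ S.F y₀ p Z := by
    have h1 := (abs_le.1 (S.hF4.2.2 y₀ hy₀ p hpne (p' - p) hpp Z hZs)).2
    rw [add_sub_cancel] at h1
    have h3 : ‖p‖ ^ (S.α - S.ν) * ‖p' - p‖ ^ S.ν = Pα * (‖p' - p‖ / ‖p‖) ^ S.ν := by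
      rw [Real.rpow_sub hp0, Real.div_rpow (norm_nonneg _) hp0.le]; ring
    have h2 : S.C₂ * ‖p‖ ^ (S.α - S.ν) * ‖p' - p‖ ^ S.ν * matNorm Z ≤
        S.C₂ * ε * Pα * (2 * n) := by
      have := matNorm_nonneg Z
      rw [mul_assoc S.C₂, h3]
      calc S.C₂ * (Pα * (‖p' - p‖ / ‖p‖) ^ S.ν) * matNorm Z
          ≤ S.C₂ * (Pα * ε) * (2 * n) := by gcongr
        _ = _ := by ring
    linarith
  have hrat : ‖p'‖ ^ S.α ≤ 2 ^ |S.α| * Pα := rpow_ratio hp0 hp'l hp'u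
  have s4 := S.F_add_one hy₀ hp'ne hZs hμ
  have s4' : S.A * ‖p'‖ ^ S.α * (μ * N) ≤ S.A * (2 ^ |S.α| * Pα) * (μ * N) := by
    have := S.hA; gcongr
  have d1 := (abs_le.1 (S.abs_drift_le hy₀ hp'ne)).2
  have d2 := (abs_le.1 (S.abs_drift_le hx₀ hpne)).1
  rw [Real.rpow_add_one hp'0.ne'] at d1
  rw [Real.rpow_add_one hp0.ne'] at d2
  have hB := S.Bb_nonneg
  have hk : 0 ≤ k := by linarith
  have d1' : S.Bb * (‖p'‖ ^ S.α * ‖p'‖) ≤ S.Bb * ((2 ^ |S.α| * Pα) * (6 * k)) := by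
    gcongr; linarith
  have d2' : S.Bb * (Pα * ‖p‖) ≤ S.Bb * (Pα * (3 * k)) := by gcongr
  have one : 1 ≤ Pα * (3 * k) := by
    have h1 : 1 ≤ ‖p‖ ^ (S.α + 1) := Real.one_le_rpow hp1 S.hα1.le
    rw [Real.rpow_add_one hp0.ne'] at h1
    exact h1.trans (by gcongr)
  have hfin := mul_le_mul_of_nonneg_left hnum hP0.le
  unfold Op at hsub ⊢
  nlinarith

/-! ### The weighted penalization -/

variable (W : S.Weight)

/-- The weighted distance. -/
def Weight.s (x y : EN N) : ℝ := ‖x - y‖ * √(W.γ x + W.γ y)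

/-- The penalization. -/
def Weight.Ψ (k w₁ : ℝ) (x y : EN N) : ℝ := k * prof w₁ (W.s x y)

lemma Weight.s_nonneg (x y : EN N) : 0 ≤ W.s x y := by unfold Weight.s; positivity

lemma Weight.sum_pos {x y : EN N} (hx : x ∈ S.K) (hy : y ∈ S.K) : 2 * W.γ₀ ≤ W.γ x + W.γ y := by
  linarith [W.lo x hx, W.lo y hy]

lemma Weight.s_sq {x y : EN N} (hx : x ∈ S.K) (hy : y ∈ S.K) : W.s x y ^ 2 = W.q x y := by
  have := W.sum_pos hx hy
  have := W.pos
  rw [Weight.s, Weight.q, mul_pow, Real.sq_sqrt (by linarith)]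

lemma Weight.continuous_s (y : EN N) : Continuous fun x => W.s x y := by
  have := W.cont
  unfold Weight.s; fun_prop

lemma Weight.continuous_s' (x : EN N) : Continuous fun y => W.s x y := by
  have := W.cont
  unfold Weight.s; fun_prop

lemma Weight.Ψ_le {k w₁ : ℝ} (hk : 0 ≤ k) (hw₁ : 0 ≤ w₁) (hw2 : w₁ ≤ 2 / 5) {x₀ y₀ x y : EN N}
    (hx₀ : x₀ ∈ S.K) (hy₀ : y₀ ∈ S.K) (hx : x ∈ S.K) (hy : y ∈ S.K)
    (hs₀ : 0 < W.s x₀ y₀) (hw₀ : rt4 (W.s x₀ y₀) ≤ w₁) :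
    W.Ψ k w₁ x y ≤ W.Ψ k w₁ x₀ y₀ +
      k * (1 - 5 / 4 * rt4 (W.s x₀ y₀)) / (2 * W.s x₀ y₀) * (W.q x y - W.q x₀ y₀) := by
  have h := prof_tangent (W.s_nonneg x y) hw₁ hw₀ hs₀.le hw2
  rw [← W.s_sq hx hy, ← W.s_sq hx₀ hy₀]
  have h2 : W.s x y - W.s x₀ y₀ ≤ (W.s x y ^ 2 - W.s x₀ y₀ ^ 2) / (2 * W.s x₀ y₀) := by
    rw [le_div_iff₀ (by positivity)]
    nlinarith [sq_nonneg (W.s x y - W.s x₀ y₀)]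
  have h3 : (1 - 5 / 4 * rt4 (W.s x₀ y₀)) * (W.s x y - W.s x₀ y₀) ≤
      (1 - 5 / 4 * rt4 (W.s x₀ y₀)) * ((W.s x y ^ 2 - W.s x₀ y₀ ^ 2) / (2 * W.s x₀ y₀)) := by
    gcongr; linarith
  have h4 := mul_le_mul_of_nonneg_left (h.trans (add_le_add_right h3 _)) hk
  unfold Weight.Ψ
  refine h4.trans (le_of_eq ?_)
  ring

lemma sqrt_add_le {G δ : ℝ} (hG : 0 < G) (h : 0 ≤ G + δ) : √(G + δ) ≤ √G + δ / (2 * √G) := by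
  have hs : 0 < √G := Real.sqrt_pos.2 hG
  have h1 := Real.sq_sqrt hG.le
  have h2 := Real.sq_sqrt h
  have : √(G + δ) - √G ≤ δ / (2 * √G) := by
    rw [le_div_iff₀ (by positivity)]
    nlinarith [sq_nonneg (√(G + δ) - √G)]
  linarith

lemma abs_sqrt_sub_le {G G' : ℝ} (hG : 0 < G) (h : 0 ≤ G') : |√G' - √G| ≤ |G' - G| / √G := by
  have hs : 0 < √G := Real.sqrt_pos.2 hG
  rw [le_div_iff₀ hs]
  have e : G' - G = (√G' - √G) * (√G' + √G) := by
    have h1 := Real.sq_sqrt hG.le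
    have h2 := Real.sq_sqrt h
    nlinarith
  rw [e, abs_mul]
  gcongr
  rw [abs_of_nonneg (by positivity)]
  linarith [Real.sqrt_nonneg G']

lemma Weight.sqrt_lower {x y : EN N} (hx : x ∈ S.K) (hy : y ∈ S.K) :
    √(2 * W.γ₀) ≤ √(W.γ x + W.γ y) := Real.sqrt_le_sqrt (W.sum_pos hx hy)

lemma Weight.sqrt_upper {x y : EN N} (hx : x ∈ S.K) (hy : y ∈ S.K) :
    √(W.γ x + W.γ y) ≤ 2 := by
  rw [Real.sqrt_le_left (by norm_num)]
  linarith [W.hi x hx, W.hi y hy]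

lemma Weight.g_pos : 0 < √(2 * W.γ₀) := Real.sqrt_pos.2 (by linarith [W.pos])

set_option maxHeartbeats 800000 in
/-- Strict concavity of the penalization in the direction `x₀ - y₀`. -/
lemma Weight.second_diff {k w₁ : ℝ} (hk : 0 ≤ k) (hw₁ : 0 ≤ w₁) (hw2 : w₁ ≤ 2 / 5)
    (hwB : 720 * W.B * w₁ ≤ W.γ₀ * √(2 * W.γ₀)) {x₀ y₀ e : EN N} (hx₀ : x₀ ∈ S.Ω)
    (hy₀ : y₀ ∈ S.K) (he : ‖e‖ = 1) (hev : x₀ - y₀ = ‖x₀ - y₀‖ • e) (hr0 : 0 < ‖x₀ - y₀‖)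
    (hr : W.B * ‖x₀ - y₀‖ ≤ W.γ₀ / 4)
    (hr1 : ‖x₀ - y₀‖ ≤ 1) (hs₀ : 0 < W.s x₀ y₀) (hw₀ : rt4 (W.s x₀ y₀) < w₁) :
    ∀ᶠ t : ℝ in 𝓝[>] 0, W.Ψ k w₁ (x₀ + t • e) y₀ + W.Ψ k w₁ (x₀ - t • e) y₀
      - 2 * W.Ψ k w₁ x₀ y₀ ≤ -(k * (W.γ₀ / (360 * rt4 (W.s x₀ y₀) ^ 3)) * t ^ 2) := by
  have hK₀ := S.Ω_sub_K hx₀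
  have hB := W.one_le
  have hγ₀ := W.pos
  have hg := W.g_pos
  set w₀ := rt4 (W.s x₀ y₀) with hw₀d
  have hw₀0 : 0 < w₀ := rt4_pos hs₀
  set r := ‖x₀ - y₀‖ with hrd
  have hline : Continuous fun t : ℝ => x₀ + t • e := by fun_prop
  have hT : Tendsto (fun t : ℝ => W.s (x₀ + t • e) y₀) (𝓝[>] 0) (𝓝 (W.s x₀ y₀)) := by
    have h := (((W.continuous_s y₀).comp hline).tendsto 0).mono_left
      (nhdsWithin_le_nhds (s := Ioi 0))
    simpa [Function.comp_def] using h
  have hTw := (continuous_rt4.tendsto _).comp hT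
  have hsmall : ∀ᶠ t : ℝ in 𝓝[>] 0, t < r ∧ W.B * t ≤ W.γ₀ / 4 := by
    have h1 : ∀ᶠ t : ℝ in 𝓝[>] 0, t < r := nhdsWithin_le_nhds (eventually_lt_nhds hr0)
    have h2 : ∀ᶠ t : ℝ in 𝓝[>] 0, t < W.γ₀ / 4 / W.B :=
      nhdsWithin_le_nhds (eventually_lt_nhds (by positivity))
    filter_upwards [h1, h2] with t h3 h4
    rw [lt_div_iff₀ (by positivity)] at h4
    exact ⟨h3, by linarith⟩
  have hneg : ∀ᶠ t : ℝ in 𝓝[>] 0, x₀ - t • e ∈ S.K := by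
    have := (S.line_mem hx₀ (-e)).filter_mono (nhdsWithin_le_nhds (s := Ioi 0))
    filter_upwards [this] with t ht
    rwa [smul_neg, ← sub_eq_add_neg] at ht
  filter_upwards [hTw.eventually_lt_const hw₀,
    hTw.eventually_lt_const (show rt4 (W.s x₀ y₀) < 2 * w₀ by linarith), hsmall,
    (S.line_mem hx₀ e).filter_mono nhdsWithin_le_nhds, hneg,
    self_mem_nhdsWithin] with t h1 h2 ⟨htr, htB⟩ hp hm ht0
  have ht : 0 < t := ht0
  simp only [Function.comp_apply] at h1 h2
  set xp := x₀ + t • e with hxp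
  set xm := x₀ - t • e with hxm
  set G := W.γ x₀ + W.γ y₀ with hG
  have hGl : 2 * W.γ₀ ≤ G := W.sum_pos hK₀ hy₀
  have hG0 : 0 < G := by linarith
  have hsG : 0 < √G := Real.sqrt_pos.2 hG0
  have hsgl : √(2 * W.γ₀) ≤ √G := W.sqrt_lower hK₀ hy₀
  have hsq := Real.sq_sqrt hG0.le
  set dp := W.γ xp - W.γ x₀ with hdp
  set dm := W.γ xm - W.γ x₀ with hdm
  have nte : ‖t • e‖ = t := by rw [norm_smul, he, mul_one, Real.norm_of_nonneg ht.le]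
  have exp' : xp - x₀ = t • e := by rw [hxp]; abel
  have exm' : xm - x₀ = -(t • e) := by rw [hxm]; abel
  have bp : |dp| ≤ W.B * t := by
    have := W.lip x₀ hK₀ xp hp; rwa [exp', nte] at this
  have bm : |dm| ≤ W.B * t := by
    have := W.lip x₀ hK₀ xm hm; rwa [exm', norm_neg, nte] at this
  have bs : dp + dm ≤ 2 * (W.B * t ^ 2) := by
    have a1 := W.D_le hK₀ hp
    have a2 := W.D_le hK₀ hm
    rw [exp', nte] at a1
    rw [exm', norm_neg, nte, inner_neg_right] at a2
    linarith
  have nxp : ‖xp - y₀‖ = r + t := by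
    have : xp - y₀ = (r + t) • e := by rw [add_smul, ← hev, hxp]; abel
    rw [this, norm_smul, he, mul_one, Real.norm_of_nonneg (by positivity)]
  have nxm : ‖xm - y₀‖ = r - t := by
    have : xm - y₀ = (r - t) • e := by rw [sub_smul, ← hev, hxm]; abel
    rw [this, norm_smul, he, mul_one, Real.norm_of_nonneg (by linarith)]
  have sp : W.s xp y₀ = (r + t) * √(G + dp) := by
    rw [Weight.s, nxp, hG, hdp]; congr 2; ring
  have sm : W.s xm y₀ = (r - t) * √(G + dm) := by
    rw [Weight.s, nxm, hG, hdm]; congr 2; ring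
  have s0 : W.s x₀ y₀ = r * √G := rfl
  have Gp : 0 ≤ G + dp := by linarith [(abs_le.1 bp).1]
  have Gm : 0 ≤ G + dm := by linarith [(abs_le.1 bm).1]
  have up := sqrt_add_le hG0 Gp
  have um := sqrt_add_le hG0 Gm
  have hsum : W.s xp y₀ + W.s xm y₀ - 2 * W.s x₀ y₀ ≤ 2 * W.B / √(2 * W.γ₀) * t ^ 2 := by
    have a1 : W.s xp y₀ ≤ (r + t) * (√G + dp / (2 * √G)) := by
      rw [sp]; gcongr
    have a2 : W.s xm y₀ ≤ (r - t) * (√G + dm / (2 * √G)) := by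
      rw [sm]
      have : 0 ≤ r - t := by linarith
      gcongr
    have a3 : (r + t) * (√G + dp / (2 * √G)) + (r - t) * (√G + dm / (2 * √G)) - 2 * (r * √G)
        = (r * (dp + dm) + t * (dp - dm)) / (2 * √G) := by ring
    have a4 : r * (dp + dm) + t * (dp - dm) ≤ 4 * W.B * t ^ 2 := by
      have b1 : r * (dp + dm) ≤ r * (2 * (W.B * t ^ 2)) := by gcongr
      have b2 : r * (2 * (W.B * t ^ 2)) ≤ 1 * (2 * (W.B * t ^ 2)) := by gcongr
      have b3 : t * (dp - dm) ≤ t * (2 * (W.B * t)) := by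
        gcongr; linarith [(abs_le.1 bp).2, (abs_le.1 bm).1]
      nlinarith
    have a5 : (r * (dp + dm) + t * (dp - dm)) / (2 * √G) ≤ 4 * W.B * t ^ 2 / (2 * √(2 * W.γ₀)) := by
      calc _ ≤ 4 * W.B * t ^ 2 / (2 * √G) := by gcongr
        _ ≤ _ := by gcongr
    have a6 : 4 * W.B * t ^ 2 / (2 * √(2 * W.γ₀)) = 2 * W.B / √(2 * W.γ₀) * t ^ 2 := by
      field_simp; ring
    rw [s0]
    linarith
  have hlow : t * √G / 2 ≤ W.s xp y₀ - W.s x₀ y₀ := by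
    have b0 := (abs_le.1 (abs_sqrt_sub_le hG0 Gp)).1
    rw [add_sub_cancel_left] at b0
    have b1 : |dp| / √G ≤ W.B * t / √G := by gcongr
    have b2 : (r + t) * (√G - W.B * t / √G) ≤ (r + t) * √(G + dp) := by
      gcongr; linarith
    have b3 : (r + t) * (W.B * t / √G) ≤ t * √G / 2 := by
      rw [mul_div_assoc', div_le_iff₀ hsG]
      have : t * √G / 2 * √G = t * G / 2 := by linear_combination (t / 2) * hsq
      rw [this]
      have : (r + t) * (W.B * t) = t * (W.B * r + W.B * t) := by ring
      rw [this, mul_div_assoc]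
      exact mul_le_mul_of_nonneg_left (by linarith) ht.le
    rw [sp, s0]
    have b4 : (r + t) * (√G - W.B * t / √G) = r * √G + t * √G - (r + t) * (W.B * t / √G) := by ring
    linarith only [b2, b3, b4]
  have T1 := prof_tangent_strict (w₁ := w₁) hw₀.le h1.le hs₀
    (by have : 0 ≤ t * √G / 2 := by positivity
        linarith) h2.le
  have T2 := prof_tangent (W.s_nonneg xm y₀) hw₁ hw₀.le hs₀.le hw2
  rw [← hw₀d] at T1 T2
  have c1 : W.γ₀ / (180 * w₀ ^ 3) * t ^ 2 ≤ (W.s xp y₀ - W.s x₀ y₀) ^ 2 / (90 * w₀ ^ 3) := by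
    have : (t * √G / 2) ^ 2 ≤ (W.s xp y₀ - W.s x₀ y₀) ^ 2 := by gcongr
    have h3 : (t * √G / 2) ^ 2 = t ^ 2 * G / 4 := by rw [div_pow, mul_pow, hsq]; norm_num
    rw [h3] at this
    have h4 : t ^ 2 * (2 * W.γ₀) ≤ t ^ 2 * G := by gcongr
    calc W.γ₀ / (180 * w₀ ^ 3) * t ^ 2 = (t ^ 2 * (2 * W.γ₀) / 4) / (90 * w₀ ^ 3) := by
          field_simp; ring
      _ ≤ _ := by gcongr; linarith
  have c2 : 2 * W.B / √(2 * W.γ₀) ≤ W.γ₀ / (360 * w₀ ^ 3) := by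
    rw [div_le_div_iff₀ hg (by positivity)]
    have : w₀ ^ 3 ≤ w₁ := by
      calc w₀ ^ 3 ≤ w₀ := pow_le_of_le_one hw₀0.le (by linarith) (by norm_num)
        _ ≤ w₁ := hw₀.le
    calc 2 * W.B * (360 * w₀ ^ 3) ≤ 2 * W.B * (360 * w₁) := by gcongr
      _ ≤ _ := by linarith
  have c3 : (1 - 5 / 4 * w₀) * (W.s xp y₀ + W.s xm y₀ - 2 * W.s x₀ y₀) ≤
      W.γ₀ / (360 * w₀ ^ 3) * t ^ 2 := by
    have h5 : 0 ≤ 1 - 5 / 4 * w₀ := by linarith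
    calc _ ≤ (1 - 5 / 4 * w₀) * (2 * W.B / √(2 * W.γ₀) * t ^ 2) := by gcongr
      _ ≤ 1 * (2 * W.B / √(2 * W.γ₀) * t ^ 2) := by gcongr; linarith
      _ ≤ _ := by rw [one_mul]; gcongr
  have c4 : W.γ₀ / (180 * w₀ ^ 3) * t ^ 2 = 2 * (W.γ₀ / (360 * w₀ ^ 3) * t ^ 2) := by
    field_simp; norm_num
  have c5 : prof w₁ (W.s xp y₀) + prof w₁ (W.s xm y₀) - 2 * prof w₁ (W.s x₀ y₀) ≤
      -(W.γ₀ / (360 * w₀ ^ 3) * t ^ 2) := by linarith only [T1, T2, c1, c3, c4]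
  have := mul_le_mul_of_nonneg_left c5 hk
  unfold Weight.Ψ
  linarith only [this]

/-- The penalization is Lipschitz in its first variable, with a constant depending on the
weight only. -/
lemma Weight.exists_lip_s : ∃ C > 0, ∀ x ∈ S.K, ∀ x' ∈ S.K, ∀ y ∈ S.K,
    |W.s x y - W.s x' y| ≤ C * ‖x - x'‖ := by
  obtain ⟨Dm, hDm⟩ := Metric.isBounded_iff.1 S.isCompact_K.isBounded
  have hB := W.one_le
  have hg := W.g_pos
  refine ⟨2 + |Dm| * (W.B / √(2 * W.γ₀)), by positivity, fun x hx x' hx' y hy => ?_⟩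
  have h1 : |√(W.γ x + W.γ y) - √(W.γ x' + W.γ y)| ≤ W.B / √(2 * W.γ₀) * ‖x - x'‖ := by
    have hp := W.pos
    refine (abs_sqrt_sub_le (by linarith [W.sum_pos hx' hy]) (by linarith [W.sum_pos hx hy])).trans ?_
    rw [add_sub_add_right_eq_sub, div_mul_eq_mul_div]
    exact div_le_div₀ (by positivity) (W.lip x' hx' x hx) hg (W.sqrt_lower hx' hy)
  have h2 : W.s x y - W.s x' y = (‖x - y‖ - ‖x' - y‖) * √(W.γ x + W.γ y)
      + ‖x' - y‖ * (√(W.γ x + W.γ y) - √(W.γ x' + W.γ y)) := by unfold Weight.s; ring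
  have h3 : |‖x - y‖ - ‖x' - y‖| ≤ ‖x - x'‖ := by
    have := abs_norm_sub_norm_le (x - y) (x' - y)
    rwa [sub_sub_sub_cancel_right] at this
  have h4 : ‖x' - y‖ ≤ |Dm| := by
    rw [← dist_eq_norm]; exact (hDm hx' hy).trans (le_abs_self _)
  rw [h2]
  refine (abs_add_le _ _).trans ?_
  rw [abs_mul, abs_mul, abs_of_nonneg (Real.sqrt_nonneg _), abs_of_nonneg (norm_nonneg (x' - y)),
    add_mul]
  have h5 := W.sqrt_upper hx hy
  refine add_le_add ?_ ?_
  · calc _ ≤ ‖x - x'‖ * 2 := by gcongr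
      _ = _ := by ring
  · calc _ ≤ |Dm| * (W.B / √(2 * W.γ₀) * ‖x - x'‖) := by gcongr
      _ = _ := by ring

end Setup

/-! ### Touching points of the sup-convolution -/

namespace Setup

variable {N : ℕ} {S : Setup N} (W : S.Weight)

/-- `ψ'(s₀)/(2s₀)`, the derivative of the penalization with respect to the squared distance. -/
def Weight.h (k : ℝ) (x₀ y₀ : EN N) : ℝ := k * (1 - 5 / 4 * rt4 (W.s x₀ y₀)) / (2 * W.s x₀ y₀)

/-- Minus the gradient of the penalization in the first variable. -/
def Weight.p (k : ℝ) (x₀ y₀ : EN N) : EN N :=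
  -(W.h k x₀ y₀ • ((2 * (W.γ x₀ + W.γ y₀)) • (x₀ - y₀) + ‖x₀ - y₀‖ ^ 2 • W.D x₀))

/-- The gradient of the penalization in the second variable. -/
def Weight.p' (k : ℝ) (x₀ y₀ : EN N) : EN N :=
  W.h k x₀ y₀ • ((2 * (W.γ y₀ + W.γ x₀)) • (y₀ - x₀) + ‖y₀ - x₀‖ ^ 2 • W.D y₀)

/-- The situation at a point where the supremum defining the sup-convolution `U` of `u` is
attained at `y₀`. -/
structure Weight.Touch (k w₁ : ℝ) (u U : EN N → ℝ) (x₀ y₀ : EN N) : Prop where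
  hk : 0 < k
  hw₁ : 0 < w₁
  hw2 : w₁ ≤ 2 / 5
  hx₀ : x₀ ∈ S.K
  hy₀ : y₀ ∈ S.K
  ne : x₀ ≠ y₀
  hw₀ : rt4 (W.s x₀ y₀) < w₁
  le : ∀ x ∈ S.K, ∀ y ∈ S.K, u y - W.Ψ k w₁ x y ≤ U x
  eq : U x₀ = u y₀ - W.Ψ k w₁ x₀ y₀

variable {W} {k w₁ : ℝ} {u U : EN N → ℝ} {x₀ y₀ : EN N}

lemma Weight.Touch.r_pos (t : W.Touch k w₁ u U x₀ y₀) : 0 < ‖x₀ - y₀‖ :=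
  norm_pos_iff.2 (sub_ne_zero.2 t.ne)

lemma Weight.Touch.s_pos (t : W.Touch k w₁ u U x₀ y₀) : 0 < W.s x₀ y₀ :=
  mul_pos t.r_pos (W.g_pos.trans_le (W.sqrt_lower t.hx₀ t.hy₀))

lemma Weight.Touch.h_pos (t : W.Touch k w₁ u U x₀ y₀) : 0 < W.h k x₀ y₀ := by
  have := t.s_pos
  have := t.hk
  have h1 : 0 < 1 - 5 / 4 * rt4 (W.s x₀ y₀) := by linarith [t.hw₀, t.hw2]
  unfold Weight.h; positivity

lemma Weight.Touch.Ψ_le (t : W.Touch k w₁ u U x₀ y₀) {x y : EN N} (hx : x ∈ S.K) (hy : y ∈ S.K) :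
    W.Ψ k w₁ x y ≤ W.Ψ k w₁ x₀ y₀ + W.h k x₀ y₀ * (W.q x y - W.q x₀ y₀) :=
  W.Ψ_le t.hk.le t.hw₁.le t.hw2 t.hx₀ t.hy₀ hx hy t.s_pos t.hw₀.le

lemma Weight.Touch.subJet (t : W.Touch k w₁ u U x₀ y₀) :
    ∃ c : ℝ, SubJet S.K U x₀ (W.p k x₀ y₀) (c • 1) := by
  refine ⟨-2 * (W.h k x₀ y₀ * (3 + ‖x₀ - y₀‖ ^ 2 * (3 * W.B ^ 2))), fun ε hε => ?_⟩
  filter_upwards [self_mem_nhdsWithin] with x hx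
  have h1 := t.le x hx y₀ t.hy₀
  have h2 := t.Ψ_le hx t.hy₀
  have h3 := W.q_le t.hx₀ t.hy₀ hx t.hy₀
  simp only [sub_self, sub_zero, inner_zero_right, norm_zero, add_zero] at h3
  have h4 := mul_le_mul_of_nonneg_left h3 t.h_pos.le
  rw [qf_smul, qf_one, t.eq, Weight.p, inner_neg_left, real_inner_smul_left, inner_add_left,
    real_inner_smul_left, real_inner_smul_left]
  have : 0 ≤ ε * ‖x - x₀‖ ^ 2 := by positivity
  linarith

lemma Weight.Touch.boundary (t : W.Touch k w₁ u U x₀ y₀) (hx : x₀ ∈ frontier S.Ω) {P : EN N}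
    {X : Mat N} (hj : SupJet S.K U x₀ P X) : ¬ 0 < ⟪P, S.nv x₀⟫ := by
  obtain ⟨c, hc⟩ := t.subJet
  have h1 := S.jets_boundary hx hj hc
  have h2 := W.bdry x₀ hx y₀ t.hy₀ t.ne.symm
  rw [Weight.p, inner_neg_left, real_inner_smul_left] at h1
  have := mul_pos t.h_pos h2
  linarith

lemma Weight.Touch.p_eq (t : W.Touch k w₁ u U x₀ y₀) (hx : x₀ ∈ S.Ω) {P : EN N}
    {X : Mat N} (hj : SupJet S.K U x₀ P X) : P = W.p k x₀ y₀ := by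
  obtain ⟨c, hc⟩ := t.subJet
  exact (S.jets_interior hx hj hc).1

lemma Weight.Touch.p'_boundary (t : W.Touch k w₁ u U x₀ y₀) (hy : y₀ ∈ frontier S.Ω) :
    0 < ⟪W.p' k x₀ y₀, S.nv y₀⟫ := by
  rw [Weight.p', real_inner_smul_left]
  exact mul_pos t.h_pos (W.bdry y₀ hy x₀ t.hx₀ t.ne)

/-- Transfer of a superjet of the sup-convolution at `x₀` to a superjet of `u` at the maximizer,
obtained by moving `x = x₀ + (1 - τX)(y - y₀)` along with `y`. -/
lemma Weight.Touch.transfer (t : W.Touch k w₁ u U x₀ y₀) (hx : x₀ ∈ S.Ω) {X : Mat N}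
    (hX : X.IsSymm) (hj : SupJet S.K U x₀ (W.p k x₀ y₀) X) {τ : ℝ} (hτ : 0 ≤ τ)
    (hτ1 : τ * (matNorm X + 6 * W.h k x₀ y₀) ≤ 1) :
    SupJet S.K u y₀ (W.p' k x₀ y₀)
      (X - τ • (X * X) + (30 * W.h k x₀ y₀ * ‖x₀ - y₀‖ ^ 2 * W.B ^ 2) • 1) := by
  intro ε hε
  have hh := t.h_pos
  have hn := matNorm_nonneg X
  have hB := W.one_le
  set h := W.h k x₀ y₀ with hhd
  set n := matNorm X with hnd
  have hτn : τ * n ≤ 1 := by nlinarith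
  set m : EN N → EN N := fun y => x₀ + ((y - y₀) - τ • op X (y - y₀)) with hm
  have hmc : Continuous m := by fun_prop
  have hmt : Tendsto m (𝓝[S.K] y₀) (𝓝[S.K] x₀) := by
    rw [S.nhdsWithin_K hx]
    have := (hmc.tendsto y₀).mono_left (nhdsWithin_le_nhds (s := S.K))
    simpa [hm] using this
  have hmK : ∀ᶠ y in 𝓝[S.K] y₀, m y ∈ S.K := hmt.eventually self_mem_nhdsWithin
  filter_upwards [hmt.eventually (hj (ε / 4) (by positivity)), hmK, self_mem_nhdsWithin]
    with y h1 hxK hyK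
  set ξ := y - y₀ with hξ
  set z := op X ξ with hz
  have hη : m y - x₀ = ξ - τ • z := by simp only [hm]; rw [add_sub_cancel_left]
  have h2 := t.le (m y) hxK y hyK
  have h3 := t.Ψ_le hxK hyK
  have h4 := mul_le_mul_of_nonneg_left (W.q_le t.hx₀ t.hy₀ hxK hyK) hh.le
  rw [hη] at h1 h4
  rw [← hξ] at h4
  have hω : ξ - τ • z - ξ = -(τ • z) := by abel
  rw [hω, norm_neg, norm_smul, Real.norm_of_nonneg hτ] at h4
  have hzn : ‖z‖ ≤ n * ‖ξ‖ := norm_op_le X ξ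
  have hηn : ‖ξ - τ • z‖ ^ 2 ≤ 4 * ‖ξ‖ ^ 2 := by
    have a1 : ‖ξ - τ • z‖ ≤ 2 * ‖ξ‖ := by
      refine (norm_sub_le _ _).trans ?_
      rw [norm_smul, Real.norm_of_nonneg hτ]
      have : τ * ‖z‖ ≤ τ * (n * ‖ξ‖) := by gcongr
      have : τ * n * ‖ξ‖ ≤ 1 * ‖ξ‖ := by gcongr
      linarith
    calc _ ≤ (2 * ‖ξ‖) ^ 2 := by gcongr
      _ = _ := by ring
  -- the quadratic form of `X` at `(1 - τX)ξ`
  have hq : qf X (ξ - τ • z) ≤ qf X ξ - 2 * τ * ‖z‖ ^ 2 + τ ^ 2 * n * ‖z‖ ^ 2 := by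
    rw [sub_eq_add_neg, qf_add_vec hX, ← hz, inner_neg_right, real_inner_smul_right,
      real_inner_self_eq_norm_sq, qf_neg_vec, qf_smul_vec]
    have := mul_le_mul_of_nonneg_left (le_of_abs_le (abs_qf_le X z)) (sq_nonneg τ)
    linarith
  have hXX : qf (X * X) ξ = ‖z‖ ^ 2 := by
    rw [qf, op_mul, ← real_inner_self_eq_norm_sq, hz]
    exact (op_symm hX _ _).symm
  rw [qf_add, qf_sub, qf_smul, qf_smul, qf_one, hXX]
  have hkey : τ ^ 2 * n * ‖z‖ ^ 2 / 2 + h * (3 * (τ * ‖z‖) ^ 2) ≤ τ * ‖z‖ ^ 2 / 2 := by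
    have : τ * ‖z‖ ^ 2 * (τ * (n + 6 * h)) ≤ τ * ‖z‖ ^ 2 * 1 := by gcongr
    nlinarith
  have hr : h * (‖x₀ - y₀‖ ^ 2 * (3 * W.B ^ 2) * (‖ξ - τ • z‖ ^ 2 + ‖ξ‖ ^ 2)) ≤
      h * (‖x₀ - y₀‖ ^ 2 * (3 * W.B ^ 2) * (5 * ‖ξ‖ ^ 2)) := by
    gcongr; linarith
  have hε' : ε / 4 * ‖ξ - τ • z‖ ^ 2 ≤ ε * ‖ξ‖ ^ 2 := by nlinarith
  have hp' : ⟪W.p' k x₀ y₀, ξ⟫ = h * (-2 * (W.γ x₀ + W.γ y₀) * ⟪x₀ - y₀, ξ⟫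
      + ‖x₀ - y₀‖ ^ 2 * ⟪W.D y₀, ξ⟫) := by
    rw [Weight.p', real_inner_smul_left, inner_add_left, real_inner_smul_left,
      real_inner_smul_left, ← neg_sub x₀ y₀, inner_neg_left, norm_neg]
    ring
  have hp : ⟪W.p k x₀ y₀, ξ - τ • z⟫ = -(h * (2 * (W.γ x₀ + W.γ y₀) *
      (⟪x₀ - y₀, ξ⟫ + ⟪x₀ - y₀, -(τ • z)⟫) + ‖x₀ - y₀‖ ^ 2 * ⟪W.D x₀, ξ - τ • z⟫)) := by
    rw [Weight.p, inner_neg_left, real_inner_smul_left, inner_add_left, real_inner_smul_left,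
      real_inner_smul_left, sub_eq_add_neg ξ, inner_add_right (x₀ - y₀)]
  have heq := t.eq
  rw [hp] at h1
  rw [hp']
  linarith

/-- Lower bound of a superjet of the sup-convolution. -/
lemma Weight.Touch.norm_lower (t : W.Touch k w₁ u U x₀ y₀) (hx : x₀ ∈ S.Ω)
    (hwB : 720 * W.B * w₁ ≤ W.γ₀ * √(2 * W.γ₀)) (hr : W.B * ‖x₀ - y₀‖ ≤ W.γ₀ / 4)
    (hr1 : ‖x₀ - y₀‖ ≤ 1) {P : EN N} {X : Mat N} (hj : SupJet S.K U x₀ P X) :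
    k * (W.γ₀ / (360 * rt4 (W.s x₀ y₀) ^ 3)) ≤ matNorm X := by
  have hr0 := t.r_pos
  set e := ‖x₀ - y₀‖⁻¹ • (x₀ - y₀) with he
  have he1 : ‖e‖ = 1 := by
    rw [he, norm_smul, norm_inv, norm_norm, inv_mul_cancel₀ hr0.ne']
  have hev : x₀ - y₀ = ‖x₀ - y₀‖ • e := by rw [he, smul_smul, mul_inv_cancel₀ hr0.ne', one_smul]
  have hsd := W.second_diff t.hk.le t.hw₁.le t.hw2 hwB hx t.hy₀ he1 hev hr0 hr hr1 t.s_pos t.hw₀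
  refine le_of_forall_pos_le_add fun ε hε => ?_
  have hjl := hj (ε / 2) (by positivity)
  have ht : ∀ w : EN N, Tendsto (fun t : ℝ => x₀ + t • w) (𝓝[>] 0) (𝓝[S.K] x₀) := by
    intro w
    rw [S.nhdsWithin_K hx]
    have : Continuous fun t : ℝ => x₀ + t • w := by fun_prop
    have h2 := (this.tendsto 0).mono_left (nhdsWithin_le_nhds (s := Ioi 0))
    simpa using h2
  obtain ⟨τ, h1, h2, h3, h4, h5, h6⟩ := (hsd.and (((ht e).eventually hjl).and
    (((ht (-e)).eventually hjl).and (((ht e).eventually self_mem_nhdsWithin).and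
    (((ht (-e)).eventually self_mem_nhdsWithin).and self_mem_nhdsWithin))))).exists
  have hτ : 0 < τ := h6
  have a1 := t.le _ h4 y₀ t.hy₀
  have a2 := t.le _ h5 y₀ t.hy₀
  have heq := t.eq
  simp only [smul_neg, ← sub_eq_add_neg] at h3 a2
  rw [add_sub_cancel_left, norm_smul, he1, qf_smul_vec] at h2
  rw [sub_sub_cancel_left, norm_neg, norm_smul, he1, inner_neg_right, qf_neg_vec, qf_smul_vec] at h3
  rw [Real.norm_of_nonneg hτ.le, mul_one] at h2 h3
  have hX : qf X e ≤ matNorm X := by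
    have := le_of_abs_le (abs_qf_le X e)
    rwa [he1, one_pow, mul_one] at this
  have hτ2 : 0 < τ ^ 2 := by positivity
  have hXτ := mul_le_mul_of_nonneg_left hX hτ2.le
  refine le_of_mul_le_mul_left ?_ hτ2
  linarith

end Setup

/-! ### Lower bound for the operator at touching points -/

namespace Setup

variable {N : ℕ} {S : Setup N} {W : S.Weight} {k w₁ : ℝ} {u U : EN N → ℝ} {x₀ y₀ : EN N}

/-- Smallness and largeness requirements on the parameters of the penalization. -/
structure Weight.Param (W : S.Weight) (k w₁ : ℝ) : Prop where
  hw₁ : 0 < w₁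
  hw2 : w₁ ≤ 2 / 5
  hwB : 720 * W.B * w₁ ≤ W.γ₀ * √(2 * W.γ₀)
  hwC : 2 * (S.C₁ + S.C₂) * √(W.B / (W.γ₀ * √(2 * W.γ₀))) * w₁ ≤ S.a * (W.γ₀ / 360) / 8
  hwQ : (2 ^ |S.α| * S.A * N * (30 * W.B ^ 2 / √(2 * W.γ₀) ^ 2)
    + (6 * 2 ^ |S.α| * S.Bb + 3 * S.Bb + 6)) * w₁ ≤ S.a * (W.γ₀ / 360) ^ 2 / 8
  hk : 1 < k * (w₁ ^ 4 - w₁ ^ 5)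
  hk4 : 4 ≤ k * √(2 * W.γ₀)

lemma Weight.exists_param (W : S.Weight) : ∃ k w₁, W.Param k w₁ := by
  have hg := W.g_pos
  have hγ := W.pos
  have ha := S.ha
  have ev : ∀ {c d : ℝ}, 0 < d → ∀ᶠ w in 𝓝[>] (0 : ℝ), c * w ≤ d := by
    intro c d hd
    have : Continuous fun w : ℝ => c * w := by fun_prop
    have h := this.tendsto 0
    simp only [mul_zero] at h
    exact ((h.eventually (gt_mem_nhds hd)).filter_mono nhdsWithin_le_nhds).mono fun _ h => h.le
  obtain ⟨w, h1, h2, h3, h4, h5⟩ := ((ev (c := 1) (d := 2 / 5) (by norm_num)).and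
    ((ev (c := 720 * W.B) (d := W.γ₀ * √(2 * W.γ₀)) (by positivity)).and
    ((ev (c := 2 * (S.C₁ + S.C₂) * √(W.B / (W.γ₀ * √(2 * W.γ₀))))
      (d := S.a * (W.γ₀ / 360) / 8) (by positivity)).and
    ((ev (c := 2 ^ |S.α| * S.A * N * (30 * W.B ^ 2 / √(2 * W.γ₀) ^ 2)
        + (6 * 2 ^ |S.α| * S.Bb + 3 * S.Bb + 6))
      (d := S.a * (W.γ₀ / 360) ^ 2 / 8) (by positivity)).and self_mem_nhdsWithin)))).exists
  have hw : 0 < w := h5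
  rw [one_mul] at h1
  have hd : 0 < w ^ 4 - w ^ 5 := by
    have : w ^ 4 - w ^ 5 = w ^ 4 * (1 - w) := by ring
    rw [this]; exact mul_pos (by positivity) (by linarith)
  refine ⟨2 / (w ^ 4 - w ^ 5) + 4 / √(2 * W.γ₀), w, hw, h1, h2, h3, h4, ?_, ?_⟩
  · rw [add_mul, div_mul_cancel₀ _ hd.ne']
    have : 0 < 4 / √(2 * W.γ₀) * (w ^ 4 - w ^ 5) := by positivity
    linarith
  · rw [add_mul, div_mul_cancel₀ _ hg.ne']
    have : 0 < 2 / (w ^ 4 - w ^ 5) * √(2 * W.γ₀) := by positivity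
    linarith

lemma rpow_le_sqrt {r q : ℝ} (hr : 0 ≤ r) (hr1 : r ≤ 1) (hq : 1 / 2 < q) : r ^ q ≤ √r := by
  rw [Real.sqrt_eq_rpow]
  rcases hr.eq_or_lt with rfl | h
  · rw [Real.zero_rpow (by linarith), Real.zero_rpow (by norm_num)]
  · exact Real.rpow_le_rpow_of_exponent_ge h hr1 hq.le

set_option maxHeartbeats 1000000 in
/-- At a point of strict touching, the gradient and the operator evaluated at a superjet of the
sup-convolution are large. -/
lemma Weight.Touch.one_le_Op (t : W.Touch k w₁ u U x₀ y₀) (c : W.Param k w₁) (hx : x₀ ∈ S.Ω)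
    {P : EN N} {X : Mat N} (hX : X.IsSymm) (hj : SupJet S.K U x₀ P X)
    (hsub : ∀ p M, p ≠ 0 → M.IsSymm → SupJet S.K u y₀ p M →
      (y₀ ∈ frontier S.Ω → 0 < ⟪p, S.nv y₀⟫) → 0 ≤ S.Op y₀ p M + 1) :
    1 ≤ ‖P‖ ∧ 1 ≤ S.Op x₀ P X := by
  have hPe := t.p_eq hx hj
  subst hPe
  have hk := t.hk
  have hw₁ := c.hw₁
  have hw2 := c.hw2
  have hh := t.h_pos
  have hr0 := t.r_pos
  have hs0 := t.s_pos
  have hγ := W.pos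
  have hB := W.one_le
  have hg := W.g_pos
  have ha := S.ha
  have hσl := W.sqrt_lower t.hx₀ t.hy₀
  have hσu := W.sqrt_upper t.hx₀ t.hy₀
  have hγ1 : W.γ₀ ≤ 1 := (W.lo x₀ t.hx₀).trans (W.hi x₀ t.hx₀)
  have hG := W.sum_pos t.hx₀ t.hy₀
  have hσ2 := Real.sq_sqrt (show 0 ≤ W.γ x₀ + W.γ y₀ by linarith)
  have hsd : W.s x₀ y₀ = ‖x₀ - y₀‖ * √(W.γ x₀ + W.γ y₀) := rfl
  have hw4 := rt4_pow hs0.le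
  have hw0 := rt4_pos hs0
  have hww := t.hw₀
  have hhd : W.h k x₀ y₀ = k * (1 - 5 / 4 * rt4 (W.s x₀ y₀)) / (2 * W.s x₀ y₀) := rfl
  have hwC := c.hwC
  have hwQ := c.hwQ
  have hwB := c.hwB
  have hk4 := c.hk4
  have hpd : W.p k x₀ y₀ =
    -(W.h k x₀ y₀ • ((2 * (W.γ x₀ + W.γ y₀)) • (x₀ - y₀) + ‖x₀ - y₀‖ ^ 2 • W.D x₀)) := rfl
  have hpd' : W.p' k x₀ y₀ =
    W.h k x₀ y₀ • ((2 * (W.γ y₀ + W.γ x₀)) • (y₀ - x₀) + ‖y₀ - x₀‖ ^ 2 • W.D y₀) := rfl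
  have hDx := W.norm_D x₀ t.hx₀
  have hDy := W.norm_D y₀ t.hy₀
  set h := W.h k x₀ y₀ with hhdef
  set r := ‖x₀ - y₀‖ with hrdef
  set s := W.s x₀ y₀ with hsdef
  set w := rt4 s with hwdef
  set σ := √(W.γ x₀ + W.γ y₀) with hσdef
  set G := W.γ x₀ + W.γ y₀ with hGdef
  set g0 := √(2 * W.γ₀) with hg0
  have hw1 : w ≤ 1 := by linarith only [hww, hw2]
  have hσ0 : 0 < σ := hg.trans_le hσl
  have hrw : r * g0 ≤ w ^ 4 := by
    rw [hw4, hsd]; gcongr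
  have hw41 : w ^ 4 ≤ w₁ := by
    have : w ^ 4 ≤ w ^ 1 := pow_le_pow_of_le_one hw0.le hw1 (by norm_num)
    rw [pow_one] at this
    linarith only [this, hww]
  have hBr' : 720 * (W.B * r) ≤ W.γ₀ := by
    refine le_of_mul_le_mul_right ?_ hg
    have e : 720 * W.B * (r * g0) ≤ 720 * W.B * w₁ := by gcongr; exact hrw.trans hw41
    linarith only [e, hwB]
  have hBr : W.B * r ≤ W.γ₀ / 4 := by
    have : 0 ≤ W.B * r := by positivity
    linarith only [hBr', this]
  have hr1 : r ≤ 1 := by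
    have : 1 * r ≤ W.B * r := by gcongr
    linarith only [this, hBr, hγ1]
  have hn := t.norm_lower hx hwB hBr hr1 hj
  set n := matNorm X with hndef
  rw [← hsdef, ← hwdef] at hn
  -- bounds for `h`
  have hhl : k / (4 * s) ≤ h := by
    rw [hhd, div_le_div_iff₀ (by positivity) (by positivity)]
    have : k * s * 2 ≤ k * s * (4 * (1 - 5 / 4 * w)) := by
      gcongr; linarith only [hww, hw2]
    linarith only [this]
  have hhu : h ≤ k / (2 * s) := by
    rw [hhd]; gcongr
    have : k * (1 - 5 / 4 * w) ≤ k * 1 := by gcongr; linarith only [hw0]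
    linarith only [this]
  have hGr : h * G * r = h * s * σ := by rw [← hσ2, hsd]; ring
  have hhs : k / 4 ≤ h * s := by
    have := mul_le_mul_of_nonneg_right hhl hs0.le
    have e : k / (4 * s) * s = k / 4 := by field_simp
    linarith only [this, e]
  have hhs' : h * s ≤ k / 2 := by
    have := mul_le_mul_of_nonneg_right hhu hs0.le
    have e : k / (2 * s) * s = k / 2 := by field_simp
    linarith only [this, e]
  have hGrl : 1 ≤ h * G * r := by
    rw [hGr]
    have : k / 4 * g0 ≤ h * s * σ := by gcongr
    linarith only [this, hk4]
  have hGru : h * G * r ≤ k := by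
    rw [hGr]
    have : h * s * σ ≤ k / 2 * 2 := by gcongr
    linarith only [this]
  have hG0 : 0 < G := by linarith only [hG, hγ]
  have hrem : h * (r ^ 2 * W.B) ≤ h * G * r / 2 := by
    have : h * r * (W.B * r) ≤ h * r * (G / 2) := by
      gcongr; linarith only [hBr, hG, hγ]
    linarith only [this]
  -- bounds for the gradients
  have hn1 : ‖h • (2 * G) • (x₀ - y₀)‖ = 2 * (h * G * r) := by
    rw [norm_smul, norm_smul, Real.norm_of_nonneg hh.le, Real.norm_of_nonneg (by positivity)]; ring
  have hn2 : ‖h • r ^ 2 • W.D x₀‖ ≤ h * (r ^ 2 * W.B) := by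
    rw [norm_smul, norm_smul, Real.norm_of_nonneg hh.le, Real.norm_of_nonneg (by positivity)]
    gcongr
  have hn2' : ‖h • r ^ 2 • W.D y₀‖ ≤ h * (r ^ 2 * W.B) := by
    rw [norm_smul, norm_smul, Real.norm_of_nonneg hh.le, Real.norm_of_nonneg (by positivity)]
    gcongr
  have hpl : h * G * r ≤ ‖W.p k x₀ y₀‖ := by
    rw [hpd, norm_neg, smul_add]
    have := norm_sub_le_norm_add (h • (2 * G) • (x₀ - y₀)) (h • r ^ 2 • W.D x₀)
    rw [hn1] at this
    linarith only [this, hn2, hrem, hGrl]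
  have hpu : ‖W.p k x₀ y₀‖ ≤ 3 * k := by
    rw [hpd, norm_neg, smul_add]
    have := norm_add_le (h • (2 * G) • (x₀ - y₀)) (h • r ^ 2 • W.D x₀)
    rw [hn1] at this
    linarith only [this, hn2, hrem, hGrl, hGru]
  have hp1 : 1 ≤ ‖W.p k x₀ y₀‖ := hGrl.trans hpl
  have hdiff : W.p' k x₀ y₀ - W.p k x₀ y₀ = h • r ^ 2 • W.D y₀ + h • r ^ 2 • W.D x₀ := by
    rw [hpd, hpd', norm_sub_rev, ← hrdef, add_comm (W.γ y₀), ← hGdef, ← neg_sub x₀ y₀, smul_neg]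
    simp only [smul_add, smul_neg]
    abel
  have hdn : ‖W.p' k x₀ y₀ - W.p k x₀ y₀‖ ≤ 2 * (h * (r ^ 2 * W.B)) := by
    rw [hdiff]
    refine (norm_add_le _ _).trans ?_
    linarith only [hn2, hn2']
  have hdr : ‖W.p' k x₀ y₀ - W.p k x₀ y₀‖ ≤ W.B * r / W.γ₀ * ‖W.p k x₀ y₀‖ := by
    have e1 : W.B * r / W.γ₀ * (h * G * r) ≤ W.B * r / W.γ₀ * ‖W.p k x₀ y₀‖ := by gcongr
    have e2 : W.B * r / W.γ₀ * (h * (2 * W.γ₀) * r) ≤ W.B * r / W.γ₀ * (h * G * r) := by gcongr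
    have e3 : W.B * r / W.γ₀ * (h * (2 * W.γ₀) * r) = 2 * (h * (r ^ 2 * W.B)) := by
      field_simp
    linarith only [hdn, e1, e2, e3]
  have hbr4 : W.B * r / W.γ₀ ≤ 1 / 4 := by
    rw [div_le_iff₀ hγ]; linarith only [hBr]
  have hpp : ‖W.p' k x₀ y₀ - W.p k x₀ y₀‖ ≤ ‖W.p k x₀ y₀‖ / 2 := by
    have : W.B * r / W.γ₀ * ‖W.p k x₀ y₀‖ ≤ 1 / 4 * ‖W.p k x₀ y₀‖ := by gcongr
    linarith only [hdr, this, hp1]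
  have hp'0 : W.p' k x₀ y₀ ≠ 0 := by
    intro h0
    rw [h0, zero_sub, norm_neg] at hpp
    linarith only [hpp, hp1]
  set R0 := √(W.B / (W.γ₀ * g0)) with hR0
  have hR0sq : R0 ^ 2 = W.B / (W.γ₀ * g0) := Real.sq_sqrt (by positivity)
  have hε1 : √(W.B * r / W.γ₀) ≤ R0 * w ^ 2 := by
    refine Real.sqrt_le_iff.2 ⟨by positivity, ?_⟩
    rw [mul_pow, hR0sq, show (w ^ 2) ^ 2 = w ^ 4 by ring]
    rw [div_mul_eq_mul_div, div_le_div_iff₀ hγ (by positivity)]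
    have : W.B * W.γ₀ * (r * g0) ≤ W.B * W.γ₀ * w ^ 4 := by gcongr
    linarith only [this]
  have hrr : r ≤ W.B * r / W.γ₀ := by
    rw [le_div_iff₀ hγ]
    have : r * W.γ₀ ≤ r * 1 := by gcongr
    have : 1 * r ≤ W.B * r := by gcongr
    linarith
  have hθ : r ^ S.θ ≤ R0 * w ^ 2 :=
    (rpow_le_sqrt hr0.le hr1 S.hF3.2.1.1).trans ((Real.sqrt_le_sqrt hrr).trans hε1)
  have hν : (‖W.p' k x₀ y₀ - W.p k x₀ y₀‖ / ‖W.p k x₀ y₀‖) ^ S.ν ≤ R0 * w ^ 2 := by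
    have hp0 : 0 < ‖W.p k x₀ y₀‖ := by linarith only [hp1]
    have e1 : ‖W.p' k x₀ y₀ - W.p k x₀ y₀‖ / ‖W.p k x₀ y₀‖ ≤ W.B * r / W.γ₀ := by
      rw [div_le_iff₀ hp0]; exact hdr
    refine (rpow_le_sqrt (by positivity) (by linarith only [e1, hbr4]) S.hF4.2.1.1).trans
      ((Real.sqrt_le_sqrt e1).trans hε1)
  -- the second order terms
  set c1 := W.γ₀ / 360 with hc1
  have hc10 : 0 < c1 := by positivity
  have hnc : k * c1 ≤ n * w ^ 3 := by
    have := mul_le_mul_of_nonneg_right hn (show 0 ≤ w ^ 3 by positivity)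
    have e : k * (W.γ₀ / (360 * w ^ 3)) * w ^ 3 = k * c1 := by rw [hc1]; field_simp
    rwa [e] at this
  have hn0 : 0 < n := by
    by_contra hcon
    push Not at hcon
    have h1 : n * w ^ 3 ≤ 0 * w ^ 3 := by gcongr
    have h2 : 0 < k * c1 := by positivity
    linarith only [h1, h2, hnc]
  have hτ0 : 0 < n + 6 * h := by positivity
  have h6 : (n + 6 * h) * (c1 * w) ≤ 4 * n := by
    have e1 : n * (c1 * w) ≤ n * (1 * 1) := by
      gcongr; rw [hc1]; linarith only [hγ1, hγ]
    have e2 : h * w ^ 4 ≤ k / 2 := by rw [hw4]; exact hhs'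
    have e3 : h * (c1 * w) ≤ n / 2 := by
      refine le_of_mul_le_mul_right ?_ (show 0 < w ^ 3 by positivity)
      have : c1 * (h * w ^ 4) ≤ c1 * (k / 2) := by gcongr
      linarith only [this, hnc]
    linarith only [e1, e3]
  have hτn2 : c1 / 4 * w * n ≤ (n + 6 * h)⁻¹ * n ^ 2 := by
    rw [inv_mul_eq_div, le_div_iff₀ hτ0]
    have := mul_le_mul_of_nonneg_left h6 hn0.le
    linarith only [this]
  have hμ : 30 * h * r ^ 2 * W.B ^ 2 ≤ 30 * W.B ^ 2 / g0 ^ 2 * k := by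
    rw [div_mul_eq_mul_div, le_div_iff₀ (by positivity)]
    have e1 : (r * g0) ^ 2 ≤ (w ^ 4) ^ 2 := by gcongr
    have e2 : h * (r * g0) ^ 2 ≤ k := by
      calc h * (r * g0) ^ 2 ≤ h * (w ^ 4) ^ 2 := by gcongr
        _ = h * s * w ^ 4 := by rw [← hw4]; ring
        _ ≤ k / 2 * 1 := by
          gcongr
          exact pow_le_one₀ hw0.le hw1
        _ ≤ k := by linarith only [hk]
    have := mul_le_mul_of_nonneg_left e2 (show 0 ≤ 30 * W.B ^ 2 by positivity)
    linarith only [this]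
  have hA := S.hA
  have hBb := S.Bb_nonneg
  have hC1 := S.hF3.1
  have hC2 := S.hF4.1
  have hDp : (0:ℝ) ≤ 2 ^ |S.α| * S.A * N := by positivity
  have hjet := t.transfer hx hX hj (τ := (n + 6 * h)⁻¹) (inv_nonneg.2 hτ0.le)
    (inv_mul_cancel₀ hτ0.ne').le
  refine ⟨hp1, ?_⟩
  refine core t.hx₀ t.hy₀ hX (τ := (n + 6 * h)⁻¹) (μ := 30 * h * r ^ 2 * W.B ^ 2)
    (ε := R0 * w ^ 2) (k := k) (inv_nonneg.2 hτ0.le) ?_ (by positivity) hp1 hpu hpp hθ hν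
    (hsub _ _ hp'0 ?_ hjet t.p'_boundary) ?_
  · rw [inv_mul_eq_div, div_le_one hτ0]; linarith only [hh]
  · exact (symm_conv hX _).add (symm_smul_one _)
  · set D0 := (2:ℝ) ^ |S.α| * S.A * N with hD0
    set Q2 := 6 * (2:ℝ) ^ |S.α| * S.Bb + 3 * S.Bb + 6 with hQ2
    set Q := D0 * (30 * W.B ^ 2 / g0 ^ 2) + Q2 with hQ
    have hQ0 : 0 ≤ Q := by positivity
    have e1 : D0 * (30 * h * r ^ 2 * W.B ^ 2) + Q2 * k ≤ Q * k := by
      have := mul_le_mul_of_nonneg_left hμ hDp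
      rw [hQ, add_mul]; linarith only [this]
    have e2 : Q * k ≤ S.a * c1 / 8 * (w * n) := by
      refine le_of_mul_le_mul_right ?_ (show 0 < w ^ 2 by positivity)
      have f1 : Q * w ^ 2 ≤ S.a * c1 ^ 2 / 8 := by
        have : w ^ 2 ≤ w ^ 1 := pow_le_pow_of_le_one hw0.le hw1 (by norm_num)
        rw [pow_one] at this
        have : Q * w ^ 2 ≤ Q * w₁ := by gcongr; linarith only [this, hww]
        linarith only [this, hwQ]
      have f2 := mul_le_mul_of_nonneg_right f1 hk.le
      have f3 := mul_le_mul_of_nonneg_left hnc (show 0 ≤ S.a * c1 / 8 by positivity)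
      linarith only [f2, f3]
    have e3 : 2 * (S.C₁ + S.C₂) * (R0 * w ^ 2) * n ≤ S.a * c1 / 8 * (w * n) := by
      have f1 : 2 * (S.C₁ + S.C₂) * R0 * w ≤ S.a * c1 / 8 := by
        have : 2 * (S.C₁ + S.C₂) * R0 * w ≤ 2 * (S.C₁ + S.C₂) * R0 * w₁ := by gcongr
        linarith only [this, hwC]
      have := mul_le_mul_of_nonneg_right f1 (show 0 ≤ w * n by positivity)
      linarith only [this]
    have e4 := mul_le_mul_of_nonneg_left hτn2 ha.le
    have e5 : S.a * (n + 6 * h)⁻¹ * n ^ 2 = S.a * ((n + 6 * h)⁻¹ * n ^ 2) := by ring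
    rw [e5]
    linarith only [e1, e2, e3, e4]

end Setup

/-! ### Regularization of subsolutions -/

namespace Setup

variable {N : ℕ} (S : Setup N)

/-- Regularization of subsolutions with values in `[-1, 0]`. -/
lemma exists_conv_one : ∃ C₀ > 0, ∀ (e : EN N → ℝ → ℝ) (u : EN N → ℝ) (m : ℝ), m ≤ 1 →
    UpperSemicontinuousOn u S.K → (∀ x ∈ S.K, -m ≤ u x ∧ u x ≤ 0) →
    (∀ x ∈ S.K, S.SubAt e u x) → (∀ z ∈ S.K, ∀ r, -m ≤ r → r ≤ 0 → |e z r| ≤ 1) →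
    ∃ U : EN N → ℝ, (∀ x ∈ S.K, u x ≤ U x ∧ U x ≤ 0) ∧
      (∀ x ∈ S.K, ∀ y ∈ S.K, |U x - U y| ≤ C₀ * ‖x - y‖) ∧ ∀ x ∈ S.K, S.SubAt e U x := by
  obtain ⟨W⟩ := S.exists_weight
  obtain ⟨k, w₁, c⟩ := W.exists_param
  obtain ⟨Cs, hCs, hlip⟩ := W.exists_lip_s
  have hw₁ := c.hw₁
  have hw2 := c.hw2
  have hk : 0 < k := by
    by_contra hcon
    push Not at hcon
    have : k * √(2 * W.γ₀) ≤ 0 := mul_nonpos_of_nonpos_of_nonneg hcon (Real.sqrt_nonneg _)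
    linarith [c.hk4]
  refine ⟨k * Cs, by positivity, fun e u m hm hu hb hsub he => ?_⟩
  have hΨc : ∀ x, Continuous fun y => W.Ψ k w₁ x y := fun x => by
    unfold Weight.Ψ
    exact continuous_const.mul ((continuous_prof w₁).comp (W.continuous_s' x))
  have hΨ0 : ∀ x, W.Ψ k w₁ x x = 0 := fun x => by
    unfold Weight.Ψ Weight.s
    rw [sub_self, norm_zero, zero_mul, prof_zero hw₁.le, mul_zero]
  have hΨn : ∀ x y, 0 ≤ W.Ψ k w₁ x y := fun x y =>
    mul_nonneg hk.le (prof_nonneg hw₁.le (by linarith))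
  have hmax : ∀ x, ∃ y ∈ S.K, ∀ y' ∈ S.K, u y' - W.Ψ k w₁ x y' ≤ u y - W.Ψ k w₁ x y := by
    intro x
    refine exists_isMax (u := fun y => u y - W.Ψ k w₁ x y) S.isCompact_K S.nonempty_K ?_
    have : UpperSemicontinuousOn (fun y => -W.Ψ k w₁ x y) S.K :=
      ((hΨc x).neg).continuousOn.upperSemicontinuousOn
    simpa [sub_eq_add_neg] using hu.add this
  choose Y hYK hY using hmax
  set U : EN N → ℝ := fun x => u (Y x) - W.Ψ k w₁ x (Y x) with hU
  have hUb : ∀ x ∈ S.K, u x ≤ U x ∧ U x ≤ 0 := fun x hx => by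
    refine ⟨?_, ?_⟩
    · have := hY x x hx
      rwa [hΨ0, sub_zero] at this
    · have h1 := (hb _ (hYK x)).2
      have h2 := hΨn x (Y x)
      simp only [hU]; linarith
  have hw : ∀ x ∈ S.K, rt4 (W.s x (Y x)) < w₁ := by
    intro x hx
    by_contra hcon
    push Not at hcon
    have h1 : W.Ψ k w₁ x (Y x) = k * (w₁ ^ 4 - w₁ ^ 5) := by
      rw [Weight.Ψ, prof, min_eq_right hcon]
    have h2 := (hUb x hx).1
    have h3 := (hb x hx).1
    have h4 := (hb _ (hYK x)).2
    have h5 := c.hk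
    simp only [hU] at h2
    linarith
  have hlipΨ : ∀ x ∈ S.K, ∀ x' ∈ S.K, ∀ y ∈ S.K,
      W.Ψ k w₁ x' y ≤ W.Ψ k w₁ x y + k * Cs * ‖x - x'‖ := by
    intro x hx x' hx' y hy
    have h1 := prof_lip hw₁.le hw2 (W.s_nonneg x' y) (W.s_nonneg x y)
    have h2 := hlip x hx x' hx' y hy
    rw [abs_sub_comm] at h2
    have h3 := mul_le_mul_of_nonneg_left ((le_abs_self _).trans (h1.trans h2)) hk.le
    unfold Weight.Ψ
    linarith
  have hL1 : ∀ x ∈ S.K, ∀ y ∈ S.K, U x - U y ≤ k * Cs * ‖x - y‖ := by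
    intro x hx y hy
    have h1 := hY y (Y x) (hYK x)
    have h2 := hlipΨ x hx y hy (Y x) (hYK x)
    simp only [hU]; linarith
  refine ⟨U, hUb, fun x hx y hy => ?_, fun x hx => ?_⟩
  · rw [abs_le]
    have h1 := hL1 x hx y hy
    have h2 := hL1 y hy x hx
    rw [norm_sub_rev] at h2
    exact ⟨by linarith, h1⟩
  · by_cases hxy : x = Y x
    · refine (hsub x hx).mono ?_ ?_
      · simp only [hU]; rw [← hxy, hΨ0, sub_zero]
      · filter_upwards [self_mem_nhdsWithin] with y hy using (hUb y hy).1
    · have t : W.Touch k w₁ u U x (Y x) :=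
        ⟨hk, hw₁, hw2, hx, hYK x, hxy, hw x hx, fun z _ y hy => hY z y hy, rfl⟩
      have hsub' : ∀ p M, p ≠ 0 → M.IsSymm → SupJet S.K u (Y x) p M →
          (Y x ∈ frontier S.Ω → 0 < ⟪p, S.nv (Y x)⟫) → 0 ≤ S.Op (Y x) p M + 1 := by
        intro p M hp hM hj hbd
        have h1 := (hsub _ (hYK x)).jet p M hp hM hj hbd
        have h2 := le_of_abs_le (he _ (hYK x) _ (hb _ (hYK x)).1 (hb _ (hYK x)).2)
        linarith
      refine ⟨fun p M hp hM hj hbd => ?_, fun hxΩ C hC => ?_⟩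
      · by_cases hf : x ∈ frontier S.Ω
        · exact absurd (hbd hf) (t.boundary hf hj)
        · have hxΩ : x ∈ S.Ω := (S.mem_cases hx).resolve_right hf
          have h1 := (t.one_le_Op c hxΩ hM hj hsub').2
          have h2 := (abs_le.1 (he x hx (U x) ((hb x hx).1.trans (hUb x hx).1) (hUb x hx).2)).1
          linarith
      · have hj := S.supJet_of_pow (u := U) (t := x) (z := x) (C := C) (by
          filter_upwards [hC] with y hy
          rw [sub_self, norm_zero, zero_pow (by have := S.hm; omega), mul_zero]
          linarith)
        have := (t.one_le_Op c hxΩ ((symm_smul_one _).add ((symm_outer _).smul _)) hj hsub').1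
        rw [sub_self, smul_zero, norm_zero] at this
        linarith

/-- Regularization of nonpositive subsolutions: every bounded nonpositive subsolution lies below a
Lipschitz continuous one, and the Lipschitz constant depends on the size of the data only. -/
lemma exists_conv : ∃ C₀ > 0, ∀ (e : EN N → ℝ → ℝ) (u : EN N → ℝ) (m L : ℝ), 0 < L → m ≤ L →
    UpperSemicontinuousOn u S.K → (∀ x ∈ S.K, -m ≤ u x ∧ u x ≤ 0) →
    (∀ x ∈ S.K, S.SubAt e u x) →
    (∀ z ∈ S.K, ∀ r, -m ≤ r → r ≤ 0 → |e z r| ≤ L ^ (S.α + 1)) →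
    ∃ U : EN N → ℝ, (∀ x ∈ S.K, u x ≤ U x ∧ U x ≤ 0) ∧
      (∀ x ∈ S.K, ∀ y ∈ S.K, |U x - U y| ≤ C₀ * L * ‖x - y‖) ∧ ∀ x ∈ S.K, S.SubAt e U x := by
  obtain ⟨C₀, hC₀, H⟩ := S.exists_conv_one
  refine ⟨C₀, hC₀, fun e u m L hL hm hu hb hsub he => ?_⟩
  have hLi : 0 < L⁻¹ := inv_pos.2 hL
  have hLp : 0 < L ^ (S.α + 1) := Real.rpow_pos_of_pos hL _
  have hLL : ∀ r, L * (L⁻¹ * r) = r := fun r => by field_simp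
  have g1 : UpperSemicontinuousOn (fun x => L⁻¹ * u x) S.K := by
    have hc : Continuous fun r : ℝ => L⁻¹ * r := by fun_prop
    exact hc.comp_upperSemicontinuousOn hu fun _ _ h => by dsimp only; gcongr
  have g2 : ∀ x ∈ S.K, -(L⁻¹ * m) ≤ L⁻¹ * u x ∧ L⁻¹ * u x ≤ 0 := by
    intro x hx
    refine ⟨?_, mul_nonpos_of_nonneg_of_nonpos hLi.le (hb x hx).2⟩
    have := mul_le_mul_of_nonneg_left (hb x hx).1 hLi.le
    linarith
  have g3 : ∀ x ∈ S.K, S.SubAt (fun z r => L⁻¹ ^ (S.α + 1) * e z (L * r))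
      (fun x => L⁻¹ * u x) x := by
    intro x hx
    refine SubAt.scale hx (hsub x hx) hLi ?_
    rw [hLL]
  have g4 : ∀ z ∈ S.K, ∀ r, -(L⁻¹ * m) ≤ r → r ≤ 0 →
      |L⁻¹ ^ (S.α + 1) * e z (L * r)| ≤ 1 := by
    intro z hz r hr hr0
    rw [abs_mul, abs_of_pos (Real.rpow_pos_of_pos hLi _), Real.inv_rpow hL.le,
      inv_mul_le_iff₀ hLp, mul_one]
    refine he z hz _ ?_ (mul_nonpos_of_nonneg_of_nonpos hL.le hr0)
    have := mul_le_mul_of_nonneg_left hr hL.le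
    rwa [← neg_mul_eq_mul_neg, ← mul_neg, mul_neg, hLL] at this
  obtain ⟨V, h1, h2, h3⟩ := H (fun z r => L⁻¹ ^ (S.α + 1) * e z (L * r)) (fun x => L⁻¹ * u x)
    (L⁻¹ * m) (by rw [inv_mul_le_iff₀ hL]; linarith) g1 g2 g3 g4
  refine ⟨fun x => L * V x, fun x hx => ⟨?_, ?_⟩, fun x hx y hy => ?_, fun x hx => ?_⟩
  · have := mul_le_mul_of_nonneg_left (h1 x hx).1 hL.le
    rwa [hLL] at this
  · exact mul_nonpos_of_nonneg_of_nonpos hL.le (h1 x hx).2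
  · rw [← mul_sub, abs_mul, abs_of_pos hL]
    have := mul_le_mul_of_nonneg_left (h2 x hx y hy) hL.le
    linarith
  · refine SubAt.scale hx (h3 x hx) hL ?_
    rw [Real.inv_rpow hL.le, ← mul_assoc, mul_inv_cancel₀ hLp.ne', one_mul]

end Setup

/-! ### Strong maximum principle -/

namespace Setup

variable {N : ℕ} {S : Setup N}

/-- At a boundary point on the surface of a ball contained in the domain, the radius points
outward. -/
lemma outward_of_ball {t z : EN N} {R : ℝ} (hR : 0 < R) (hball : ball t R ⊆ S.K)
    (hz : z ∈ frontier S.Ω) (hzR : ‖z - t‖ = R) : 0 < ⟪z - t, S.nv z⟫ := by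
  rw [S.inner_nv_pos hz]
  set g := S.gρ z with hg
  have hg0 : 0 < ‖g‖ := norm_pos_iff.2 (S.gρ_ne hz)
  set δ := R / (‖g‖ + 1) with hδ
  have hδ0 : 0 < δ := by positivity
  have hδR : δ * ‖g‖ < R := by
    rw [hδ, div_mul_eq_mul_div, div_lt_iff₀ (by positivity)]; nlinarith
  set w := (t - z) + δ • g with hw
  have hzt : ‖t - z‖ = R := by rw [norm_sub_rev, hzR]
  have hin : 0 < ⟪w, t - z⟫ := by
    rw [hw, inner_add_left, real_inner_self_eq_norm_sq, real_inner_smul_left, hzt]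
    have h1 := (abs_le.1 (abs_real_inner_le_norm g (t - z))).1
    rw [hzt] at h1
    have h2 := mul_le_mul_of_nonneg_left h1 hδ0.le
    have h3 := mul_lt_mul_of_pos_right hδR hR
    nlinarith
  have hmem : ∀ᶠ s : ℝ in 𝓝[>] 0, z + s • w ∈ S.K := by
    have hc : Continuous fun s : ℝ => s * ‖w‖ ^ 2 := by fun_prop
    have h1 := hc.tendsto 0
    simp only [zero_mul] at h1
    filter_upwards [(h1.eventually (gt_mem_nhds hin)).filter_mono nhdsWithin_le_nhds,
      self_mem_nhdsWithin] with s hs hs0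
    have hs0' : 0 < s := hs0
    refine hball ?_
    rw [mem_ball, dist_eq_norm, show z + s • w - t = s • w - (t - z) by abel]
    refine lt_of_pow_lt_pow_left₀ 2 hR.le ?_
    rw [norm_sub_sq_real, norm_smul, Real.norm_of_nonneg hs0'.le, hzt, real_inner_smul_left]
    have := mul_pos hs0' (show 0 < ⟪w, t - z⟫ - s * ‖w‖ ^ 2 by linarith)
    have := mul_pos hs0' hin
    nlinarith
  have hsup : SupJet S.K (fun _ => (0 : ℝ)) z 0 0 := fun ε hε => by
    filter_upwards with x
    simp only [inner_zero_left, qf_zero, zero_div, add_zero, zero_add]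
    positivity
  have hsub : SubJet S.K (fun _ => (0 : ℝ)) z g (hess S.ρ z) := fun ε hε => by
    filter_upwards [mem_nhdsWithin_of_mem_nhds (taylor_hess S.contDiff_ρ z hε),
      self_mem_nhdsWithin] with x hx hxK
    have h1 := (abs_le.1 hx).1
    have h2 := S.mem_K_iff.1 hxK
    have h3 := S.mem_frontier_iff.1 hz
    rw [h3] at h1
    rw [hg, gρ]
    linarith
  have := jets_first hsup hsub hmem
  rw [inner_zero_left, hw, inner_add_right, real_inner_smul_right, real_inner_self_eq_norm_sq] at this
  have h4 : ⟪z - t, g⟫ = -⟪g, t - z⟫ := by rw [real_inner_comm, ← inner_neg_right, neg_sub]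
  have h5 : 0 < δ * ‖g‖ ^ 2 := by positivity
  rw [h4]; linarith

set_option maxHeartbeats 800000 in
/-- Comparison with the barrier `ε (e^{-kR²} - e^{-k|x-t|²})` in an annulus. -/
lemma no_touching_ball {e : EN N → ℝ → ℝ} {C : ℝ} (hC : 0 ≤ C)
    (he : ∀ z ∈ S.K, ∀ r ≤ 0, e z r ≤ C * |r| ^ (S.α + 1)) {u : EN N → ℝ}
    (hu : UpperSemicontinuousOn u S.K) (hu0 : ∀ x ∈ S.K, u x ≤ 0)
    (hsub : ∀ x ∈ S.K, S.SubAt e u x) {t z : EN N} {R : ℝ} (hR : 0 < R)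
    (hball : ball t R ⊆ S.Ω) (hneg : ∀ x ∈ ball t R, u x < 0) (hz : z ∈ S.K) (hzR : ‖z - t‖ = R)
    (huz : u z = 0) : False := by
  have ha := S.ha
  have hA := S.hA
  have hBb := S.Bb_nonneg
  have hα1 := S.hα1
  have hRp : 0 < R ^ (S.α + 1) := Real.rpow_pos_of_pos hR _
  -- the exponent `k` of the barrier
  obtain ⟨k, hk1, hkK⟩ : ∃ k : ℝ, 1 ≤ k ∧
      2 * R * C / R ^ (S.α + 1) + 1 ≤ S.a * k * R ^ 2 - 2 * S.A * N - 2 * S.Bb * R := by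
    refine ⟨1 + (2 * R * C / R ^ (S.α + 1) + 1 + 2 * S.A * N + 2 * S.Bb * R) / (S.a * R ^ 2), ?_, ?_⟩
    · have : 0 ≤ (2 * R * C / R ^ (S.α + 1) + 1 + 2 * S.A * N + 2 * S.Bb * R) / (S.a * R ^ 2) := by
        positivity
      linarith
    · set q := 2 * R * C / R ^ (S.α + 1) + 1 + 2 * S.A * N + 2 * S.Bb * R with hq
      have e1 : S.a * (1 + q / (S.a * R ^ 2)) * R ^ 2 = S.a * R ^ 2 + q := by field_simp
      have : 0 < S.a * R ^ 2 := by positivity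
      rw [e1]; linarith
  have hk : 0 < k := by linarith
  -- `u` is bounded away from zero on the inner sphere
  obtain ⟨δ, hδ, hδu⟩ : ∃ δ > 0, ∀ x, ‖x - t‖ = R / 2 → u x ≤ -δ := by
    have hsK : sphere t (R / 2) ⊆ ball t R := fun x hx => by
      rw [mem_ball]; rw [mem_sphere] at hx; linarith
    rcases (sphere t (R / 2)).eq_empty_or_nonempty with h | h
    · refine ⟨1, one_pos, fun x hx => ?_⟩
      have : x ∈ sphere t (R / 2) := by rw [mem_sphere, dist_eq_norm, hx]
      rw [h] at this; exact this.elim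
    · obtain ⟨y, hy, hmax⟩ := exists_isMax (isCompact_sphere t (R / 2)) h
        (hu.mono ((hsK.trans hball).trans S.Ω_sub_K))
      refine ⟨-u y, by linarith [hneg y (hsK hy)], fun x hx => ?_⟩
      rw [neg_neg]
      exact hmax x (by rw [mem_sphere, dist_eq_norm, hx])
  set ε := δ / 2 with hε
  have hε0 : 0 < ε := by positivity
  set f : ℝ → ℝ := fun s => ε * (Real.exp (-k * R ^ 2) - Real.exp (-k * s)) with hf
  set f₁ : ℝ → ℝ := fun s => k * ε * Real.exp (-k * s) with hf₁
  have hd1 : ∀ s, HasDerivAt f (f₁ s) s := fun s => by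
    have h1 : HasDerivAt (fun s : ℝ => -k * s) (-k) s := by
      simpa using (hasDerivAt_id s).const_mul (-k)
    have h2 := ((h1.exp).const_sub (Real.exp (-k * R ^ 2))).const_mul ε
    exact h2.congr_deriv (by simp only [hf₁]; ring)
  have hd2 : ∀ s, HasDerivAt f₁ (-(k * f₁ s)) s := fun s => by
    have h1 : HasDerivAt (fun s : ℝ => -k * s) (-k) s := by
      simpa using (hasDerivAt_id s).const_mul (-k)
    have h2 := (h1.exp).const_mul (k * ε)
    exact h2.congr_deriv (by simp only [hf₁]; ring)
  set D := S.K ∩ {x | R / 2 ≤ ‖x - t‖} with hD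
  have hDc : IsCompact D := S.isCompact_K.inter_right
    (isClosed_le continuous_const (by fun_prop))
  have hfc : Continuous fun x : EN N => f (‖x - t‖ ^ 2) := by
    simp only [hf]; fun_prop
  have hzD : z ∈ D := ⟨hz, by simp only [mem_setOf_eq, hzR]; linarith⟩
  obtain ⟨x, hxD, hmax⟩ := exists_isMax (u := fun x => u x - f (‖x - t‖ ^ 2)) hDc ⟨z, hzD⟩ (by
    have : UpperSemicontinuousOn (fun x => -f (‖x - t‖ ^ 2)) D :=
      (hfc.neg).continuousOn.upperSemicontinuousOn
    simp only [sub_eq_add_neg (u _)]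
    exact (hu.mono inter_subset_left).add this)
  have hx0 : f (‖x - t‖ ^ 2) ≤ u x := by
    have := hmax z hzD
    simp only [huz, hzR] at this
    have hfR : f (R ^ 2) = 0 := by simp [hf]
    linarith
  have hxK := hxD.1
  have hux := hu0 x hxK
  set v := x - t with hv
  set s := ‖v‖ ^ 2 with hs
  have hxR : ‖v‖ ≤ R := by
    by_contra hcon
    push Not at hcon
    have h1 : R ^ 2 < s := by rw [hs]; gcongr
    have h2 : Real.exp (-k * s) < Real.exp (-k * R ^ 2) := Real.exp_lt_exp.2 (by nlinarith)
    have : 0 < f s := mul_pos hε0 (by linarith)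
    linarith
  have hxR2 : R / 2 < ‖v‖ := by
    have hx2 : R / 2 ≤ ‖v‖ := hxD.2
    rcases hx2.lt_or_eq with h | h
    · exact h
    · exfalso
      have h1 := hδu x h.symm
      have h2 : -ε ≤ f s := by
        have e1 : 0 < Real.exp (-k * R ^ 2) := Real.exp_pos _
        have e2 : Real.exp (-k * s) ≤ 1 := Real.exp_le_one_iff.2 (by
          have : 0 ≤ s := by positivity
          nlinarith)
        have : ε * (-1) ≤ ε * (Real.exp (-k * R ^ 2) - Real.exp (-k * s)) :=
          mul_le_mul_of_nonneg_left (by linarith) hε0.le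
        simp only [hf]; linarith
      rw [hε] at h2
      linarith
  have hv0 : v ≠ 0 := norm_pos_iff.1 (by linarith)
  have hf₁p : 0 < f₁ s := by simp only [hf₁]; positivity
  have hp0 : (2 * f₁ s) • v ≠ 0 := smul_ne_zero (by positivity) hv0
  have hjet : SupJet S.K u x ((2 * f₁ s) • v)
      ((2 * f₁ s) • 1 + (4 * -(k * f₁ s)) • outer v) := fun η hη => by
    have hnear : ∀ᶠ y in 𝓝 x, R / 2 ≤ ‖y - t‖ := by
      have hc : Continuous fun y : EN N => ‖y - t‖ := by fun_prop
      exact ((hc.tendsto x).eventually (lt_mem_nhds hxR2)).mono fun y hy => hy.le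
    filter_upwards [mem_nhdsWithin_of_mem_nhds (radial_taylor (t := t) (z := x)
      (Eventually.of_forall hd1) (hd2 _) hη), self_mem_nhdsWithin,
      mem_nhdsWithin_of_mem_nhds hnear] with y h1 h2 h3
    have h4 := hmax y ⟨h2, h3⟩
    have h5 := (abs_le.1 h1).2
    simp only [← hv, ← hs] at h4 h5
    linarith
  have hin := (hsub x hxK).jet _ _ hp0 (symm_radial _ _ _) hjet (fun hxf => by
    have hxR' : ‖x - t‖ = R := by
      refine le_antisymm hxR ?_
      by_contra hcon
      push Not at hcon
      exact S.not_mem_Ω_of_frontier hxf (hball (by rw [mem_ball, dist_eq_norm]; exact hcon))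
    rw [real_inner_smul_left]
    exact mul_pos (by positivity)
      (outward_of_ball hR (hball.trans S.Ω_sub_K) hxf hxR'))
  have hop := S.Op_radial_le hxK hp0 (f₂ := -(k * f₁ s)) (by
    have : 0 < k * f₁ s := by positivity
    linarith)
  have hpn : ‖(2 * f₁ s) • v‖ = 2 * f₁ s * ‖v‖ := by
    rw [norm_smul, Real.norm_of_nonneg (by positivity)]
  rw [abs_of_pos hf₁p, ← hs] at hop
  set P := ‖(2 * f₁ s) • v‖ with hP
  have hP0 : 0 < P := by rw [hpn]; positivity
  have hPu : P ≤ 2 * f₁ s * R := by rw [hpn]; gcongr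
  have hPl : f₁ s * R ≤ P := by
    rw [hpn]
    have := mul_le_mul_of_nonneg_left hxR2.le hf₁p.le
    linarith
  have hs4 : R ^ 2 / 4 ≤ s := by rw [hs]; nlinarith
  set K1 := 2 * R * C / R ^ (S.α + 1) + 1 with hK1
  have hK10 : 0 < K1 := by positivity
  have hbr : 2 * S.A * N * f₁ s + 4 * S.a * -(k * f₁ s) * s + S.Bb * P ≤ -(f₁ s * K1) := by
    have e1 : S.Bb * P ≤ S.Bb * (2 * f₁ s * R) := by gcongr
    have e2 : 4 * S.a * (k * f₁ s) * (R ^ 2 / 4) ≤ 4 * S.a * (k * f₁ s) * s := by gcongr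
    have e3 := mul_le_mul_of_nonneg_left hkK hf₁p.le
    linarith only [e1, e2, e3]
  have hPα : 0 < P ^ S.α := Real.rpow_pos_of_pos hP0 _
  have h1 := mul_le_mul_of_nonneg_left hbr hPα.le
  -- the zero order term
  have hur : |u x| ≤ f₁ s := by
    rw [abs_of_nonpos hux]
    have e1 : -(f s) ≤ ε * Real.exp (-k * s) := by
      have : 0 < ε * Real.exp (-k * R ^ 2) := by positivity
      simp only [hf]; linarith
    have e2 : 1 * (ε * Real.exp (-k * s)) ≤ k * (ε * Real.exp (-k * s)) := by gcongr
    simp only [hf₁]; linarith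
  have hzero : e x (u x) ≤ C * f₁ s ^ (S.α + 1) :=
    (he x hxK _ hux).trans (by gcongr)
  have hkey : C * f₁ s ^ (S.α + 1) < P ^ S.α * (f₁ s * K1) := by
    have e1 : (f₁ s * R) ^ (S.α + 1) ≤ P ^ (S.α + 1) := by gcongr
    rw [Real.mul_rpow hf₁p.le hR.le, Real.rpow_add hP0 S.α 1, Real.rpow_one] at e1
    have e2 : P ^ S.α * P ≤ P ^ S.α * (2 * f₁ s * R) := by gcongr
    have e3 : f₁ s ^ (S.α + 1) * R ^ (S.α + 1) * K1 ≤ P ^ S.α * (2 * f₁ s * R) * K1 :=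
      mul_le_mul_of_nonneg_right (e1.trans e2) hK10.le
    have e4 : R ^ (S.α + 1) * K1 = 2 * R * C + R ^ (S.α + 1) := by
      rw [hK1]; field_simp
    have e5 : 0 < f₁ s ^ (S.α + 1) * R ^ (S.α + 1) := by positivity
    have e6 : f₁ s ^ (S.α + 1) * R ^ (S.α + 1) * K1
        = 2 * R * (C * f₁ s ^ (S.α + 1)) + f₁ s ^ (S.α + 1) * R ^ (S.α + 1) := by
      rw [mul_assoc, e4]; ring
    refine lt_of_mul_lt_mul_left ?_ (show 0 ≤ 2 * R by positivity)
    linarith only [e3, e5, e6]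
  linarith only [hin, hop, h1, hzero, hkey]

lemma exists_frontier_point {X : Type*} [TopologicalSpace X] {s c : Set X} (hc : IsPreconnected c)
    (h1 : (c ∩ s).Nonempty) (h2 : (c ∩ sᶜ).Nonempty) : (c ∩ frontier s).Nonempty := by
  by_contra hcon
  rw [Set.not_nonempty_iff_eq_empty] at hcon
  have hcov : c ⊆ interior s ∪ (closure s)ᶜ := fun x hx => by
    by_contra hx'
    simp only [mem_union, mem_compl_iff, not_or, not_not] at hx'
    have : x ∈ c ∩ frontier s := ⟨hx, hx'.2, hx'.1⟩
    rw [hcon] at this; exact this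
  obtain ⟨x, hxc, hxs⟩ := h1
  obtain ⟨y, hyc, hys⟩ := h2
  have hx1 : x ∈ interior s := (hcov hxc).resolve_right fun h => h (subset_closure hxs)
  have hy1 : y ∈ (closure s)ᶜ := (hcov hyc).resolve_left fun h => hys (interior_subset h)
  obtain ⟨z, -, hz1, hz2⟩ := hc _ _ isOpen_interior isClosed_closure.isOpen_compl hcov
    ⟨x, hxc, hx1⟩ ⟨y, hyc, hy1⟩
  exact hz2 (subset_closure (interior_subset hz1))

/-- Interior sphere condition. -/
lemma exists_interior_ball {z : EN N} (hz : z ∈ frontier S.Ω) :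
    ∃ t, ∃ R > 0, ‖z - t‖ = R ∧ ball t R ⊆ S.Ω := by
  obtain ⟨C, hC, -, -, hrem, -⟩ := S.exists_C2_bound S.contDiff_ρ
  set g := S.gρ z with hg
  have hg0 : 0 < ‖g‖ := norm_pos_iff.2 (S.gρ_ne hz)
  set R := ‖g‖ / (2 * C) with hR
  have hR0 : 0 < R := by positivity
  have hn : S.nv z = ‖g‖⁻¹ • g := S.nv_eq hz
  have hn1 : ‖S.nv z‖ = 1 := by
    rw [hn, norm_smul, norm_inv, norm_norm, inv_mul_cancel₀ hg0.ne']
  have hdist : ‖z - (z - R • S.nv z)‖ = R := by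
    rw [sub_sub_cancel, norm_smul, hn1, mul_one, Real.norm_of_nonneg hR0.le]
  refine ⟨z - R • S.nv z, R, hR0, hdist, ?_⟩
  have hfr : ∀ y ∈ ball (z - R • S.nv z) R, y ∉ frontier S.Ω := by
    intro y hy hyf
    rw [mem_ball, dist_eq_norm, show y - (z - R • S.nv z) = (y - z) + R • S.nv z by abel] at hy
    have h1 : ‖(y - z) + R • S.nv z‖ ^ 2 < R ^ 2 := by gcongr
    rw [norm_add_sq_real, norm_smul, hn1, Real.norm_of_nonneg hR0.le, mul_one,
      real_inner_smul_right] at h1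
    have h2 := (abs_le.1 (hrem z (S.frontier_sub_K hz) y (S.frontier_sub_K hyf))).2
    rw [S.mem_frontier_iff.1 hz, S.mem_frontier_iff.1 hyf] at h2
    have h2' := (abs_le.1 (hrem z (S.frontier_sub_K hz) y (S.frontier_sub_K hyf))).1
    rw [S.mem_frontier_iff.1 hz, S.mem_frontier_iff.1 hyf] at h2'
    have h3 : ⟪y - z, S.nv z⟫ = ‖g‖⁻¹ * ⟪g, y - z⟫ := by
      rw [hn, real_inner_smul_right, real_inner_comm]
    rw [h3] at h1
    have h4 : R * (‖g‖⁻¹ * ⟪g, y - z⟫) = ⟪g, y - z⟫ / (2 * C) := by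
      rw [hR]; field_simp
    rw [h4] at h1
    have h5 : 2 * (⟪g, y - z⟫ / (2 * C)) = ⟪g, y - z⟫ / C := by field_simp
    rw [h5] at h1
    have h6 : ⟪g, y - z⟫ / C * C = ⟪g, y - z⟫ := div_mul_cancel₀ _ hC.ne'
    have h7 := mul_pos hC (show 0 < -(‖y - z‖ ^ 2 + ⟪g, y - z⟫ / C) by linarith)
    change -(C * ‖y - z‖ ^ 2) ≤ 0 - (0 + ⟪g, y - z⟫) at h2'
    change 0 - (0 + ⟪g, y - z⟫) ≤ C * ‖y - z‖ ^ 2 at h2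
    nlinarith
  intro y hy
  by_contra hyΩ
  have hin : (ball (z - R • S.nv z) R ∩ S.Ω).Nonempty := by
    obtain ⟨h, hK, hh0, hhR⟩ := ((S.inward hz).and (Filter.Eventually.and
      (self_mem_nhdsWithin : ∀ᶠ h : ℝ in 𝓝[>] 0, h ∈ Ioi (0:ℝ))
      (mem_nhdsWithin_of_mem_nhds (gt_mem_nhds hR0) : ∀ᶠ h in 𝓝[>] (0:ℝ), h < R))).exists
    have hh0' : 0 < h := hh0
    have hb : z + h • -S.nv z ∈ ball (z - R • S.nv z) R := by
      rw [mem_ball, dist_eq_norm,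
        show z + h • -S.nv z - (z - R • S.nv z) = (R - h) • S.nv z by
          rw [sub_smul, smul_neg]; abel, norm_smul, hn1, mul_one,
        Real.norm_of_nonneg (by linarith)]
      linarith
    exact ⟨_, hb, (S.mem_cases hK).resolve_right (hfr _ hb)⟩
  obtain ⟨x, hx, hxf⟩ := exists_frontier_point (convex_ball _ _).isPreconnected hin ⟨y, hy, hyΩ⟩
  exact hfr x hx hxf

/-- Strong maximum principle. -/
lemma strong_max {e : EN N → ℝ → ℝ} {C : ℝ} (hC : 0 ≤ C)
    (he : ∀ z ∈ S.K, ∀ r ≤ 0, e z r ≤ C * |r| ^ (S.α + 1)) {u : EN N → ℝ}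
    (hu : UpperSemicontinuousOn u S.K) (hu0 : ∀ x ∈ S.K, u x ≤ 0)
    (hsub : ∀ x ∈ S.K, S.SubAt e u x) {x₁ : EN N} (hx₁ : x₁ ∈ S.K) (h1 : u x₁ = 0) :
    ∀ x ∈ S.Ω, u x = 0 := by
  have interior_case : ∀ z₀ ∈ S.Ω, u z₀ = 0 → ∀ x ∈ S.Ω, u x = 0 := by
    intro z₀ hz₀ huz y₀ hy₀
    by_contra hne
    have hlt : u y₀ < 0 := lt_of_le_of_ne (hu0 _ (S.Ω_sub_K hy₀)) hne
    set P := {x ∈ S.Ω | u x < 0} with hP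
    have hPo : ∀ x ∈ P, P ∈ 𝓝 x := fun x hx => by
      have := hu x (S.Ω_sub_K hx.1) 0 hx.2
      rw [S.nhdsWithin_K hx.1] at this
      filter_upwards [this, S.isOpen_Ω.mem_nhds hx.1] with y h1 h2 using ⟨h2, h1⟩
    obtain ⟨z, hzΩ, hzf⟩ := exists_frontier_point S.hΩ.2.1.isPreconnected (s := P)
      ⟨y₀, hy₀, hy₀, hlt⟩ ⟨z₀, hz₀, fun h => by have := h.2; linarith⟩
    have huz0 : u z = 0 := by
      by_contra hne
      have hzP : z ∈ P := ⟨hzΩ, lt_of_le_of_ne (hu0 _ (S.Ω_sub_K hzΩ)) hne⟩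
      exact hzf.2 (mem_interior_iff_mem_nhds.2 (hPo z hzP))
    obtain ⟨d, hd, hdΩ⟩ := Metric.isOpen_iff.1 S.isOpen_Ω z hzΩ
    obtain ⟨y, hyP, hyz⟩ := Metric.mem_closure_iff.1 hzf.1 (d / 4) (by positivity)
    have hDΩ : closedBall z (d / 2) ⊆ S.Ω :=
      (closedBall_subset_ball (by linarith)).trans hdΩ
    obtain ⟨v, hv, hve⟩ := upperSemicontinuousOn_iff_preimage_Ici.1
      (hu.mono (hDΩ.trans S.Ω_sub_K)) 0
    have hcc : IsCompact (closedBall z (d / 2) ∩ u ⁻¹' Ici 0) := by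
      rw [hve]; exact (isCompact_closedBall z (d / 2)).inter_right hv
    have hzm : z ∈ closedBall z (d / 2) ∩ u ⁻¹' Ici 0 :=
      ⟨mem_closedBall_self (by positivity), by simp [huz0]⟩
    obtain ⟨z', hz', hmin⟩ := hcc.exists_isMinOn ⟨z, hzm⟩
      (f := fun x => dist x y) (by fun_prop)
    have hmin' : ∀ x ∈ closedBall z (d / 2), u x ≥ 0 → dist z' y ≤ dist x y :=
      fun x h1 h2 => hmin ⟨h1, h2⟩
    have hz'Ω := hDΩ hz'.1
    have hz'0 : u z' = 0 := le_antisymm (hu0 _ (S.Ω_sub_K hz'Ω)) hz'.2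
    have hzz : dist z' y ≤ dist z y := hmin' z hzm.1 huz0.ge
    have hsubb : ball y (dist z' y) ⊆ closedBall z (d / 2) := fun x hx => by
      rw [mem_ball] at hx
      rw [mem_closedBall]
      have := dist_triangle x y z
      rw [dist_comm y z] at this
      linarith
    refine no_touching_ball hC he hu hu0 hsub (t := y) (z := z') (R := dist z' y) ?_
      (hsubb.trans hDΩ) (fun x hx => ?_) (S.Ω_sub_K hz'Ω) (dist_eq_norm _ _).symm hz'0
    · refine dist_pos.2 fun h => ?_
      have := hyP.2
      rw [← h, hz'0] at this
      exact lt_irrefl _ this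
    · by_contra hcon
      have := hmin' x (hsubb hx) (not_lt.1 hcon)
      rw [mem_ball] at hx
      linarith
  by_cases hex : ∃ z₀ ∈ S.Ω, u z₀ = 0
  · obtain ⟨z₀, hz₀, h⟩ := hex
    exact interior_case z₀ hz₀ h
  · push Not at hex
    exfalso
    rcases S.mem_cases hx₁ with h | h
    · exact hex x₁ h h1
    · obtain ⟨t, R, hR, hxt, hball⟩ := exists_interior_ball h
      exact no_touching_ball hC he hu hu0 hsub hR hball
        (fun x hx => lt_of_le_of_ne (hu0 _ (S.Ω_sub_K (hball hx))) (hex x (hball hx))) hx₁ hxt h1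

end Setup

/-! ### Perron's method -/

namespace Setup

variable {N : ℕ} {S : Setup N}

lemma supJet_of_pow_self {u : EN N → ℝ} {z : EN N} {C : ℝ}
    (h : ∀ᶠ x in 𝓝[S.K] z, u x ≤ u z + C * ‖x - z‖ ^ (2 * S.m)) :
    ∃ M : Mat N, SupJet S.K u z 0 M := by
  have hm := S.hm
  have h1 := S.supJet_of_pow (u := u) (t := z) (z := z) (C := C) (by
    filter_upwards [h] with x hx
    rw [sub_self, norm_zero, zero_pow (by omega)]
    linarith)
  rw [sub_self, smul_zero] at h1
  exact ⟨_, h1⟩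

/-- A function touched from below by a classical subsolution with jet `(p₁, M₁)` is a
subsolution at an interior contact point. -/
lemma subAt_of_subJet_interior {e : EN N → ℝ → ℝ} {v : EN N → ℝ} {x p₁ : EN N} {M₁ : Mat N}
    (hx : x ∈ S.Ω) (h₁ : SubJet S.K v x p₁ M₁) (hM₁ : M₁.IsSymm)
    (h : p₁ ≠ 0 → 0 ≤ S.Op x p₁ M₁ + e x (v x)) (h0 : p₁ = 0 → 0 ≤ e x (v x)) :
    S.SubAt e v x where
  jet p M hp hM hj _ := by
    obtain ⟨rfl, hq⟩ := S.jets_interior hx hj h₁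
    have h2 := S.F_mono (S.Ω_sub_K hx) hp hM₁ hM hq
    have h3 := h hp
    unfold Op at h3 ⊢
    linarith
  pow _ C hC := by
    obtain ⟨M, hj⟩ := supJet_of_pow_self hC
    exact h0 (S.jets_interior hx hj h₁).1.symm

lemma subAt_of_subJet_boundary {e : EN N → ℝ → ℝ} {v : EN N → ℝ} {x p₁ : EN N} {M₁ : Mat N}
    (hx : x ∈ frontier S.Ω) (h₁ : SubJet S.K v x p₁ M₁) (hn : ⟪p₁, S.nv x⟫ ≤ 0) :
    S.SubAt e v x where
  jet p M hp hM hj hb := by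
    have := S.jets_boundary hx hj h₁
    have := hb hx
    linarith
  pow hxΩ := absurd hxΩ (S.not_mem_Ω_of_frontier hx)

variable (S) in
/-- The class of upper semicontinuous subsolutions with values in `[-m, 0]`. -/
structure Adm (e : EN N → ℝ → ℝ) (m : ℝ) (u : EN N → ℝ) : Prop where
  usc : UpperSemicontinuousOn u S.K
  bd : ∀ x ∈ S.K, -m ≤ u x ∧ u x ≤ 0
  sub : ∀ x ∈ S.K, S.SubAt e u x

/-- A maximal element of the class of subsolutions cannot be raised locally: no strict
subsolution touches it strictly from below. -/
lemma no_bump {e : EN N → ℝ → ℝ} {m : ℝ} {W : EN N → ℝ} (hW : S.Adm e m W)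
    (hWc : ContinuousOn W S.K) (hmax : ∀ u, S.Adm e m u → ∀ x ∈ S.K, u x ≤ W x)
    {z : EN N} (hz : z ∈ S.K) (hneg : W z < 0) {ζ : EN N → ℝ} (hζ : Continuous ζ)
    (hζz : ζ z = W z) {δ : ℝ} (hδ : 0 < δ) {k : ℕ}
    (hstrict : ∀ᶠ x in 𝓝[S.K] z, ζ x + δ * ‖x - z‖ ^ k ≤ W x)
    (hsub : ∀ᶠ q : EN N × ℝ in 𝓝 (z, 0), q.1 ∈ S.K → S.SubAt e (fun y => ζ y + q.2) q.1) :
    False := by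
  have hneg' : ∀ᶠ q : EN N × ℝ in 𝓝 (z, 0), ζ q.1 + q.2 < 0 := by
    have : Tendsto (fun q : EN N × ℝ => ζ q.1 + q.2) (𝓝 (z, 0)) (𝓝 (ζ z + 0)) := by
      have : Continuous fun q : EN N × ℝ => ζ q.1 + q.2 := by fun_prop
      exact this.tendsto (z, 0)
    exact this.eventually_lt_const (by rw [hζz]; linarith)
  obtain ⟨r₁, hr₁, h1⟩ := Metric.eventually_nhds_iff.1 (hsub.and hneg')
  obtain ⟨r₂, hr₂, h2⟩ := Metric.mem_nhdsWithin_iff.1 hstrict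
  set r := min r₁ r₂ / 2 with hr
  have hr0 : 0 < r := by positivity
  have hrr₁ : r < r₁ := by have := min_le_left r₁ r₂; have := lt_min hr₁ hr₂; linarith
  have hrr₂ : r < r₂ := by have := min_le_right r₁ r₂; have := lt_min hr₁ hr₂; linarith
  set κ := min (r₁ / 2) (δ * (r / 2) ^ k / 2) with hκ
  have hκ0 : 0 < κ := by positivity
  have hκ1 : κ < r₁ := (min_le_left _ _).trans_lt (by linarith)
  have hκ2 : κ < δ * (r / 2) ^ k := (min_le_right _ _).trans_lt (by
    have : 0 < δ * (r / 2) ^ k := by positivity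
    linarith)
  have hloc : ∀ x ∈ S.K, dist x z ≤ r → S.SubAt e (fun y => ζ y + κ) x ∧ ζ x + κ < 0 := by
    intro x hx hxr
    have := h1 (y := (x, κ)) (by
      rw [Prod.dist_eq, max_lt_iff]
      exact ⟨hxr.trans_lt hrr₁, by rw [Real.dist_eq, sub_zero, abs_of_pos hκ0]; exact hκ1⟩)
    exact ⟨this.1 hx, this.2⟩
  have hout : ∀ x ∈ S.K, dist x z ≤ r → r / 2 ≤ dist x z → ζ x + κ < W x := by
    intro x hx hxr hxr'
    have h3 : ζ x + δ * ‖x - z‖ ^ k ≤ W x := h2 ⟨hxr.trans_lt hrr₂, hx⟩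
    rw [dist_eq_norm] at hxr'
    have h4 : δ * (r / 2) ^ k ≤ δ * ‖x - z‖ ^ k := by gcongr
    linarith
  classical
  set U : EN N → ℝ := fun x => if dist x z < r then max (W x) (ζ x + κ) else W x with hU
  have hUW : ∀ x, W x ≤ U x := fun x => by
    simp only [hU]; split_ifs
    · exact le_max_left _ _
    · exact le_rfl
  have hUc : ContinuousOn U S.K := by
    intro x hx
    by_cases hd : dist x z < r
    · have hmx : ContinuousWithinAt (fun x => max (W x) (ζ x + κ)) S.K x :=
        (hWc x hx).max (hζ.continuousWithinAt.add continuousWithinAt_const)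
      refine hmx.congr_of_eventuallyEq ?_ (if_pos hd)
      filter_upwards [mem_nhdsWithin_of_mem_nhds (isOpen_ball.mem_nhds hd)] with y hy
      exact if_pos hy
    · refine (hWc x hx).congr_of_eventuallyEq ?_ (if_neg hd)
      have hd' : r / 2 < dist x z := by push Not at hd; linarith
      have : ∀ᶠ y in 𝓝 x, r / 2 < dist y z :=
        (continuous_id.dist continuous_const).continuousAt.eventually_const_lt hd'
      filter_upwards [mem_nhdsWithin_of_mem_nhds this, self_mem_nhdsWithin] with y hy hyK
      simp only [hU]
      split_ifs with h
      · exact max_eq_left (hout y hyK h.le hy.le).le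
      · rfl
  have hadm : S.Adm e m U := by
    refine ⟨hUc.upperSemicontinuousOn, fun x hx => ⟨(hW.bd x hx).1.trans (hUW x), ?_⟩,
      fun x hx => ?_⟩
    · simp only [hU]
      split_ifs with h
      · exact max_le (hW.bd x hx).2 (hloc x hx h.le).2.le
      · exact (hW.bd x hx).2
    · by_cases hE : U x = W x
      · exact (hW.sub x hx).mono hE (Eventually.of_forall hUW)
      · have hd : dist x z < r := by
          by_contra h; exact hE (if_neg h)
        have hE2 : U x = ζ x + κ := by
          have : U x = max (W x) (ζ x + κ) := if_pos hd
          rw [this] at hE ⊢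
          exact max_eq_right (by by_contra h; exact hE (max_eq_left (not_le.1 h).le))
        refine (hloc x hx hd.le).1.mono hE2 ?_
        filter_upwards [mem_nhdsWithin_of_mem_nhds (isOpen_ball.mem_nhds hd)] with y hy
        have : U y = max (W y) (ζ y + κ) := if_pos hy
        rw [this]; exact le_max_right _ _
  have h5 := hmax U hadm z hz
  have h6 : U z = max (W z) (ζ z + κ) := if_pos (by rw [dist_self]; exact hr0)
  have := le_max_right (W z) (ζ z + κ)
  linarith

/-- A maximal negative subsolution is a supersolution. -/
lemma superAt_of_max {e : EN N → ℝ → ℝ}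
    (he : ContinuousOn (fun q : EN N × ℝ => e q.1 q.2) (S.K ×ˢ univ)) {m : ℝ} {W : EN N → ℝ}
    (hW : S.Adm e m W) (hWc : ContinuousOn W S.K)
    (hmax : ∀ u, S.Adm e m u → ∀ x ∈ S.K, u x ≤ W x)
    {z : EN N} (hz : z ∈ S.K) (hneg : W z < 0) : S.SuperAt e W z := by
  have hKq : Tendsto (fun q : EN N × ℝ => q.1) (𝓝 (z, 0)) (𝓝 z) := continuous_fst.tendsto (z, 0)
  -- continuity of the zeroth order term along a raised test function
  have hee : ∀ ζ : EN N → ℝ, Continuous ζ → ζ z = W z →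
      Tendsto (fun q : EN N × ℝ => e q.1 (ζ q.1 + q.2)) (𝓝 (z, 0) ⊓ 𝓟 {q | q.1 ∈ S.K})
        (𝓝 (e z (W z))) := by
    intro ζ hζ hζz
    have h1 := he (z, W z) ⟨hz, mem_univ _⟩
    have h2 : Tendsto (fun q : EN N × ℝ => (q.1, ζ q.1 + q.2)) (𝓝 (z, 0) ⊓ 𝓟 {q | q.1 ∈ S.K})
        (𝓝[S.K ×ˢ univ] (z, W z)) := by
      refine tendsto_nhdsWithin_iff.2 ⟨?_, ?_⟩
      · have : Continuous fun q : EN N × ℝ => (q.1, ζ q.1 + q.2) := by fun_prop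
        have h3 := this.tendsto (z, 0)
        simp only [add_zero, hζz] at h3
        exact h3.mono_left inf_le_left
      · filter_upwards [mem_inf_of_right (mem_principal_self _)] with q hq
        exact ⟨hq, mem_univ _⟩
    exact h1.tendsto.comp h2
  refine ⟨fun p M hp hM hj hb => ?_, fun hzΩ C hC => ?_⟩
  · have hq : -p ≠ 0 := neg_ne_zero.2 hp
    have hd : S.dual.Op z p M = -S.Op z (-p) (-M) := by
      have := S.dual_Op hz hq hM.neg
      rwa [neg_neg, neg_neg] at this
    rw [hd]
    simp only [neg_neg]
    by_contra hcon
    have hpos : 0 < S.Op z (-p) (-M) + e z (W z) := by linarith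
    have hsym : ∀ ε : ℝ, (-M - ε • (1 : Mat N)).IsSymm := fun ε => hM.neg.sub (symm_smul_one ε)
    -- lowering the Hessian slightly keeps the strict inequality
    obtain ⟨ε, hε, hε0⟩ : ∃ ε : ℝ, 0 < S.Op z (-p) (-M - ε • 1) + e z (W z) ∧ 0 < ε := by
      have h1 : Tendsto (fun ε : ℝ => S.Op z (-p) (-M - ε • 1) + e z (W z)) (𝓝[>] 0)
          (𝓝 (S.Op z (-p) (-M) + e z (W z))) := by
        refine (S.tendsto_Op (x := fun _ => z) (p := fun _ => -p)
          (Eventually.of_forall fun _ => hz) hz hq (fun ε => hsym ε) hM.neg tendsto_const_nhds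
          tendsto_const_nhds ?_).add_const _
        have h2 : Tendsto (fun ε : ℝ => |ε| * matNorm (1 : Mat N)) (𝓝[>] 0) (𝓝 0) := by
          have : Continuous fun ε : ℝ => |ε| * matNorm (1 : Mat N) := by fun_prop
          have h3 := this.tendsto 0
          rw [abs_zero, zero_mul] at h3
          exact h3.mono_left nhdsWithin_le_nhds
        refine h2.congr fun ε => ?_
        rw [sub_sub_cancel_left, matNorm_neg, matNorm_smul]
      exact ((h1.eventually_const_lt hpos).and self_mem_nhdsWithin).exists
    set X := -M - ε • (1 : Mat N) with hX
    set ζ : EN N → ℝ := fun x => W z + quad z (-p) X x with hζ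
    have hζc : Continuous ζ := continuous_const.add (continuous_quad _ _ _)
    have hζz : ζ z = W z := by simp only [hζ, quad_self, add_zero]
    refine no_bump hW hWc hmax hz hneg hζc hζz (δ := ε / 4) (by positivity) (k := 2) ?_ ?_
    · filter_upwards [hj (ε / 4) (by positivity)] with x hx
      simp only [hζ, quad, hX, qf_sub, qf_neg, qf_smul, qf_one, inner_neg_left]
      linarith
    · -- the gradient of the raised quadratic at nearby points
      have hgrad : Tendsto (fun q : EN N × ℝ => -p + op X (q.1 - z)) (𝓝 (z, 0)) (𝓝 (-p)) := by
        have : Continuous fun q : EN N × ℝ => -p + op X (q.1 - z) := by fun_prop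
        have h3 := this.tendsto (z, 0)
        simpa using h3
      have hjet : ∀ q : EN N × ℝ, SubJet S.K (fun y => ζ y + q.2) q.1 (-p + op X (q.1 - z)) X := by
        intro q η hη
        refine Eventually.of_forall fun x => ?_
        simp only [hζ]
        rw [quad_recentre z (-p) (hsym ε) q.1 x]
        have : 0 ≤ η * ‖x - q.1‖ ^ 2 := by positivity
        linarith
      have hgne := hgrad.eventually_ne hq
      have hOp : Tendsto (fun q : EN N × ℝ => S.Op q.1 (-p + op X (q.1 - z)) X
          + e q.1 (ζ q.1 + q.2)) (𝓝 (z, 0) ⊓ 𝓟 {q | q.1 ∈ S.K})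
          (𝓝 (S.Op z (-p) X + e z (W z))) := by
        refine (S.tendsto_Op (M := fun _ => X) (mem_inf_of_right (mem_principal_self _)) hz hq
          (fun _ => hsym ε) (hsym ε) (hKq.mono_left inf_le_left)
          (hgrad.mono_left inf_le_left) ?_).add (hee ζ hζc hζz)
        have h0 : matNorm (X - X) = 0 := by rw [sub_self, matNorm_eq, op_zero, norm_zero]
        exact tendsto_const_nhds.congr fun _ => h0.symm
      have hOp' := eventually_inf_principal.1 (hOp.eventually_const_lt hε)
      rcases S.mem_cases hz with hzΩ | hzf
      · filter_upwards [hgne, hOp', hKq (S.isOpen_Ω.mem_nhds hzΩ)] with q h1 h2 h3 hqK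
        exact subAt_of_subJet_interior h3 (hjet q) (hsym ε) (fun _ => (h2 hqK).le)
          (fun h => absurd h h1)
      · have hin : ⟪-p, S.gρ z⟫ < 0 := by
          have := (S.inner_nv_pos hzf p).1 (hb hzf)
          rw [inner_neg_left]; linarith
        have hg : Tendsto (fun q : EN N × ℝ => ⟪-p + op X (q.1 - z), S.gρ q.1⟫) (𝓝 (z, 0))
            (𝓝 ⟪-p, S.gρ z⟫) :=
          Filter.Tendsto.inner (𝕜 := ℝ) hgrad ((S.continuous_gρ.tendsto z).comp hKq)
        filter_upwards [hgne, hOp', hg.eventually_lt_const hin] with q h1 h2 h3 hqK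
        rcases S.mem_cases hqK with h4 | h4
        · exact subAt_of_subJet_interior h4 (hjet q) (hsym ε) (fun _ => (h2 hqK).le)
            (fun h => absurd h h1)
        · refine subAt_of_subJet_boundary h4 (hjet q) ?_
          by_contra h5
          have := (S.inner_nv_pos h4 _).1 (not_le.1 h5)
          linarith
  · have hzΩ' : z ∈ S.Ω := hzΩ
    simp only [neg_neg]
    by_contra hcon
    have hpos : 0 < e z (W z) := by linarith
    set D := |C| + 1 with hD
    have hD0 : 0 < D := by positivity
    have hCD : C + 1 ≤ D := by have := le_abs_self C; linarith
    set ζ : EN N → ℝ := fun x => W z + (-D) * ‖x - z‖ ^ (2 * S.m) with hζ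
    have hm := S.hm
    have hζc : Continuous ζ := by simp only [hζ]; fun_prop
    have hζz : ζ z = W z := by
      simp only [hζ, sub_self, norm_zero, zero_pow (by omega : 2 * S.m ≠ 0), mul_zero, add_zero]
    refine no_bump hW hWc hmax hz hneg hζc hζz (δ := 1) one_pos (k := 2 * S.m) ?_ ?_
    · have hC' : ∀ᶠ x in 𝓝[S.K] z, -W x ≤ -W z + C * ‖x - z‖ ^ (2 * S.m) := hC
      filter_upwards [hC'] with x hx
      simp only [hζ]
      have : (C + 1) * ‖x - z‖ ^ (2 * S.m) ≤ D * ‖x - z‖ ^ (2 * S.m) := by gcongr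
      linarith
    · obtain ⟨d, hd, hsmall⟩ := S.Op_pow_small (C := -D) (by linarith) (half_pos hpos)
      have he' := eventually_inf_principal.1
        ((hee ζ hζc hζz).eventually_const_lt (half_lt_self hpos))
      filter_upwards [he', hKq (S.isOpen_Ω.mem_nhds hzΩ'), hKq (ball_mem_nhds z hd)]
        with q h1 h2 h3 hqK
      have h1 : e z (W z) / 2 < e q.1 (ζ q.1 + q.2) := h1 hqK
      have h3 : ‖q.1 - z‖ < d := by rw [← dist_eq_norm]; exact h3
      refine subAt_of_subJet_interior (p₁ := (2 * S.pd₁ (-D) (‖q.1 - z‖ ^ 2)) • (q.1 - z))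
        (M₁ := (2 * S.pd₁ (-D) (‖q.1 - z‖ ^ 2)) • 1
          + (4 * S.pd₂ (-D) (‖q.1 - z‖ ^ 2)) • outer (q.1 - z)) h2 ?_ (symm_radial _ _ _) ?_ ?_
      · intro η hη
        filter_upwards [mem_nhdsWithin_of_mem_nhds (S.pow_taylor (-D) z q.1 hη)] with x hx
        have := (abs_le.1 hx).1
        simp only [hζ]
        linarith
      · intro hne
        have hne' : q.1 - z ≠ 0 := fun h => hne (by rw [h, smul_zero])
        have := (abs_le.1 (hsmall q.1 hqK _ hne' h3)).1
        linarith
      · intro _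
        linarith

variable (S)

/-- Perron's method: the largest subsolution with values in `[-m, 0]` exists and is
continuous. -/
lemma exists_max_sub {e : EN N → ℝ → ℝ}
    (he : ContinuousOn (fun q : EN N × ℝ => e q.1 q.2) (S.K ×ˢ univ)) {m : ℝ}
    {u₀ : EN N → ℝ} (hu₀ : S.Adm e m u₀) : ∃ W, S.Adm e m W ∧ ContinuousOn W S.K ∧
      ∀ u, S.Adm e m u → ∀ x ∈ S.K, u x ≤ W x := by
  -- a bound for the zeroth order term
  obtain ⟨B, hB⟩ : ∃ B, ∀ z ∈ S.K, ∀ r, -m ≤ r → r ≤ 0 → |e z r| ≤ B := by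
    have hc : IsCompact (S.K ×ˢ Icc (-m) 0) := S.isCompact_K.prod isCompact_Icc
    obtain ⟨B, hB⟩ := hc.exists_bound_of_continuousOn
      (he.mono (prod_mono_right (subset_univ _)))
    exact ⟨B, fun z hz r h1 h2 => hB (z, r) ⟨hz, h1, h2⟩⟩
  obtain ⟨C₀, hC₀, H⟩ := S.exists_conv
  have hα := S.hα1
  set L := max (max m 1) ((max B 0) ^ (1 / (S.α + 1))) with hL
  have hL1 : 1 ≤ L := (le_max_right m 1).trans (le_max_left _ _)
  have hmL : m ≤ L := (le_max_left m 1).trans (le_max_left _ _)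
  have hBL : B ≤ L ^ (S.α + 1) := by
    have h1 : ((max B 0) ^ (1 / (S.α + 1))) ^ (S.α + 1) ≤ L ^ (S.α + 1) :=
      Real.rpow_le_rpow (by positivity) (le_max_right _ _) hα.le
    rw [← Real.rpow_mul (le_max_right _ _), one_div, inv_mul_cancel₀ hα.ne', Real.rpow_one] at h1
    exact (le_max_left _ _).trans h1
  have hL0 : 0 < L := by linarith
  have hlip : ∀ u, S.Adm e m u → ∃ U, S.Adm e m U ∧ (∀ x ∈ S.K, u x ≤ U x) ∧
      ∀ x ∈ S.K, ∀ y ∈ S.K, |U x - U y| ≤ C₀ * L * ‖x - y‖ := by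
    intro u hu
    obtain ⟨U, h1, h2, h3⟩ := H e u m L hL0 hmL hu.usc hu.bd hu.sub
      fun z hz r hr hr' => (hB z hz r hr hr').trans hBL
    refine ⟨U, ⟨?_, fun x hx => ⟨(hu.bd x hx).1.trans (h1 x hx).1, (h1 x hx).2⟩, h3⟩,
      fun x hx => (h1 x hx).1, h2⟩
    have : LipschitzOnWith (Real.toNNReal (C₀ * L)) U S.K :=
      LipschitzOnWith.of_dist_le_mul fun x hx y hy => by
        rw [Real.coe_toNNReal _ (by positivity), Real.dist_eq, dist_eq_norm]
        exact h2 x hx y hy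
    exact this.continuousOn.upperSemicontinuousOn
  set W : EN N → ℝ := fun x => ⨆ u : {u // S.Adm e m u}, u.1 x with hWdef
  have hne : Nonempty {u // S.Adm e m u} := ⟨⟨u₀, hu₀⟩⟩
  have hbdd : ∀ x ∈ S.K, BddAbove (range fun u : {u // S.Adm e m u} => u.1 x) := by
    rintro x hx
    refine ⟨0, ?_⟩
    rintro _ ⟨u, rfl⟩
    exact (u.2.bd x hx).2
  have hle : ∀ u, S.Adm e m u → ∀ x ∈ S.K, u x ≤ W x := fun u hu x hx =>
    le_ciSup (hbdd x hx) ⟨u, hu⟩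
  have hWb : ∀ x ∈ S.K, -m ≤ W x ∧ W x ≤ 0 := fun x hx =>
    ⟨(hu₀.bd x hx).1.trans (hle u₀ hu₀ x hx), ciSup_le fun u => (u.2.bd x hx).2⟩
  have hWl : ∀ x ∈ S.K, ∀ y ∈ S.K, W x ≤ W y + C₀ * L * ‖x - y‖ := by
    intro x hx y hy
    refine ciSup_le fun u => ?_
    obtain ⟨U, h1, h2, h3⟩ := hlip u.1 u.2
    have := h2 x hx
    have := (abs_le.1 (h3 x hx y hy)).2
    have := hle U h1 y hy
    linarith
  have hWc : ContinuousOn W S.K := by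
    have : LipschitzOnWith (Real.toNNReal (C₀ * L)) W S.K :=
      LipschitzOnWith.of_dist_le_mul fun x hx y hy => by
        rw [Real.coe_toNNReal _ (by positivity), Real.dist_eq, dist_eq_norm, abs_le]
        have h1 := hWl x hx y hy
        have h2 := hWl y hy x hx
        rw [norm_sub_rev] at h2
        constructor <;> linarith
    exact this.continuousOn
  refine ⟨W, ⟨hWc.upperSemicontinuousOn, hWb, fun x₀ hx₀ => ?_⟩, hWc, hle⟩
  have hex : ∀ n : ℕ, ∃ u, S.Adm e m u ∧ W x₀ - 1 / ((n : ℝ) + 1) < u x₀ := by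
    intro n
    obtain ⟨u, hu⟩ := exists_lt_of_lt_ciSup (f := fun u : {u // S.Adm e m u} => u.1 x₀)
      (b := W x₀ - 1 / ((n : ℝ) + 1)) (by
        have : 0 < 1 / ((n : ℝ) + 1) := by positivity
        change _ < W x₀
        linarith)
    exact ⟨u.1, u.2, hu⟩
  choose s hs1 hs2 using hex
  refine subAt_of_tendsto (l := atTop) (s := s) (e' := fun _ => e) (ε := fun _ => (0 : ℝ)) hx₀
    (hWc x₀ hx₀) (fun n => (hs1 n).usc) (fun n => (hs1 n).sub) tendsto_const_nhds
    (fun n x hx => by rw [add_zero]; exact hle _ (hs1 n) x hx) ?_ ?_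
  · refine tendsto_of_tendsto_of_tendsto_of_le_of_le ?_ tendsto_const_nhds
      (fun n => (hs2 n).le) (fun n => hle _ (hs1 n) x₀ hx₀)
    simpa using (tendsto_one_div_add_atTop_nhds_zero_nat (𝕜 := ℝ)).const_sub (W x₀)
  · intro z r hz tz tr
    have h1 := he (x₀, W x₀) ⟨hx₀, mem_univ _⟩
    exact h1.tendsto.comp (tendsto_nhdsWithin_iff.2
      ⟨tz.prodMk_nhds tr, Eventually.of_forall fun n => ⟨hz n, mem_univ _⟩⟩)

end Setup

/-! ### A radial barrier for the bound on the eigenvalue -/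

namespace Setup

variable {N : ℕ} (S : Setup N)

/-- The negative of the profile `(E - s^m)²`, where `s = |x - t|²`. -/
def bar (E s : ℝ) : ℝ := -(E - s ^ S.m) ^ 2
/-- The first derivative of `bar`. -/
def bar₁ (E s : ℝ) : ℝ := 2 * S.m * (E - s ^ S.m) * s ^ (S.m - 1)
/-- The second derivative of `bar`. -/
def bar₂ (E s : ℝ) : ℝ := 2 * S.m * s ^ (S.m - 2) * ((S.m - 1) * (E - s ^ S.m) - S.m * s ^ S.m)

lemma hasDerivAt_bar (E s : ℝ) : HasDerivAt (S.bar E) (S.bar₁ E s) s := by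
  have h := (((hasDerivAt_pow S.m s).const_sub E).pow 2).neg
  refine h.congr_deriv ?_
  simp only [bar₁]; push_cast; ring

lemma hasDerivAt_bar₁ (E s : ℝ) : HasDerivAt (S.bar₁ E) (S.bar₂ E s) s := by
  have hm := S.hm
  have h := (((hasDerivAt_pow S.m s).const_sub E).const_mul (2 * (S.m : ℝ))).mul
    (hasDerivAt_pow (S.m - 1) s)
  refine h.congr_deriv ?_
  obtain ⟨n, hn⟩ : ∃ n, S.m = n + 2 := ⟨S.m - 2, by omega⟩
  simp only [bar₂, hn, show n + 2 - 1 = n + 1 by omega, show n + 2 - 2 = n by omega,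
    show n + 1 - 1 = n by omega]
  push_cast; ring

/-- The operator applied to the barrier is controlled by the barrier: near the sphere `|v| = R`
the squared profile makes the radial second derivative dominate, elsewhere the barrier is
bounded below. -/
lemma Op_bar_le {R : ℝ} (hR : 0 < R) : ∃ Q : ℝ, 0 ≤ Q ∧ ∀ z ∈ S.K, ∀ v : EN N, v ≠ 0 → ‖v‖ < R →
    (2 * S.bar₁ ((R ^ 2) ^ S.m) (‖v‖ ^ 2)) • v ≠ 0 ∧
    S.Op z ((2 * S.bar₁ ((R ^ 2) ^ S.m) (‖v‖ ^ 2)) • v)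
      ((2 * S.bar₁ ((R ^ 2) ^ S.m) (‖v‖ ^ 2)) • 1
        + (4 * S.bar₂ ((R ^ 2) ^ S.m) (‖v‖ ^ 2)) • outer v)
      ≤ Q * |S.bar ((R ^ 2) ^ S.m) (‖v‖ ^ 2)| ^ (S.α + 1) := by
  have hm := S.hm
  have hm2 : (2 : ℝ) ≤ S.m := by exact_mod_cast hm
  have hα := S.hα1
  have hA := S.hA
  have ha := S.ha
  have hB := S.Bb_nonneg
  set E := (R ^ 2) ^ S.m with hE
  have hE0 : 0 < E := by positivity
  set Q₁ := S.A * N + 2 * S.a * (S.m - 1) + S.Bb * R with hQ₁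
  have hQ₁' : 2 * S.a * (S.m - 1) ≤ Q₁ := by
    have : 0 ≤ S.A * N + S.Bb * R := by positivity
    linarith
  have hQ₁0 : 0 ≤ Q₁ := le_trans (mul_nonneg (by positivity) (by linarith)) hQ₁'
  set κ := 2 * S.a * S.m * E / (Q₁ + 2 * S.a * S.m) with hκ
  have hκ0 : 0 < κ := by positivity
  set β := (2 * (S.m : ℝ) - 1) * (S.α + 1) - 1 with hβ
  have hβ0 : 0 < β := by have := S.hmα; linarith
  set Q₃ := 2 + 4 * (S.m + S.m * E / κ) with hQ₃
  have hQ₃0 : 0 < Q₃ := by positivity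
  set Q₄ := (4 * S.m * E) ^ (S.α + 1) * R ^ β * (S.A * N * Q₃ + S.Bb * R) with hQ₄
  have hQ₄0 : 0 ≤ Q₄ := by positivity
  have hκp : 0 < (κ ^ 2) ^ (S.α + 1) := by positivity
  refine ⟨Q₄ / (κ ^ 2) ^ (S.α + 1), by positivity, fun z hz v hv hvR => ?_⟩
  have hr : 0 < ‖v‖ := norm_pos_iff.2 hv
  set r := ‖v‖ with hrdef
  set s := r ^ 2 with hs
  have hs0 : 0 < s := by positivity
  have hsE : s ^ S.m < E := by
    rw [hE, hs]
    exact pow_lt_pow_left₀ (pow_lt_pow_left₀ hvR hr.le two_ne_zero) (by positivity) (by omega)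
  set D := E - s ^ S.m with hD
  have hD0 : 0 < D := by linarith
  have hsm0 : 0 < s ^ S.m := by positivity
  set f₁ := S.bar₁ E s with hf₁
  set f₂ := S.bar₂ E s with hf₂
  have hf₁e : f₁ = 2 * S.m * D * s ^ (S.m - 1) := rfl
  have hf₁0 : 0 < f₁ := by rw [hf₁e]; positivity
  have hf₂e : f₂ * s = 2 * S.m * s ^ (S.m - 1) * ((S.m - 1) * D - S.m * s ^ S.m) := by
    rw [show s ^ (S.m - 1) = s ^ (S.m - 2) * s by
      rw [← pow_succ]; congr 1; omega]
    simp only [hf₂, bar₂, ← hD]; ring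
  have hp : (2 * f₁) • v ≠ 0 := smul_ne_zero (by positivity) hv
  have hpn : ‖(2 * f₁) • v‖ = 2 * f₁ * r := by
    rw [norm_smul, Real.norm_of_nonneg (by positivity)]
  have hbar : |S.bar E s| = D ^ 2 := by
    simp only [bar, abs_neg, ← hD]; exact abs_of_pos (by positivity)
  refine ⟨hp, ?_⟩
  rw [hbar]
  have hsm1 : 0 < s ^ (S.m - 1) := by positivity
  rcases le_total D κ with hcase | hcase
  · -- near the sphere
    have h1 : D * (Q₁ + 2 * S.a * S.m) ≤ 2 * S.a * S.m * E := by
      rw [hκ, le_div_iff₀ (by positivity)] at hcase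
      exact hcase
    have h2 : D * Q₁ ≤ 2 * S.a * S.m * s ^ S.m := by
      have : s ^ S.m = E - D := by rw [hD]; ring
      rw [this]; linarith
    have h3 : (S.m - 1) * D - S.m * s ^ S.m ≤ 0 := by
      have h4 := mul_le_mul_of_nonneg_left hQ₁' hD0.le
      have h5 : 2 * S.a * ((S.m - 1) * D - S.m * s ^ S.m) ≤ 0 := by linarith
      by_contra h
      have := mul_pos (mul_pos two_pos ha) (not_le.1 h)
      linarith
    have hf₂0 : f₂ ≤ 0 := mul_nonpos_of_nonneg_of_nonpos (by positivity) h3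
    have hle := S.Op_radial_le hz hp hf₂0
    refine hle.trans (le_trans ?_ (by positivity : (0:ℝ) ≤ _))
    refine mul_nonpos_of_nonneg_of_nonpos (by positivity) ?_
    rw [hpn, abs_of_pos hf₁0, ← hrdef, ← hs, mul_assoc (4 * S.a), hf₂e, hf₁e]
    have h6 : S.Bb * (2 * (2 * S.m * D * s ^ (S.m - 1)) * r)
        ≤ S.Bb * (2 * (2 * S.m * D * s ^ (S.m - 1)) * R) := by gcongr
    have h7 : 4 * S.m * s ^ (S.m - 1) * (D * Q₁ - 2 * S.a * S.m * s ^ S.m) ≤ 0 :=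
      mul_nonpos_of_nonneg_of_nonpos (by positivity) (by linarith)
    rw [hQ₁] at h7
    linarith
  · -- away from the sphere
    have hkey := (le_abs_self _).trans (S.abs_Op_le hz hp (symm_radial (2 * f₁) (4 * f₂) v))
    have hp0 : 0 < ‖(2 * f₁) • v‖ := norm_pos_iff.2 hp
    have hf₂s : |f₂| * s ≤ (S.m + S.m * E / κ) * f₁ := by
      have h1 : |f₂| * s = |f₂ * s| := by rw [abs_mul, abs_of_pos hs0]
      have h2 : |(S.m - 1) * D - S.m * s ^ S.m| ≤ (S.m + S.m * E / κ) * D := by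
        have h3 : S.m * s ^ S.m ≤ S.m * E / κ * D := by
          calc S.m * s ^ S.m ≤ S.m * E := by gcongr
            _ = S.m * E / κ * κ := by field_simp
            _ ≤ _ := by gcongr
        have h4 : 0 ≤ S.m * s ^ S.m := by positivity
        have h5 : 0 ≤ (S.m - 1) * D := mul_nonneg (by linarith) hD0.le
        rw [abs_le]; constructor <;> linarith
      rw [h1, hf₂e, abs_mul, abs_of_pos (by positivity : 0 < 2 * S.m * s ^ (S.m - 1)), hf₁e]
      have := mul_le_mul_of_nonneg_left h2 (by positivity : 0 ≤ 2 * S.m * s ^ (S.m - 1))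
      linarith
    have hM : matNorm ((2 * f₁) • (1 : Mat N) + (4 * f₂) • outer v) ≤ Q₃ * f₁ := by
      refine (matNorm_add_le _ _).trans ?_
      rw [matNorm_smul, matNorm_smul, abs_mul, abs_mul, abs_two, abs_of_pos hf₁0,
        abs_of_pos (by norm_num : (0:ℝ) < 4)]
      have h3 : 2 * f₁ * matNorm (1 : Mat N) ≤ 2 * f₁ :=
        mul_le_of_le_one_right (by positivity) matNorm_one_le
      have h4 : 4 * |f₂| * matNorm (outer v) ≤ 4 * |f₂| * s :=
        mul_le_mul_of_nonneg_left (matNorm_outer_le v) (by positivity)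
      rw [hQ₃]
      linarith
    have hpf : f₁ = ‖(2 * f₁) • v‖ / (2 * r) := by rw [hpn]; field_simp
    have hple : ‖(2 * f₁) • v‖ ≤ (4 * S.m * E) * r ^ (2 * S.m - 1) := by
      rw [hpn, hf₁e, hs, ← pow_mul,
        show 2 * S.m - 1 = 2 * (S.m - 1) + 1 by omega, pow_succ]
      have : D ≤ E := by linarith
      have := mul_le_mul_of_nonneg_right this
        (by positivity : 0 ≤ 4 * S.m * (r ^ (2 * (S.m - 1)) * r))
      linarith
    have hpow : ‖(2 * f₁) • v‖ ^ (S.α + 1) ≤ (4 * S.m * E) ^ (S.α + 1) * r ^ β * r := by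
      refine (Real.rpow_le_rpow hp0.le hple hα.le).trans (le_of_eq ?_)
      rw [Real.mul_rpow (by positivity) (by positivity), ← Real.rpow_natCast,
        ← Real.rpow_mul hr.le, mul_assoc (_ ^ (S.α + 1)), ← Real.rpow_add_one hr.ne']
      congr 2
      rw [hβ, Nat.cast_sub (by omega)]
      push_cast
      ring
    have hrβ : r ^ β ≤ R ^ β := Real.rpow_le_rpow hr.le hvR.le hβ0.le
    set T := (4 * S.m * E) ^ (S.α + 1) with hT
    have hT0 : 0 < T := by positivity
    have hfin : S.Op z ((2 * f₁) • v) ((2 * f₁) • 1 + (4 * f₂) • outer v) ≤ Q₄ := by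
      calc _ ≤ _ := hkey
        _ ≤ S.A * N * ‖(2 * f₁) • v‖ ^ S.α * (Q₃ * (‖(2 * f₁) • v‖ / (2 * r)))
            + S.Bb * ‖(2 * f₁) • v‖ ^ (S.α + 1) := by
          rw [← hpf]; gcongr
        _ = ‖(2 * f₁) • v‖ ^ (S.α + 1) * (1 / r) * (S.A * N * (Q₃ / 2) + S.Bb * r) := by
          rw [Real.rpow_add_one hp0.ne']; field_simp
        _ ≤ (T * r ^ β * r) * (1 / r) * (S.A * N * (Q₃ / 2) + S.Bb * r) := by gcongr
        _ = (T * r ^ β) * (S.A * N * (Q₃ / 2) + S.Bb * r) := by field_simp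
        _ ≤ (T * R ^ β) * (S.A * N * Q₃ + S.Bb * R) := by
          have : Q₃ / 2 ≤ Q₃ := by linarith
          gcongr
    have hDκ : (κ ^ 2) ^ (S.α + 1) ≤ (D ^ 2) ^ (S.α + 1) :=
      Real.rpow_le_rpow (by positivity) (by gcongr) hα.le
    calc _ ≤ Q₄ := hfin
      _ = Q₄ / (κ ^ 2) ^ (S.α + 1) * (κ ^ 2) ^ (S.α + 1) := by field_simp
      _ ≤ _ := by gcongr

end Setup

/-! ### The set of admissible parameters -/

lemma abs_rpow_mul_of_nonpos {α : ℝ} (hα : -1 < α) {r : ℝ} (hr : r ≤ 0) :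
    |r| ^ α * r = -|r| ^ (α + 1) := by
  rcases hr.eq_or_lt with rfl | h
  · rw [abs_zero, mul_zero, Real.zero_rpow (by linarith), neg_zero]
  · rw [Real.rpow_add_one (abs_pos.2 h.ne).ne']
    nth_rw 2 [show r = -|r| by rw [abs_of_neg h, neg_neg]]
    ring

lemma continuous_abs_rpow_mul {α : ℝ} (hα : -1 < α) : Continuous fun r : ℝ => |r| ^ α * r := by
  have h : (fun r : ℝ => |r| ^ α * r) = fun r => (max r 0) ^ (α + 1) - (max (-r) 0) ^ (α + 1) := by
    funext r
    rcases le_total r 0 with h | h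
    · rw [abs_rpow_mul_of_nonpos hα h, max_eq_right h, max_eq_left (by linarith),
        Real.zero_rpow (by linarith), abs_of_nonpos h, zero_sub]
    · have h1 := abs_rpow_mul_of_nonpos hα (r := -r) (by linarith)
      rw [abs_neg] at h1
      rw [max_eq_left h, max_eq_right (by linarith), Real.zero_rpow (by linarith), sub_zero,
        show |r| ^ α * r = |r| ^ (α + 1) by linarith, abs_of_nonneg h]
  rw [h]
  have hα' : 0 ≤ α + 1 := by linarith
  exact ((continuous_id.max continuous_const).rpow_const fun _ => Or.inr hα').sub
    ((continuous_neg.max continuous_const).rpow_const fun _ => Or.inr hα')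

namespace Setup

variable {N : ℕ} (S : Setup N)

/-- The zeroth order term `(c + λ)|r|^α r - g`. -/
def en (c g : EN N → ℝ) (lam : ℝ) (x : EN N) (r : ℝ) : ℝ := (c x + lam) * (|r| ^ S.α * r) - g x

variable {S} in
lemma en_of_nonpos {c g : EN N → ℝ} {lam : ℝ} {x : EN N} {r : ℝ} (hr : r ≤ 0) :
    S.en c g lam x r = -((c x + lam) * |r| ^ (S.α + 1)) - g x := by
  rw [en, abs_rpow_mul_of_nonpos S.hα hr]; ring

lemma continuousOn_en {c g : EN N → ℝ} (hc : ContinuousOn c S.K) (hg : ContinuousOn g S.K)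
    (lam : ℝ) : ContinuousOn (fun q : EN N × ℝ => S.en c g lam q.1 q.2) (S.K ×ˢ univ) := by
  have h1 : ∀ f : EN N → ℝ, ContinuousOn f S.K →
      ContinuousOn (fun q : EN N × ℝ => f q.1) (S.K ×ˢ univ) := fun f hf =>
    hf.comp continuous_fst.continuousOn fun q hq => hq.1
  exact (((h1 c hc).add continuousOn_const).mul
    ((continuous_abs_rpow_mul S.hα).comp continuous_snd).continuousOn).sub (h1 g hg)

/-- The set defining `λ̲`, in terms of `SubAt`. -/
def LS (c : EN N → ℝ) : Set ℝ :=
  {lam | ∃ u : EN N → ℝ, UpperSemicontinuousOn u S.K ∧ (∀ x ∈ S.K, u x < 0) ∧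
    (∃ M, ∀ x ∈ S.K, M ≤ u x) ∧ ∀ x ∈ S.K, S.SubAt (S.en c (fun _ => 0) lam) u x}

lemma lamLowSet_eq {c : EN N → ℝ} (hc : ContinuousOn c S.K) :
    lamLowSet S.Ω S.nv S.F S.b c S.α = S.LS c := by
  ext lam
  have hec : ∀ x r, S.en c (fun _ => 0) lam x r = (c x + lam) * |r| ^ S.α * r - 0 := fun x r => by
    rw [en]; ring
  constructor
  · rintro ⟨u, h1, h2, h3, h4⟩
    exact ⟨u, h1, h2, h3, S.subAt_of_isSubSol hec (S.continuousOn_en hc continuousOn_const lam)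
      h1 h4⟩
  · rintro ⟨u, h1, h2, h3, h4⟩
    exact ⟨u, h1, h2, h3, S.isSubSol_of_subAt hec h4⟩

lemma exists_bound {c : EN N → ℝ} (hc : ContinuousOn c S.K) :
    ∃ B, 0 ≤ B ∧ ∀ x ∈ S.K, |c x| ≤ B := by
  obtain ⟨B, hB⟩ := S.isCompact_K.exists_bound_of_continuousOn hc
  exact ⟨max B 0, le_max_right _ _, fun x hx => (hB x hx).trans (le_max_left _ _)⟩

lemma LS_nonempty {c : EN N → ℝ} (hc : ContinuousOn c S.K) : (S.LS c).Nonempty := by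
  obtain ⟨B, -, hB⟩ := S.exists_bound hc
  refine ⟨-B, fun _ => -1, continuousOn_const.upperSemicontinuousOn, fun _ _ => by norm_num,
    ⟨-1, fun _ _ => le_rfl⟩, fun x hx => ?_⟩
  have hj : SubJet S.K (fun _ => (-1 : ℝ)) x 0 0 := fun ε hε => Eventually.of_forall fun y => by
    rw [inner_zero_left, qf_zero]
    have : 0 ≤ ε * ‖y - x‖ ^ 2 := by positivity
    linarith
  rcases S.mem_cases hx with h | h
  · refine subAt_of_subJet_interior h hj (by simp [Matrix.IsSymm]) (fun h => absurd rfl h) fun _ => ?_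
    rw [en_of_nonpos (by norm_num)]
    have := (abs_le.1 (hB x hx)).2
    rw [abs_neg, abs_one, Real.one_rpow]
    linarith
  · exact subAt_of_subJet_boundary h hj (by rw [inner_zero_left])

lemma LS_bddAbove {c : EN N → ℝ} (hc : ContinuousOn c S.K) : BddAbove (S.LS c) := by
  obtain ⟨B, hB0, hB⟩ := S.exists_bound hc
  obtain ⟨t, ht⟩ := S.nonempty_Ω
  obtain ⟨R₀, hR₀, hball⟩ := Metric.isOpen_iff.1 S.isOpen_Ω t ht
  set R := R₀ / 2 with hR
  have hR0 : 0 < R := by positivity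
  have hcb : closedBall t R ⊆ S.Ω := (closedBall_subset_ball (by linarith)).trans hball
  have hcK : closedBall t R ⊆ S.K := hcb.trans S.Ω_sub_K
  obtain ⟨Q, hQ0, hQ⟩ := S.Op_bar_le hR0
  have hm := S.hm
  refine ⟨Q + B, ?_⟩
  rintro lam ⟨u, hu, hneg, ⟨M, hM⟩, hsub⟩
  set E := (R ^ 2) ^ S.m with hE
  have hE0 : 0 < E := by positivity
  set f : EN N → ℝ := fun x => S.bar E (‖x - t‖ ^ 2) with hf
  have hfc : Continuous f := by
    simp only [hf, bar]; fun_prop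
  have hf0 : ∀ x, f x ≤ 0 := fun x => by
    simp only [hf, bar]; exact neg_nonpos.2 (sq_nonneg _)
  have hft : f t = -E ^ 2 := by
    simp only [hf, bar, sub_self, norm_zero]
    rw [zero_pow two_ne_zero, zero_pow (by omega), sub_zero]
  obtain ⟨G, hG⟩ := (isCompact_closedBall t R).exists_bound_of_continuousOn hfc.continuousOn
  have htb : t ∈ closedBall t R := mem_closedBall_self hR0.le
  -- the largest multiple of the barrier lying above `u` touches it
  set T := {σ : ℝ | 0 ≤ σ ∧ ∀ x ∈ closedBall t R, u x ≤ σ * f x} with hT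
  have hT0 : (0 : ℝ) ∈ T := ⟨le_rfl, fun x hx => by rw [zero_mul]; exact (hneg x (hcK hx)).le⟩
  have hTb : BddAbove T := by
    refine ⟨-u t / E ^ 2, fun σ hσ => ?_⟩
    have := hσ.2 t htb
    rw [hft] at this
    rw [le_div_iff₀ (by positivity)]
    linarith
  set τ := sSup T with hτ
  have hτ0 : 0 ≤ τ := le_csSup hTb hT0
  have hτT : ∀ x ∈ closedBall t R, u x ≤ τ * f x := by
    intro x hx
    rcases (hf0 x).eq_or_lt with h | h
    · rw [h, mul_zero]; exact (hneg x (hcK hx)).le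
    · have : τ ≤ u x / f x := csSup_le ⟨0, hT0⟩ fun σ hσ => by
        rw [le_div_iff_of_neg h]; exact hσ.2 x hx
      rwa [le_div_iff_of_neg h] at this
  obtain ⟨z, hz, hzmax⟩ := exists_isMax (u := fun x => u x - τ * f x) (isCompact_closedBall t R)
    ⟨t, htb⟩ (by
      have : UpperSemicontinuousOn (fun x => -(τ * f x)) (closedBall t R) :=
        (continuous_const.mul hfc).neg.continuousOn.upperSemicontinuousOn
      simp only [sub_eq_add_neg (u _)]
      exact (hu.mono hcK).add this)
  have htouch : u z = τ * f z := by
    by_contra hne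
    have hlt : u z - τ * f z < 0 := sub_neg.2 (lt_of_le_of_ne (hτT z hz) hne)
    set h := -(u z - τ * f z) with hh
    have hh0 : 0 < h := by linarith
    have hG0 : 0 ≤ G := (norm_nonneg _).trans (hG t htb)
    have hmem : τ + h / (G + 1) ∈ T := by
      refine ⟨by positivity, fun x hx => ?_⟩
      have h1 := hzmax x hx
      have h2 : |f x| ≤ G := hG x hx
      have h3 : -f x ≤ G := (neg_le_abs _).trans h2
      have h4 : h / (G + 1) * (-f x) ≤ h / (G + 1) * (G + 1) :=
        mul_le_mul_of_nonneg_left (by linarith) (by positivity)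
      rw [div_mul_cancel₀ _ (by positivity)] at h4
      linarith
    have h1 := le_csSup hTb hmem
    have h2 : 0 < h / (G + 1) := by positivity
    linarith
  have huz : u z < 0 := hneg z (hcK hz)
  have hτ1 : 0 < τ := lt_of_le_of_ne hτ0 fun h => by rw [← h, zero_mul] at htouch; linarith
  have hfz : f z < 0 := lt_of_le_of_ne (hf0 z) fun h => by rw [h, mul_zero] at htouch; linarith
  have hzR : ‖z - t‖ < R := by
    have h1 : ‖z - t‖ ≤ R := by rw [← dist_eq_norm]; exact hz
    refine lt_of_le_of_ne h1 fun h => hfz.ne ?_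
    simp only [hf, bar, h, ← hE, sub_self]
    norm_num
  have hnear : ∀ᶠ x in 𝓝[S.K] z, u x ≤ τ * f x := by
    have : ball t R ∈ 𝓝 z := isOpen_ball.mem_nhds (by rw [mem_ball, dist_eq_norm]; exact hzR)
    filter_upwards [mem_nhdsWithin_of_mem_nhds this] with x hx using hτT x (ball_subset_closedBall hx)
  have hzK := hcK hz
  have hup : 0 < |u z| ^ (S.α + 1) := Real.rpow_pos_of_pos (abs_pos.2 huz.ne) _
  have hcz := (abs_le.1 (hB z hzK)).1
  by_cases hzt : z = t
  · subst hzt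
    have h1 := (hsub z hzK).pow (hcb hz) (2 * τ * E) (by
      filter_upwards [hnear] with x hx
      refine hx.trans ?_
      rw [htouch, hft]
      simp only [hf, bar, pow_mul]
      have : 0 ≤ τ * ((‖x - z‖ ^ 2) ^ S.m) ^ 2 := by positivity
      linarith)
    rw [en_of_nonpos huz.le, sub_zero] at h1
    by_contra hcon
    have := mul_pos (show 0 < c z + lam by linarith) hup
    linarith
  · have hv : z - t ≠ 0 := sub_ne_zero.2 hzt
    obtain ⟨hp, hOp⟩ := hQ z hzK (z - t) hv hzR
    set f₁ := S.bar₁ E (‖z - t‖ ^ 2) with hf₁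
    set f₂ := S.bar₂ E (‖z - t‖ ^ 2) with hf₂
    have hj : SupJet S.K u z (τ • ((2 * f₁) • (z - t)))
        (τ • ((2 * f₁) • 1 + (4 * f₂) • outer (z - t))) := by
      intro ε hε
      have htay := radial_taylor (f := S.bar E) (f' := S.bar₁ E) (f₂ := f₂) (t := t) (z := z)
        (Eventually.of_forall fun s => S.hasDerivAt_bar E s)
        (S.hasDerivAt_bar₁ E (‖z - t‖ ^ 2)) (ε := ε / τ) (by positivity)
      filter_upwards [hnear, mem_nhdsWithin_of_mem_nhds htay] with x h1 h2
      have h3 := mul_le_mul_of_nonneg_left (abs_le.1 h2).2 hτ0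
      rw [show τ * (ε / τ * ‖x - z‖ ^ 2) = ε * ‖x - z‖ ^ 2 by field_simp] at h3
      rw [real_inner_smul_left, qf_smul, htouch]
      simp only [← hf₁] at h3
      simp only [hf] at h1 ⊢
      linarith
    have hsym := symm_radial (2 * f₁) (4 * f₂) (z - t)
    have h1 := (hsub z hzK).jet _ _ (smul_ne_zero hτ1.ne' hp) (hsym.smul τ) hj
      fun h => absurd (hcb hz) (S.not_mem_Ω_of_frontier h)
    rw [S.Op_homog hzK hp hsym hτ1, en_of_nonpos huz.le, sub_zero] at h1
    have h2 : |u z| ^ (S.α + 1) = τ ^ (S.α + 1) * |f z| ^ (S.α + 1) := by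
      rw [htouch, abs_mul, abs_of_pos hτ1, Real.mul_rpow hτ0 (abs_nonneg _)]
    have h3 := mul_le_mul_of_nonneg_left hOp (Real.rpow_nonneg hτ0 (S.α + 1))
    have h4 : (c z + lam) * |u z| ^ (S.α + 1) ≤ Q * |u z| ^ (S.α + 1) := by
      calc (c z + lam) * |u z| ^ (S.α + 1) ≤ _ := by linarith
        _ ≤ _ := h3
        _ = _ := by rw [h2]; ring
    have h5 := le_of_mul_le_mul_right h4 hup
    linarith

/-! ### Solutions below the eigenvalue -/

lemma adm_zero {c g : EN N → ℝ} (hc : ContinuousOn c S.K) (hg0 : ∀ x ∈ S.K, 0 ≤ g x) {lam m : ℝ}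
    {u : EN N → ℝ} (hu : S.Adm (S.en c g lam) m u) {x : EN N} (hx : x ∈ S.K) (h : u x = 0) :
    ∀ z ∈ S.Ω, u z = 0 := by
  obtain ⟨B, hB0, hB⟩ := S.exists_bound hc
  refine S.strong_max (C := B + |lam|) (by positivity) (fun z hz r hr => ?_) hu.usc
    (fun x hx => (hu.bd x hx).2) hu.sub hx h
  rw [en_of_nonpos hr]
  have h1 := (abs_le.1 (hB z hz)).1
  have h2 := neg_abs_le lam
  have h3 := hg0 z hz
  have h4 : 0 ≤ (c z + lam + (B + |lam|)) * |r| ^ (S.α + 1) :=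
    mul_nonneg (by linarith) (Real.rpow_nonneg (abs_nonneg _) _)
  linarith

/-- Subsolutions with right-hand side `g ≥ 0`, `g ≢ 0` are negative. -/
lemma adm_neg {c g : EN N → ℝ} (hc : ContinuousOn c S.K) (hg : ContinuousOn g S.K)
    (hg0 : ∀ x ∈ S.K, 0 ≤ g x) (hgne : ∃ x ∈ S.K, g x ≠ 0) {lam m : ℝ} {u : EN N → ℝ}
    (hu : S.Adm (S.en c g lam) m u) : ∀ x ∈ S.K, u x < 0 := by
  intro x hx
  refine lt_of_le_of_ne (hu.bd x hx).2 fun h => ?_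
  have hzero := S.adm_zero hc hg0 hu hx h
  have hgΩ : EqOn g (fun _ => 0) S.Ω := by
    intro z hz
    have h1 := (hu.sub z (S.Ω_sub_K hz)).pow hz 0 (by
      rw [S.nhdsWithin_K hz]
      filter_upwards [S.isOpen_Ω.mem_nhds hz] with y hy
      rw [hzero y hy, hzero z hz]; simp)
    rw [hzero z hz, en, mul_zero, mul_zero, zero_sub] at h1
    exact le_antisymm (by linarith) (hg0 z (S.Ω_sub_K hz))
  have hgK : EqOn g (fun _ => 0) S.K :=
    hgΩ.of_subset_closure hg continuousOn_const S.Ω_sub_K subset_rfl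
  obtain ⟨y, hy, hy'⟩ := hgne
  exact hy' (hgK hy)

/-- Below an admissible parameter, the largest subsolution with values in `[-m, 0]` is a negative
solution, for a suitable `m`. -/
lemma solve {c g : EN N → ℝ} (hc : ContinuousOn c S.K) (hg : ContinuousOn g S.K)
    (hg0 : ∀ x ∈ S.K, 0 ≤ g x) (hgne : ∃ x ∈ S.K, g x ≠ 0) {lam lam' : ℝ} (hlam : lam < lam')
    (hl : lam' ∈ S.LS c) : ∃ m W, S.Adm (S.en c g lam) m W ∧ ContinuousOn W S.K ∧
      (∀ u, S.Adm (S.en c g lam) m u → ∀ x ∈ S.K, u x ≤ W x) ∧ (∀ x ∈ S.K, W x < 0) ∧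
      ∀ x ∈ S.K, S.SuperAt (S.en c g lam) W x := by
  obtain ⟨u, hu, hneg, ⟨M, hM⟩, hsub⟩ := hl
  have hα := S.hα1
  obtain ⟨Bg, hBg0, hBg⟩ := S.exists_bound hg
  obtain ⟨z, hz, hzm⟩ := exists_isMax S.isCompact_K S.nonempty_K hu
  have hd := hneg z hz
  have hdp : 0 < |u z| ^ (S.α + 1) := Real.rpow_pos_of_pos (abs_pos.2 hd.ne) _
  obtain ⟨t, ht0, ht⟩ : ∃ t : ℝ, 0 < t ∧ Bg / ((lam' - lam) * |u z| ^ (S.α + 1)) ≤ t ^ (S.α + 1) :=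
    ((eventually_gt_atTop 0).and ((tendsto_rpow_atTop hα).eventually_ge_atTop _)).exists
  have hll : 0 < lam' - lam := by linarith
  rw [div_le_iff₀ (by positivity)] at ht
  have hadm : S.Adm (S.en c g lam) (-(t * M)) (fun x => t * u x) := by
    refine ⟨?_, fun x hx => ⟨?_, ?_⟩, fun x hx => ?_⟩
    · have hcm : Continuous fun r : ℝ => t * r := by fun_prop
      exact hcm.comp_upperSemicontinuousOn hu fun _ _ h => by dsimp only; gcongr
    · rw [neg_neg]; exact mul_le_mul_of_nonneg_left (hM x hx) ht0.le
    · exact (mul_neg_of_pos_of_neg ht0 (hneg x hx)).le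
    · refine (hsub x hx).scale hx ht0 ?_
      have hx0 := hneg x hx
      rw [en_of_nonpos hx0.le, en_of_nonpos (mul_neg_of_pos_of_neg ht0 hx0).le, abs_mul,
        abs_of_pos ht0, Real.mul_rpow ht0.le (abs_nonneg _), sub_zero]
      have h1 : |u z| ^ (S.α + 1) ≤ |u x| ^ (S.α + 1) := by
        refine Real.rpow_le_rpow (abs_nonneg _) ?_ hα.le
        rw [abs_of_neg hd, abs_of_neg hx0]
        have := hzm x hx
        linarith
      have h2 : t ^ (S.α + 1) * ((lam' - lam) * |u z| ^ (S.α + 1)) ≤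
          t ^ (S.α + 1) * ((lam' - lam) * |u x| ^ (S.α + 1)) := by gcongr
      have h3 := (le_abs_self _).trans (hBg x hx)
      linarith
  have hec := S.continuousOn_en hc hg lam
  obtain ⟨W, h1, h2, h3⟩ := S.exists_max_sub hec hadm
  have h4 := S.adm_neg hc hg hg0 hgne h1
  exact ⟨_, W, h1, h2, h3, h4, fun x hx => superAt_of_max hec h1 h2 h3 hx (h4 x hx)⟩

end Setup

/-! ### The principal eigenfunction -/

namespace Setup

variable {N : ℕ} (S : Setup N)

/-- Normalized solutions below the eigenvalue are uniformly Lipschitz; the normalization divides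
by `max (‖W‖, 1)`, which turns the right-hand side `1` into a constant `γ ∈ (0, 1]`. -/
lemma exists_normalized {c : EN N → ℝ} (hc : ContinuousOn c S.K) (Λ : ℝ) : ∃ κ : ℝ, 0 ≤ κ ∧
    ∀ lam lam', |lam| ≤ Λ → lam < lam' → lam' ∈ S.LS c → ∃ (v : EN N → ℝ) (γ : ℝ),
      0 ≤ γ ∧ γ ≤ 1 ∧ (∀ x ∈ S.K, -1 ≤ v x ∧ v x ≤ 0) ∧
      (∀ x ∈ S.K, ∀ y ∈ S.K, |v x - v y| ≤ κ * ‖x - y‖) ∧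
      (∀ x ∈ S.K, S.SubAt (S.en c (fun _ => γ) lam) v x) ∧
      (∀ x ∈ S.K, S.SuperAt (S.en c (fun _ => γ) lam) v x) ∧
      (γ = 1 ∨ ∃ z ∈ S.K, v z = -1) := by
  obtain ⟨B, hB0, hB⟩ := S.exists_bound hc
  obtain ⟨C₀, hC₀, H⟩ := S.exists_conv
  have hα := S.hα1
  obtain ⟨k, hk1, hk⟩ : ∃ k : ℝ, 1 ≤ k ∧ B + Λ + 1 ≤ k ^ (S.α + 1) :=
    ((eventually_ge_atTop 1).and ((tendsto_rpow_atTop hα).eventually_ge_atTop _)).exists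
  refine ⟨C₀ * k, by positivity, fun lam lam' hΛ hlam hl => ?_⟩
  obtain ⟨m, W, hW, hWc, hmax, hWn, hsup⟩ := S.solve (g := fun _ => 1) hc continuousOn_const
    (fun _ _ => zero_le_one) ⟨_, S.nonempty_K.some_mem, one_ne_zero⟩ hlam hl
  obtain ⟨z, hz, hzmin⟩ := S.isCompact_K.exists_isMinOn S.nonempty_K hWc
  have hzmin : ∀ x ∈ S.K, W z ≤ W x := fun x hx => hzmin hx
  set t := max (-W z) 1 with ht
  have ht1 : 1 ≤ t := le_max_right _ _
  have ht0 : 0 < t := by linarith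
  have htW : -W z ≤ t := le_max_left _ _
  have hti : 0 < t⁻¹ := inv_pos.2 ht0
  have hΛ0 : 0 ≤ Λ := (abs_nonneg _).trans hΛ
  have hbound : ∀ x ∈ S.K, ∀ r, -(-W z) ≤ r → r ≤ 0 →
      |S.en c (fun _ => 1) lam x r| ≤ (k * t) ^ (S.α + 1) := by
    intro x hx r hr hr0
    rw [en_of_nonpos hr0, Real.mul_rpow (by positivity) ht0.le]
    have h1 : |r| ^ (S.α + 1) ≤ t ^ (S.α + 1) :=
      Real.rpow_le_rpow (abs_nonneg _) (by rw [abs_of_nonpos hr0]; linarith) hα.le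
    have h2 : |c x + lam| ≤ B + Λ := (abs_add_le _ _).trans (add_le_add (hB x hx) hΛ)
    have h3 : 1 ≤ t ^ (S.α + 1) := Real.one_le_rpow ht1 hα.le
    calc |-((c x + lam) * |r| ^ (S.α + 1)) - 1| ≤ |-((c x + lam) * |r| ^ (S.α + 1))| + |(1 : ℝ)| :=
          abs_sub _ _
      _ = |c x + lam| * |r| ^ (S.α + 1) + 1 := by
          rw [abs_neg, abs_mul, abs_one, abs_of_nonneg (Real.rpow_nonneg (abs_nonneg r) _)]
      _ ≤ (B + Λ) * t ^ (S.α + 1) + t ^ (S.α + 1) := by gcongr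
      _ = (B + Λ + 1) * t ^ (S.α + 1) := by ring
      _ ≤ _ := by gcongr
  obtain ⟨U, hU1, hU2, hU3⟩ := H _ W (-W z) (k * t) (by positivity) (htW.trans (by
    have := mul_le_mul_of_nonneg_right hk1 ht0.le
    linarith)) hW.usc
    (fun x hx => ⟨by rw [neg_neg]; exact hzmin x hx, (hW.bd x hx).2⟩) hW.sub hbound
  have hUW : ∀ x ∈ S.K, U x = W x := by
    intro x hx
    refine le_antisymm (hmax U ⟨?_, fun x hx => ⟨(hW.bd x hx).1.trans (hU1 x hx).1, (hU1 x hx).2⟩,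
      hU3⟩ x hx) (hU1 x hx).1
    have : LipschitzOnWith (Real.toNNReal (C₀ * (k * t))) U S.K :=
      LipschitzOnWith.of_dist_le_mul fun x hx y hy => by
        rw [Real.coe_toNNReal _ (by positivity), Real.dist_eq, dist_eq_norm]
        exact hU2 x hx y hy
    exact this.continuousOn.upperSemicontinuousOn
  have hen : ∀ x ∈ S.K, t⁻¹ ^ (S.α + 1) * S.en c (fun _ => 1) lam x (W x) =
      S.en c (fun _ => t⁻¹ ^ (S.α + 1)) lam x (t⁻¹ * W x) := by
    intro x hx
    have hx0 := (hW.bd x hx).2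
    rw [en_of_nonpos hx0, en_of_nonpos (mul_nonpos_of_nonneg_of_nonpos hti.le hx0), abs_mul,
      abs_of_pos hti, Real.mul_rpow hti.le (abs_nonneg _)]
    ring
  refine ⟨fun x => t⁻¹ * W x, t⁻¹ ^ (S.α + 1), by positivity,
    Real.rpow_le_one hti.le (inv_le_one_of_one_le₀ ht1) hα.le, fun x hx => ⟨?_, ?_⟩,
    fun x hx y hy => ?_, fun x hx => (hW.sub x hx).scale hx hti (hen x hx).le,
    fun x hx => (hsup x hx).scale hx hti (hen x hx).ge, ?_⟩
  · have h1 := hzmin x hx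
    have h2 := mul_le_mul_of_nonneg_left (show -t ≤ W x by linarith) hti.le
    rwa [mul_neg, inv_mul_cancel₀ ht0.ne'] at h2
  · exact mul_nonpos_of_nonneg_of_nonpos hti.le (hW.bd x hx).2
  · have h1 := hU2 x hx y hy
    rw [hUW x hx, hUW y hy] at h1
    rw [← mul_sub, abs_mul, abs_of_pos hti]
    calc t⁻¹ * |W x - W y| ≤ t⁻¹ * (C₀ * (k * t) * ‖x - y‖) := by gcongr
      _ = _ := by field_simp
  · rcases le_total (-W z) 1 with h | h
    · left; rw [ht, max_eq_right h, inv_one, Real.one_rpow]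
    · right
      refine ⟨z, hz, ?_⟩
      change t⁻¹ * W z = -1
      rw [ht, max_eq_left h, inv_neg, neg_mul, inv_mul_cancel₀ (hWn z hz).ne]

/-- Equi-Lipschitz functions converging pointwise on the closed domain converge uniformly. -/
lemma uniform_of_pointwise {l : Filter ℕ} {v : ℕ → EN N → ℝ} {V : EN N → ℝ} {κ : ℝ} (hκ : 0 ≤ κ)
    (hv : ∀ n, ∀ x ∈ S.K, ∀ y ∈ S.K, |v n x - v n y| ≤ κ * ‖x - y‖)
    (hV : ∀ x ∈ S.K, ∀ y ∈ S.K, |V x - V y| ≤ κ * ‖x - y‖)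
    (hlim : ∀ x ∈ S.K, Tendsto (fun n => v n x) l (𝓝 (V x))) {δ : ℝ} (hδ : 0 < δ) :
    ∀ᶠ n in l, ∀ x ∈ S.K, |v n x - V x| ≤ δ := by
  set r := δ / (3 * (κ + 1)) with hr
  have hr0 : 0 < r := by positivity
  obtain ⟨T, hTK, hTf, hcov⟩ := S.isCompact_K.finite_cover_balls hr0
  have hκr : κ * r ≤ δ / 3 := by
    rw [hr, show δ / 3 = (κ + 1) * (δ / (3 * (κ + 1))) by field_simp]
    gcongr; linarith
  have hev : ∀ᶠ n in l, ∀ y ∈ T, |v n y - V y| < δ / 3 := by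
    refine (eventually_all_finite hTf).2 fun y hy => ?_
    have := Metric.tendsto_nhds.1 (hlim y (hTK hy)) (δ / 3) (by positivity)
    simpa only [Real.dist_eq] using this
  filter_upwards [hev] with n hn x hx
  obtain ⟨y, hy, hxy⟩ := mem_iUnion₂.1 (hcov hx)
  rw [mem_ball, dist_eq_norm] at hxy
  have h1 : κ * ‖x - y‖ ≤ δ / 3 := (mul_le_mul_of_nonneg_left hxy.le hκ).trans hκr
  have h2 := abs_le.1 ((hv n x hx y (hTK hy)).trans h1)
  have h3 := abs_le.1 ((hV x hx y (hTK hy)).trans h1)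
  have h4 := abs_lt.1 (hn y hy)
  rw [abs_le]
  constructor <;> linarith [h2.1, h2.2, h3.1, h3.2, h4.1, h4.2]

/-- Existence of a principal eigenfunction. -/
lemma exists_eigen {c : EN N → ℝ} (hc : ContinuousOn c S.K) : ∃ (V : EN N → ℝ) (κ : ℝ), 0 ≤ κ ∧
    (∀ x ∈ S.K, V x < 0) ∧ (∀ x ∈ S.K, ∀ y ∈ S.K, |V x - V y| ≤ κ * ‖x - y‖) ∧
    (∀ x ∈ S.K, S.SubAt (S.en c (fun _ => 0) (sSup (S.LS c))) V x) ∧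
    (∀ x ∈ S.K, S.SuperAt (S.en c (fun _ => 0) (sSup (S.LS c))) V x) := by
  set Λ := sSup (S.LS c) with hΛ
  have hbdd := S.LS_bddAbove hc
  have hne := S.LS_nonempty hc
  have hα := S.hα1
  obtain ⟨κ, hκ, H⟩ := S.exists_normalized hc (|Λ| + 1)
  have hseq : ∀ n : ℕ, ∃ (v : EN N → ℝ) (γ : ℝ), 0 ≤ γ ∧ γ ≤ 1 ∧
      (∀ x ∈ S.K, -1 ≤ v x ∧ v x ≤ 0) ∧
      (∀ x ∈ S.K, ∀ y ∈ S.K, |v x - v y| ≤ κ * ‖x - y‖) ∧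
      (∀ x ∈ S.K, S.SubAt (S.en c (fun _ => γ) (Λ - 1 / ((n : ℝ) + 1))) v x) ∧
      (∀ x ∈ S.K, S.SuperAt (S.en c (fun _ => γ) (Λ - 1 / ((n : ℝ) + 1))) v x) ∧
      (γ = 1 ∨ ∃ z ∈ S.K, v z = -1) := by
    intro n
    have h1 : 0 < 1 / ((n : ℝ) + 1) := by positivity
    have h2 : 1 / ((n : ℝ) + 1) ≤ 1 := by
      rw [div_le_one (by positivity)]; linarith [(Nat.cast_nonneg n : (0 : ℝ) ≤ n)]
    obtain ⟨lam', hl, hlt⟩ := exists_lt_of_lt_csSup hne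
      (show Λ - 1 / ((n : ℝ) + 1) < sSup (S.LS c) by rw [← hΛ]; linarith)
    refine H _ lam' ?_ hlt hl
    calc |Λ - 1 / ((n : ℝ) + 1)| ≤ |Λ| + |1 / ((n : ℝ) + 1)| := abs_sub _ _
      _ ≤ _ := by rw [abs_of_pos h1]; linarith
  choose v γ hγ0 hγ1 hvb hvl hsub hsup halt using hseq
  set l : Ultrafilter ℕ := hyperfilter ℕ with hl
  have hlat : (l : Filter ℕ) ≤ atTop := Nat.hyperfilter_le_atTop
  -- limits along the ultrafilter of bounded sequences
  have hlimit : ∀ (f : ℕ → ℝ) (p q : ℝ), (∀ n, f n ∈ Icc p q) →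
      ∃ y ∈ Icc p q, Tendsto f l (𝓝 y) := by
    intro f p q hf
    obtain ⟨y, hy, hle⟩ := (isCompact_Icc (a := p) (b := q)).ultrafilter_le_nhds (l.map f)
      (le_principal_iff.2 (mem_map.2 (univ_mem' hf)))
    exact ⟨y, hy, hle⟩
  obtain ⟨g, ⟨hg0, hg1⟩, hg⟩ := hlimit γ 0 1 fun n => ⟨hγ0 n, hγ1 n⟩
  have hptw : ∀ x, ∃ y, x ∈ S.K → y ∈ Icc (-1 : ℝ) 0 ∧ Tendsto (fun n => v n x) l (𝓝 y) := by
    intro x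
    by_cases hx : x ∈ S.K
    · obtain ⟨y, h1, h2⟩ := hlimit (fun n => v n x) (-1) 0 fun n => hvb n x hx
      exact ⟨y, fun _ => ⟨h1, h2⟩⟩
    · exact ⟨0, fun h => absurd h hx⟩
  choose V hV using hptw
  have hVl : ∀ x ∈ S.K, ∀ y ∈ S.K, |V x - V y| ≤ κ * ‖x - y‖ := fun x hx y hy =>
    le_of_tendsto (((hV x hx).2.sub (hV y hy).2).abs) (Eventually.of_forall fun n => hvl n x hx y hy)
  have hVc : ContinuousOn V S.K := by
    have : LipschitzOnWith (Real.toNNReal κ) V S.K :=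
      LipschitzOnWith.of_dist_le_mul fun x hx y hy => by
        rw [Real.coe_toNNReal _ hκ, Real.dist_eq, dist_eq_norm]
        exact hVl x hx y hy
    exact this.continuousOn
  have hvc : ∀ n, ContinuousOn (v n) S.K := fun n => by
    have : LipschitzOnWith (Real.toNNReal κ) (v n) S.K :=
      LipschitzOnWith.of_dist_le_mul fun x hx y hy => by
        rw [Real.coe_toNNReal _ hκ, Real.dist_eq, dist_eq_norm]
        exact hvl n x hx y hy
    exact this.continuousOn
  have hunif := fun (δ : ℝ) (hδ : 0 < δ) =>
    S.uniform_of_pointwise hκ hvl hVl (fun x hx => (hV x hx).2) hδ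
  -- the uniform distance
  set ε : ℕ → ℝ := fun n => ⨆ x : S.K, |v n x - V x| with hε
  have hKne : Nonempty S.K := S.nonempty_K.to_subtype
  have hεle : ∀ n, ∀ x ∈ S.K, |v n x - V x| ≤ ε n := by
    intro n x hx
    refine le_ciSup (f := fun x : S.K => |v n x - V x|) ⟨1, ?_⟩ ⟨x, hx⟩
    rintro _ ⟨y, rfl⟩
    have h1 := hvb n y y.2
    have h2 := (hV y y.2).1
    exact abs_le.2 ⟨by linarith [h1.1, h2.2], by linarith [h1.2, h2.1]⟩
  have hεlim : Tendsto ε l (𝓝 0) := by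
    refine Metric.tendsto_nhds.2 fun δ hδ => ?_
    filter_upwards [hunif (δ / 2) (by positivity)] with n hn
    have h1 : ε n ≤ δ / 2 := ciSup_le fun x => hn x x.2
    have h2 : 0 ≤ ε n := (abs_nonneg _).trans (hεle n _ S.nonempty_K.some_mem)
    rw [Real.dist_eq, sub_zero, abs_of_nonneg h2]
    linarith
  have hlam : Tendsto (fun n : ℕ => Λ - 1 / ((n : ℝ) + 1)) l (𝓝 Λ) := by
    have := (tendsto_one_div_add_atTop_nhds_zero_nat (𝕜 := ℝ)).const_sub Λ
    rw [sub_zero] at this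
    exact this.mono_left hlat
  have hen : ∀ x₀ ∈ S.K, ∀ y : ℝ, ∀ (z : ℕ → EN N) (r : ℕ → ℝ), (∀ i, z i ∈ S.K) →
      Tendsto z l (𝓝 x₀) → Tendsto r l (𝓝 y) →
      Tendsto (fun i => S.en c (fun _ => γ i) (Λ - 1 / ((i : ℝ) + 1)) (z i) (r i)) l
        (𝓝 (S.en c (fun _ => g) Λ x₀ y)) := by
    intro x₀ hx₀ y z r hz tz tr
    have h1 : Tendsto (fun i => c (z i)) l (𝓝 (c x₀)) :=
      (hc x₀ hx₀).tendsto.comp (tendsto_nhdsWithin_iff.2 ⟨tz, Eventually.of_forall hz⟩)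
    exact ((h1.add hlam).mul (((continuous_abs_rpow_mul S.hα).tendsto y).comp tr)).sub hg
  have hVsub : ∀ x ∈ S.K, S.SubAt (S.en c (fun _ => g) Λ) V x := fun x hx =>
    subAt_of_tendsto hx (hVc x hx) (fun n => (hvc n).upperSemicontinuousOn) hsub hεlim
      (fun n y hy => by linarith [(abs_le.1 (hεle n y hy)).2]) (hV x hx).2
      fun z r hz tz tr => hen x hx _ z r hz tz tr
  have hVsup : ∀ x ∈ S.K, S.SuperAt (S.en c (fun _ => g) Λ) V x := fun x hx =>
    subAt_of_tendsto (S := S.dual) hx (hVc x hx).neg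
      (fun n => (hvc n).neg.upperSemicontinuousOn) hsup hεlim
      (fun n y hy => by
        have := (abs_le.1 (hεle n y hy)).1
        change -v n y ≤ -V y + ε n
        linarith) (hV x hx).2.neg
      fun z r hz tz tr => by
        have := (hen x hx (V x) z (fun i => -r i) hz tz (by simpa using tr.neg)).neg
        simpa using this
  have hadm : S.Adm (S.en c (fun _ => g) Λ) 1 V :=
    ⟨hVc.upperSemicontinuousOn, fun x hx => (hV x hx).1, hVsub⟩
  rcases hg0.eq_or_lt with hgz | hgpos
  · subst hgz
    refine ⟨V, κ, hκ, fun x hx => lt_of_le_of_ne (hV x hx).1.2 fun h0 => ?_, hVl, hVsub, hVsup⟩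
    have hΩ0 : EqOn V (fun _ => 0) S.Ω := S.adm_zero hc (fun _ _ => le_rfl) hadm hx h0
    have hK0 : EqOn V (fun _ => 0) S.K :=
      hΩ0.of_subset_closure hVc continuousOn_const S.Ω_sub_K subset_rfl
    obtain ⟨n, h1, h2⟩ := ((hunif (1 / 2) (by norm_num)).and
      (hg.eventually_lt_const zero_lt_one)).exists
    rcases halt n with h3 | ⟨z, hz, h3⟩
    · linarith
    · have h4 := h1 z hz
      rw [h3, hK0 hz] at h4
      norm_num at h4
  · -- a positive limit of the right-hand sides would make a larger parameter admissible
    exfalso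
    have hVn := S.adm_neg hc continuousOn_const (fun _ _ => hg0)
      ⟨_, S.nonempty_K.some_mem, hgpos.ne'⟩ hadm
    have hmem : Λ + g ∈ S.LS c := by
      refine ⟨V, hVc.upperSemicontinuousOn, hVn, ⟨-1, fun x hx => (hV x hx).1.1⟩,
        fun x hx => (hVsub x hx).mono_e ?_⟩
      have hx0 := (hVn x hx).le
      rw [en_of_nonpos hx0, en_of_nonpos hx0]
      have h1 : |V x| ^ (S.α + 1) ≤ 1 := Real.rpow_le_one (abs_nonneg _)
        (by rw [abs_of_nonpos hx0]; linarith [(hV x hx).1.1]) hα.le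
      have := mul_le_mul_of_nonneg_left h1 hg0
      linarith
    have := le_csSup hbdd hmem
    linarith

end Setup

/-- Remark `thmslsot`: (a) existence of a negative viscosity solution for
`λ < λ̲`, `g ≥ 0`, `g ≢ 0`; (b) existence of a negative Lipschitz principal eigenfunction
corresponding to `λ̲`. -/
theorem stmt19 {N : ℕ} (Ω : Set (EN N)) (nv : EN N → EN N) (hΩ : IsC2Domain Ω nv)
    (α a A C₁ θ C₂ ν : ℝ) (hα : -1 < α)
    (F : EN N → EN N → Mat N → ℝ)
    (hF1 : CondF1 Ω α F) (hF2 : CondF2 Ω α a A F)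
    (hF3 : CondF3 Ω α C₁ θ F) (hF4 : CondF4 Ω α C₂ ν F)
    (b : EN N → EN N) (c : EN N → ℝ)
    (hbc : ContinuousOn b (closure Ω)) (hcc : ContinuousOn c (closure Ω)) :
    -- (a) existence of a negative solution for `λ < λ̲`, `g ≥ 0`, `g ≢ 0`
    ((∀ lam : ℝ, lam < sSup (lamLowSet Ω nv F b c α) →
      ∀ g : EN N → ℝ, ContinuousOn g (closure Ω) → (∀ x ∈ closure Ω, 0 ≤ g x) →
        (∃ x ∈ closure Ω, g x ≠ 0) →
        ∃ u : EN N → ℝ, ContinuousOn u (closure Ω) ∧ (∀ x ∈ closure Ω, u x < 0) ∧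
          IsSubSol Ω F b α (fun x r => (c x + lam) * |r| ^ α * r) g (BNeu nv) u ∧
          IsSuperSol Ω F b α (fun x r => (c x + lam) * |r| ^ α * r) g (BNeu nv) u)) ∧
    -- (b) a negative Lipschitz principal eigenfunction for `λ̲`
    (∃ ψ : EN N → ℝ, ContinuousOn ψ (closure Ω) ∧ (∀ x ∈ closure Ω, ψ x < 0) ∧
      (∃ K : ℝ≥0, LipschitzOnWith K ψ (closure Ω)) ∧
      IsSubSol Ω F b α
        (fun x r => (c x + sSup (lamLowSet Ω nv F b c α)) * |r| ^ α * r)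
        (fun _ => 0) (BNeu nv) ψ ∧
      IsSuperSol Ω F b α
        (fun x r => (c x + sSup (lamLowSet Ω nv F b c α)) * |r| ^ α * r)
        (fun _ => 0) (BNeu nv) ψ) := by
  -- any large `m` is an admissible auxiliary exponent, since `α + 1 > 0`
  obtain ⟨m₀, hm₀⟩ := exists_nat_gt (1 / (α + 1))
  have hα1 : 0 < α + 1 := by linarith
  have hmα : 1 < (2 * ((m₀ + 2 : ℕ) : ℝ) - 1) * (α + 1) := by
    rw [div_lt_iff₀ hα1] at hm₀
    push_cast
    nlinarith [mul_nonneg (Nat.cast_nonneg (α := ℝ) m₀) hα1.le]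
  let S : Setup N :=
    { Ω := Ω, nv := nv, F := F, b := b, α := α, a := a, A := A, C₁ := C₁, θ := θ, C₂ := C₂, ν := ν
      m := m₀ + 2, hΩ := hΩ, hα := hα, hF1 := hF1, hF2 := hF2, hF3 := hF3, hF4 := hF4, hb := hbc
      hm := Nat.le_add_left 2 m₀, hmα := hmα }
  have hset : lamLowSet Ω nv F b c α = S.LS c := S.lamLowSet_eq hcc
  have hec : ∀ (g : EN N → ℝ) (lam : ℝ) (x : EN N) (r : ℝ),
      S.en c g lam x r = (c x + lam) * |r| ^ α * r - g x := fun g lam x r => by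
    change (c x + lam) * (|r| ^ α * r) - g x = _
    ring
  rw [hset]
  refine ⟨fun lam hlam g hg hg0 hgne => ?_, ?_⟩
  · obtain ⟨lam', hl, hlt⟩ := exists_lt_of_lt_csSup (S.LS_nonempty hcc) hlam
    obtain ⟨_, W, hadm, hWc, -, hWn, hsup⟩ := S.solve hcc hg hg0 hgne hlt hl
    exact ⟨W, hWc, hWn, S.isSubSol_of_subAt (hec g lam) hadm.sub,
      S.isSuperSol_of_superAt (hec g lam) hsup⟩
  · obtain ⟨V, κ, hκ, hVn, hVL, hsub, hsup⟩ := S.exists_eigen hcc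
    have hL : LipschitzOnWith (Real.toNNReal κ) V (closure Ω) :=
      LipschitzOnWith.of_dist_le_mul fun x hx y hy => by
        rw [Real.dist_eq, dist_eq_norm, Real.coe_toNNReal _ hκ]
        exact hVL x hx y hy
    exact ⟨V, hL.continuousOn, hVn, ⟨_, hL⟩, S.isSubSol_of_subAt (hec _ _) hsub,
      S.isSuperSol_of_superAt (hec _ _) hsup⟩
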